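/- There exists a function f : ℕ × ℕ → ℕ with the following property: for every prime p, every natural number n, every natural number m, every finite soluble group G, and every automorphism φ of G of order p^n, if for every φ-invariant elementary abelian p'-section A/B of G the fixed-point subgroup C_{A/B}(φ) has order at most m, then the Fitting height of G is at most f(p^n, m). -/

import Mathlib

/-- The Fitting height of `G` is at most `N`: there is a chain of normal subgroups
`⊥ = H 0 ≤ H 1 ≤ … ≤ H N = ⊤` with all factors nilpotent. -/
def FittingHeightLE (G : Type*) [Group G] (N : ℕ) : Prop :=
  ∃ H : ℕ → Subgroup G, H 0 = ⊥ ∧ H N = ⊤ ∧ (∀ i, (H i).Normal) ∧ (∀ i, H i ≤ H (i + 1)) ∧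
    ∀ i < N, ∀ hn : ((H i).subgroupOf (H (i + 1))).Normal,
      letI := hn
      Group.IsNilpotent (H (i + 1) ⧸ (H i).subgroupOf (H (i + 1)))

/-- The subgroup `A` is invariant under the automorphism `φ`. -/
def PhiInvariant {G : Type*} [Group G] (φ : MulAut G) (A : Subgroup G) : Prop :=
  A.map φ.toMonoidHom = A

/-- `B ⊴ A` and the section `A/B` is an elementary abelian `r`-group for some prime
`r ≠ p`. -/
def IsElemAbelianPPrimeSection (p : ℕ) {G : Type*} [Group G] (A B : Subgroup G) : Prop :=
  B ≤ A ∧ (∀ a ∈ A, ∀ b ∈ B, a * b * a⁻¹ ∈ B) ∧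
    ∃ r : ℕ, r.Prime ∧ r ≠ p ∧
      (∀ a ∈ A, ∀ b ∈ A, a⁻¹ * b⁻¹ * a * b ∈ B) ∧ (∀ a ∈ A, a ^ r ∈ B)

/-- The number of fixed points of the automorphism induced by `φ` on the section `A/B`
(a coset `aB` is fixed iff `a⁻¹ · φ(a) ∈ B`). -/
noncomputable def sectionFixedCard {G : Type*} [Group G] (φ : MulAut G) (A B : Subgroup G) : ℕ :=
  Nat.card {x : A ⧸ B.subgroupOf A // ∃ a : A, QuotientGroup.mk a = x ∧ (a : G)⁻¹ * φ a ∈ B}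

namespace FH
open Subgroup
open scoped commutatorElement

section basics
variable {G : Type*} [Group G] {G' : Type*} [Group G']

def dser (N : Subgroup G) : ℕ → Subgroup G
  | 0 => N
  | i + 1 => ⁅dser N i, dser N i⁆

def icomm (E D : Subgroup G) : ℕ → Subgroup G
  | 0 => E
  | i + 1 => ⁅icomm E D i, D⁆

def resid (D : Subgroup G) : Subgroup G := ⨅ i, icomm D D i

@[simp] lemma dser_zero (N : Subgroup G) : dser N 0 = N := rfl
lemma dser_succ (N : Subgroup G) (i : ℕ) : dser N (i + 1) = ⁅dser N i, dser N i⁆ := rfl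
@[simp] lemma icomm_zero (E D : Subgroup G) : icomm E D 0 = E := rfl
lemma icomm_succ (E D : Subgroup G) (i : ℕ) : icomm E D (i + 1) = ⁅icomm E D i, D⁆ := rfl

instance dser_normal (N : Subgroup G) [N.Normal] (i : ℕ) : (dser N i).Normal := by
  induction i with
  | zero => simpa
  | succ i ih => rw [dser_succ]; infer_instance

instance icomm_normal (E D : Subgroup G) [E.Normal] [D.Normal] (i : ℕ) : (icomm E D i).Normal := by
  induction i with
  | zero => simpa
  | succ i ih => rw [icomm_succ]; infer_instance

instance resid_normal (D : Subgroup G) [D.Normal] : (resid D).Normal := by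
  unfold resid
  exact Subgroup.normal_iInf_normal (fun i => inferInstance)

lemma comm_self_le (N : Subgroup G) : ⁅N, N⁆ ≤ N := by
  rw [Subgroup.commutator_le]
  intro a ha b hb
  rw [commutatorElement_def]
  exact N.mul_mem (N.mul_mem (N.mul_mem ha hb) (N.inv_mem ha)) (N.inv_mem hb)

lemma dser_add (N : Subgroup G) (i j : ℕ) : dser N (i + j) = dser (dser N i) j := by
  induction j with
  | zero => rfl
  | succ j ih => rw [← add_assoc, dser_succ, dser_succ, ih]

lemma dser_succ_le (N : Subgroup G) (i : ℕ) : dser N (i + 1) ≤ dser N i := comm_self_le _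

lemma dser_antitone (N : Subgroup G) : Antitone (dser N) := antitone_nat_of_succ_le (dser_succ_le N)

lemma dser_le (N : Subgroup G) (i : ℕ) : dser N i ≤ N := dser_antitone N (Nat.zero_le i)

lemma dser_mono {M N : Subgroup G} (h : M ≤ N) (i : ℕ) : dser M i ≤ dser N i := by
  induction i with
  | zero => simpa
  | succ i ih => exact Subgroup.commutator_mono ih ih

lemma icomm_succ_le (E D : Subgroup G) [E.Normal] [D.Normal] (i : ℕ) :
    icomm E D (i + 1) ≤ icomm E D i := Subgroup.commutator_le_left _ _

lemma icomm_antitone (E D : Subgroup G) [E.Normal] [D.Normal] : Antitone (icomm E D) :=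
  antitone_nat_of_succ_le (icomm_succ_le E D)

lemma icomm_mono {E E' D D' : Subgroup G} (h : E ≤ E') (h' : D ≤ D') (i : ℕ) :
    icomm E D i ≤ icomm E' D' i := by
  induction i with
  | zero => simpa
  | succ i ih => exact Subgroup.commutator_mono ih h'

lemma icomm_add (E D : Subgroup G) (i j : ℕ) : icomm E D (i + j) = icomm (icomm E D i) D j := by
  induction j with
  | zero => rfl
  | succ j ih => rw [← add_assoc, icomm_succ, icomm_succ, ih]

lemma resid_le_icomm (D : Subgroup G) (i : ℕ) : resid D ≤ icomm D D i := iInf_le _ i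

lemma resid_le (D : Subgroup G) : resid D ≤ D := resid_le_icomm D 0

lemma map_dser (f : G →* G') (N : Subgroup G) (i : ℕ) : (dser N i).map f = dser (N.map f) i := by
  induction i with
  | zero => rfl
  | succ i ih => rw [dser_succ, dser_succ, Subgroup.map_commutator, ih]

lemma map_icomm (f : G →* G') (E D : Subgroup G) (i : ℕ) :
    (icomm E D i).map f = icomm (E.map f) (D.map f) i := by
  induction i with
  | zero => rfl
  | succ i ih => rw [icomm_succ, icomm_succ, Subgroup.map_commutator, ih]

lemma map_resid_le (f : G →* G') (D : Subgroup G) : (resid D).map f ≤ resid (D.map f) := by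
  refine le_iInf fun i => ?_
  rw [← map_icomm]
  exact Subgroup.map_mono (resid_le_icomm D i)

lemma dser_top (i : ℕ) : dser (⊤ : Subgroup G) i = derivedSeries G i := by
  induction i with
  | zero => rfl
  | succ i ih => rw [dser_succ, derivedSeries_succ, ih]

lemma dser_eq_map (N : Subgroup G) (i : ℕ) :
    dser N i = (derivedSeries N i).map N.subtype := by
  rw [← dser_top, map_dser]
  simp [← MonoidHom.range_eq_map]

lemma exists_dser_eq_bot [Group.IsSolvable G] (N : Subgroup G) : ∃ i, dser N i = ⊥ := by
  obtain ⟨i, hi⟩ := Group.IsSolvable.solvable (G := N)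
  exact ⟨i, by rw [dser_eq_map, hi, Subgroup.map_bot]⟩

/-- three subgroups, modulo a normal subgroup -/
lemma three_subgroups (A B C K : Subgroup G) [K.Normal]
    (h1 : ⁅⁅B, C⁆, A⁆ ≤ K) (h2 : ⁅⁅C, A⁆, B⁆ ≤ K) : ⁅⁅A, B⁆, C⁆ ≤ K := by
  have key : ∀ A : Subgroup G, A ≤ K ↔ A.map (QuotientGroup.mk' K) = ⊥ := by
    intro A
    rw [Subgroup.map_eq_bot_iff, QuotientGroup.ker_mk']
  rw [key, Subgroup.map_commutator, Subgroup.map_commutator] at *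
  exact Subgroup.commutator_commutator_eq_bot_of_rotate h1 h2

lemma comm_icomm_le (D : Subgroup G) [D.Normal] (i : ℕ) : ∀ (E : Subgroup G) [E.Normal],
    ⁅E, icomm D D i⁆ ≤ icomm E D (i + 1) := by
  induction i with
  | zero => intro E _; exact le_refl _
  | succ i ih =>
    intro E _
    rw [Subgroup.commutator_comm, icomm_succ D D]
    apply three_subgroups
    · rw [Subgroup.commutator_comm D E]
      refine (ih ⁅E, D⁆).trans ?_
      have : (⁅E, D⁆ : Subgroup G) = icomm E D 1 := rfl
      rw [this, ← icomm_add]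
      apply le_of_eq
      congr 1
      omega
    · rw [icomm_succ E D (i+1)]
      exact Subgroup.commutator_mono (ih E) le_rfl

lemma comm_resid_le (E D : Subgroup G) [E.Normal] [D.Normal] (i : ℕ) : ⁅E, resid D⁆ ≤ icomm E D i :=
  (Subgroup.commutator_mono le_rfl (resid_le_icomm D i)).trans
    ((comm_icomm_le D i E).trans (icomm_succ_le E D i))

lemma exists_stable [Finite G] (f : ℕ → Subgroup G) (hf : Antitone f) : ∃ i, ∀ j, i ≤ j → f j = f i := by
  obtain ⟨i, hi⟩ := WellFoundedLT.antitone_chain_condition hf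
  exact ⟨i, fun j hj => (hi j hj).symm⟩

lemma exists_resid_eq [Finite G] (D : Subgroup G) [D.Normal] : ∃ i, resid D = icomm D D i := by
  obtain ⟨i, hi⟩ := exists_stable _ (icomm_antitone D D)
  refine ⟨i, le_antisymm (resid_le_icomm D i) (le_iInf fun j => ?_)⟩
  rcases le_total i j with h | h
  · rw [hi j h]
  · exact icomm_antitone D D h

lemma derivedSeries_card_bot [Finite G] [Group.IsSolvable G] (k : ℕ) (hk : Nat.card G ≤ k) :
    derivedSeries G k = ⊥ := by
  have main : ∀ i, Nat.card (derivedSeries G i) + i ≤ Nat.card G ∨ derivedSeries G i = ⊥ := by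
    intro i
    induction i with
    | zero => left; simp
    | succ i ih =>
      rcases ih with ih | ih
      · by_cases hb : derivedSeries G i = ⊥
        · right
          exact le_bot_iff.1 (hb ▸ derivedSeries_antitone G (Nat.le_succ i))
        · left
          have hlt : derivedSeries G (i + 1) < derivedSeries G i :=
            Group.IsSolvable.commutator_lt_of_ne_bot hb
          have h1 : Nat.card (derivedSeries G (i+1)) < Nat.card (derivedSeries G i) := by
            have := Set.ncard_lt_ncard (SetLike.coe_ssubset_coe.2 hlt) (Set.toFinite _)
            rwa [← Nat.card_coe_set_eq, ← Nat.card_coe_set_eq] at this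
          omega
      · right
        exact le_bot_iff.1 (ih ▸ derivedSeries_antitone G (Nat.le_succ i))
  rcases main k with h | h
  · have := Nat.card_pos (α := derivedSeries G k)
    have : 0 < Nat.card (derivedSeries G k) := this
    omega
  · exact h

end basics

section act
variable {Γ : Type*} [Group Γ] {α : Type*} [MulAction Γ α]

/-- small invariant sets are fixed pointwise by a term of the derived series -/
lemma smallOrb (K : Subgroup Γ) [Group.IsSolvable K] (T : Set α) (hfin : T.Finite) (n : ℕ)
    (hT : T.ncard ≤ n) (hK : ∀ k ∈ K, ∀ t ∈ T, k • t ∈ T) :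
    ∀ x ∈ dser K (n.factorial), ∀ t ∈ T, x • t = t := by
  classical
  have : Finite T := hfin
  let f : K →* Equiv.Perm T :=
    { toFun := fun k => ⟨fun t => ⟨(k : Γ) • (t : α), hK k k.2 t t.2⟩,
        fun t => ⟨(k : Γ)⁻¹ • (t : α), hK _ (K.inv_mem k.2) t t.2⟩,
        fun t => by ext; simp, fun t => by ext; simp⟩
      map_one' := by ext; simp
      map_mul' := by intro a b; ext; simp [mul_smul] }
  have hs : Group.IsSolvable f.range := Group.isSolvable_of_surjective f.rangeRestrict_surjective
  have hcard : Nat.card f.range ≤ n.factorial := by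
    refine (Nat.le_of_dvd Nat.card_pos (Subgroup.card_subgroup_dvd_card f.range)).trans ?_
    rw [Nat.card_perm]
    exact Nat.factorial_le hT
  have hb := derivedSeries_card_bot (G := f.range) _ hcard
  intro x hx t ht
  rw [dser_eq_map] at hx
  obtain ⟨y, hy, rfl⟩ := hx
  have h1 : f.rangeRestrict y ∈ derivedSeries f.range (n.factorial) := by
    have := map_derivedSeries_le_derivedSeries f.rangeRestrict (n.factorial)
    exact this ⟨y, hy, rfl⟩
  rw [hb, Subgroup.mem_bot] at h1
  have h2 : f y = 1 := congrArg Subtype.val h1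
  have h3 := congrArg (fun e : Equiv.Perm T => ((e ⟨t, ht⟩ : T) : α)) h2
  exact h3

lemma permAux [Finite α] (A : Subgroup Γ) [A.Normal] (htr : ∀ x y : α, ∃ a ∈ A, a • x = y)
    (hcomm : ∀ a ∈ A, ∀ b ∈ A, ∀ x : α, a • b • x = b • a • x) (s : Γ) (hs : ∃ x : α, s • x ≠ x) :
    Nat.card α ≤ 2 * {x : α | s • x ≠ x}.ncard := by
  have hsum := Set.ncard_add_ncard_compl {x : α | s • x ≠ x}
  by_cases hf : ∃ x0 : α, s • x0 = x0
  · obtain ⟨x0, hx0⟩ := hf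
    obtain ⟨y, hy⟩ := hs
    obtain ⟨b, hb, rfl⟩ := htr x0 y
    have : {x : α | s • x ≠ x}ᶜ.ncard ≤ {x : α | s • x ≠ x}.ncard := by
      refine Set.ncard_le_ncard_of_injOn (fun x => b • x) ?_ (fun x _ y _ h => by simpa using h)
        (Set.toFinite _)
      intro x hx
      have hx : s • x = x := by simpa using hx
      intro hbx
      have hbx : s • b • x = b • x := hbx
      apply hy
      have hw : b⁻¹ * (s * b * s⁻¹) ∈ A := A.mul_mem (A.inv_mem hb) (Normal.conj_mem ‹_› b hb s)
      obtain ⟨a, ha, rfl⟩ := htr x0 x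
      have h1 : (b⁻¹ * (s * b * s⁻¹)) • a • x0 = a • x0 := by
        rw [mul_smul, mul_smul, mul_smul]
        have : s⁻¹ • a • x0 = a • x0 := by rw [inv_smul_eq_iff, hx]
        rw [this, hbx, inv_smul_smul]
      rw [hcomm _ hw _ ha] at h1
      have h2 := smul_left_cancel _ h1
      rw [mul_smul, mul_smul, mul_smul, inv_smul_eq_iff] at h2
      have : s⁻¹ • x0 = x0 := by rw [inv_smul_eq_iff, hx0]
      rwa [this] at h2
    omega
  · have : {x : α | s • x ≠ x}ᶜ = ∅ := by
      ext x
      simp only [ne_eq, Set.mem_compl_iff, Set.mem_ofPred_eq, not_not, Set.mem_empty_iff_false, iff_false]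
      exact fun h => hf ⟨x, h⟩
    rw [this, Set.ncard_empty] at hsum
    omega

end act

lemma permIndex {X : Type*} [Group X] [Finite X] [Group.IsSolvable X] (Y : Subgroup X) (hY : Y ≠ ⊤)
    (S : Set X) (hS : closure S = ⊤) (c : ℕ)
    (hc : ∀ s ∈ S, {x : X ⧸ Y | s • x ≠ x}.ncard ≤ c) : Y.index ≤ 2 * c := by
  classical
  obtain ⟨Y1, hY1, hle⟩ : ∃ Y1 : Subgroup X, IsCoatom Y1 ∧ Y ≤ Y1 := by
    rcases eq_top_or_exists_le_coatom Y with h | h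
    · exact (hY h).elim
    · exact h
  obtain ⟨i, hi1, hi2⟩ : ∃ i, ¬ derivedSeries X i ≤ Y1 ∧ derivedSeries X (i+1) ≤ Y1 := by
    by_contra hcon
    push Not at hcon
    have : ∀ i, ¬ derivedSeries X i ≤ Y1 := by
      intro i
      induction i with
      | zero => intro h; exact hY1.1 (top_le_iff.1 h)
      | succ i ih => exact hcon i ih
    obtain ⟨n, hn⟩ := Group.IsSolvable.solvable (G := X)
    exact this n (hn ▸ bot_le)
  set A := derivedSeries X i with hA
  have hAY : A ⊔ Y1 = ⊤ := hY1.2 _ (right_lt_sup.2 hi1)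
  obtain ⟨s, hsS, hs⟩ : ∃ s ∈ S, s ∉ Y1 := by
    by_contra hcon
    push Not at hcon
    apply hY1.1
    rw [← top_le_iff, ← hS, Subgroup.closure_le]
    exact hcon
  have htop : ∀ g : X, ∃ a ∈ A, ∃ y ∈ Y1, a * y = g := by
    intro g
    have : g ∈ A ⊔ Y1 := hAY ▸ Subgroup.mem_top g
    rwa [Subgroup.mem_sup_of_normal_left] at this
  have hcomm : ∀ a ∈ A, ∀ b ∈ A, ∀ x : X ⧸ Y1, a • b • x = b • a • x := by
    intro a ha b hb x
    induction x using QuotientGroup.induction_on with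
    | H g =>
      change ((a * (b * g) : X) : X ⧸ Y1) = ((b * (a * g) : X) : X ⧸ Y1)
      rw [QuotientGroup.eq]
      apply hi2
      rw [derivedSeries_succ]
      have : (a * (b * g))⁻¹ * (b * (a * g)) = g⁻¹ * (⁅b⁻¹, a⁻¹⁆ : X) * (g⁻¹)⁻¹ := by
        rw [commutatorElement_def]; group
      rw [this]
      exact Normal.conj_mem inferInstance _
        (Subgroup.commutator_mem_commutator (A.inv_mem hb) (A.inv_mem ha)) _
  have h1 : Nat.card (X ⧸ Y1) ≤ 2 * {x : X ⧸ Y1 | s • x ≠ x}.ncard := by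
    refine permAux A ?_ hcomm s ⟨((1 : X) : X ⧸ Y1), ?_⟩
    · intro x y
      induction x using QuotientGroup.induction_on with
      | H g =>
        induction y using QuotientGroup.induction_on with
        | H h =>
          obtain ⟨a, ha, y, hy, hay⟩ := htop (g⁻¹ * h)
          refine ⟨g * a * g⁻¹, Normal.conj_mem inferInstance a ha g, ?_⟩
          change ((g * a * g⁻¹ * g : X) : X ⧸ Y1) = _
          rw [QuotientGroup.eq]
          have : (g * a * g⁻¹ * g)⁻¹ * h = a⁻¹ * (g⁻¹ * h) := by group
          rw [this, ← hay]
          simpa using hy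
    · intro h
      have h : ((s * 1 : X) : X ⧸ Y1) = ((1 : X) : X ⧸ Y1) := h
      rw [QuotientGroup.eq] at h
      apply hs
      simpa using h
  have h2 : {x : X ⧸ Y1 | s • x ≠ x}.ncard * Nat.card (Y1 ⧸ Y.subgroupOf Y1) ≤
      {x : X ⧸ Y | s • x ≠ x}.ncard := by
    rw [← Nat.card_coe_set_eq, ← Nat.card_coe_set_eq, ← Nat.card_prod]
    let e := Subgroup.quotientEquivProdOfLE hle
    have he : ∀ g : X, (e (g : X ⧸ Y)).1 = (g : X ⧸ Y1) := fun g => rfl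
    have he2 : ∀ z : X ⧸ Y, (e (s • z)).1 = s • (e z).1 := by
      intro z
      induction z using QuotientGroup.induction_on with
      | H g => rfl
    refine Nat.card_le_card_of_injective (fun uv : {x : X ⧸ Y1 | s • x ≠ x} × (Y1 ⧸ Y.subgroupOf Y1) =>
      (⟨e.symm (uv.1.1, uv.2), ?_⟩ : {x : X ⧸ Y | s • x ≠ x})) ?_
    · intro h
      apply uv.1.2
      have := congrArg (fun z => (e z).1) h
      simp only [he2, Equiv.apply_symm_apply] at this
      exact this
    · rintro ⟨⟨u, hu⟩, v⟩ ⟨⟨u', hu'⟩, v'⟩ h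
      have := e.symm.injective (congrArg Subtype.val h)
      simp only [Prod.mk.injEq] at this
      obtain ⟨rfl, rfl⟩ := this
      rfl
  have h3 : Nat.card (X ⧸ Y) = Nat.card (X ⧸ Y1) * Nat.card (Y1 ⧸ Y.subgroupOf Y1) := by
    rw [← Nat.card_prod]
    exact Nat.card_congr (Subgroup.quotientEquivProdOfLE hle)
  have h4 := hc s hsS
  rw [Subgroup.index, h3]
  calc _ ≤ 2 * {x : X ⧸ Y1 | s • x ≠ x}.ncard * Nat.card (Y1 ⧸ Y.subgroupOf Y1) := Nat.mul_le_mul_right _ h1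
    _ ≤ 2 * c := by rw [mul_assoc]; exact Nat.mul_le_mul_left _ (h2.trans h4)

section act2
variable {Γ : Type*} [Group Γ] {α : Type*} [MulAction Γ α]

/-- generators moving few points fix everything after a bounded number of derived steps -/
lemma permFix (K : Subgroup Γ) [Finite K] [Group.IsSolvable K] (S : Set Γ) (hS : closure S = K) (T : Set α)
    (hT : ∀ k ∈ K, ∀ t ∈ T, k • t ∈ T) (hTf : T.Finite)
    (c : ℕ) (hc : ∀ s ∈ S, {x ∈ T | s • x ≠ x}.ncard ≤ c) (a : α) (ha : a ∈ T) :
    ∀ x ∈ dser K ((2 * c + 1).factorial), x • a = a := by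
  classical
  have horb : (MulAction.orbit K a).ncard ≤ 2 * c + 1 := by
    rw [← Nat.card_coe_set_eq]
    rw [Nat.card_congr (MulAction.orbitEquivQuotientStabilizer K a)]
    by_cases hY : MulAction.stabilizer K a = ⊤
    · rw [← Subgroup.index, hY, Subgroup.index_top]; omega
    · have hSK : S ⊆ K := by rw [← hS]; exact Subgroup.subset_closure
      have := permIndex (MulAction.stabilizer K a) hY {k : K | (k : Γ) ∈ S} ?_ c ?_
      · rw [← Subgroup.index]; omega
      · have : (Subtype.val ⁻¹' S : Set K) = {k : K | (k : Γ) ∈ S} := rfl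
        rw [← this]
        subst hS
        exact Subgroup.closure_closure_coe_preimage
      · intro s hs
        refine le_trans ?_ (hc s hs)
        refine Set.ncard_le_ncard_of_injOn
          (fun x => ((MulAction.orbitEquivQuotientStabilizer K a).symm x : α)) ?_ ?_
          (hTf.subset (Set.sep_subset _ _))
        · intro x hx
          induction x using QuotientGroup.induction_on with
          | H g =>
            refine ⟨?_, ?_⟩
            · rw [MulAction.orbitEquivQuotientStabilizer_symm_apply]
              exact hT g g.2 a ha
            · intro h
              apply hx
              rw [MulAction.orbitEquivQuotientStabilizer_symm_apply] at h
              change ((s * g : K) : K ⧸ MulAction.stabilizer K a) = _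
              rw [QuotientGroup.eq]
              rw [MulAction.mem_stabilizer_iff, mul_smul, inv_smul_eq_iff]
              have h : (s : K) • g • a = g • a := h
              rw [eq_comm, mul_smul, h]
              
        · intro x _ y _ h
          exact (MulAction.orbitEquivQuotientStabilizer K a).symm.injective (Subtype.ext h)
  intro x hx
  refine smallOrb K (MulAction.orbit K a) (hTf.subset ?_) _ horb ?_ x hx a (MulAction.mem_orbit_self a)
  · rintro _ ⟨k, rfl⟩
    exact hT k k.2 a ha
  · rintro k hk _ ⟨l, rfl⟩
    exact ⟨⟨k, hk⟩ * l, by simp [mul_smul, Subgroup.smul_def]⟩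

end act2
end FH

namespace FH
set_option linter.unusedSectionVars false
open Module

section grading
variable {L : Type*} [Field L] {M : Type*} [AddCommGroup M] [Module L M] {α : Type*}

/-- A direct sum decomposition given by projections. -/
structure Gr (W : α → Submodule L M) where
  π : α → M →ₗ[L] M
  F : Finset α
  mem : ∀ x v, π x v ∈ W x
  self : ∀ x v, v ∈ W x → π x v = v
  ne : ∀ x y v, x ≠ y → v ∈ W y → π x v = 0
  memF : ∀ x, x ∈ F ↔ W x ≠ ⊥
  sum : ∀ v, ∑ x ∈ F, π x v = v

lemma exists_Gr [FiniteDimensional L M] (W : α → Submodule L M) (hi : iSupIndep W)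
    (hs : ⨆ x, W x = ⊤) : Nonempty (Gr W) := by
  classical
  have hintern : DirectSum.IsInternal W := DirectSum.isInternal_submodule_of_iSupIndep_of_iSup_eq_top hi hs
  have hfin : Finite {x // W x ≠ ⊥} := by
    have := WellFoundedGT.finite_ne_bot_of_iSupIndep hi
    exact this
  let e : DirectSum α (fun x => W x) ≃ₗ[L] M := LinearEquiv.ofBijective (DirectSum.coeLinearMap W) hintern
  have he : ∀ x (v : W x), e.symm (v : M) = DirectSum.lof L α (fun x => W x) x v := by
    intro x v
    rw [LinearEquiv.symm_apply_eq]
    exact (DirectSum.coeLinearMap_lof W x v).symm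
  let π : α → M →ₗ[L] M := fun x =>
    (W x).subtype ∘ₗ DirectSum.component L α (fun x => W x) x ∘ₗ e.symm.toLinearMap
  have hself : ∀ x v, v ∈ W x → π x v = v := by
    intro x v hv
    simp only [π, LinearMap.comp_apply, LinearEquiv.coe_coe]
    rw [he x ⟨v, hv⟩, DirectSum.component.lof_self]
    rfl
  have hne : ∀ x y v, x ≠ y → v ∈ W y → π x v = 0 := by
    intro x y v hxy hv
    simp only [π, LinearMap.comp_apply, LinearEquiv.coe_coe]
    rw [he y ⟨v, hv⟩, DirectSum.component.of, dif_neg (Ne.symm hxy)]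
    simp
  let F : Finset α := Set.Finite.toFinset (s := {x | W x ≠ ⊥}) hfin
  have hF : ∀ x, x ∈ F ↔ W x ≠ ⊥ := by intro x; exact Set.Finite.mem_toFinset _
  refine ⟨⟨π, F, fun x v => ?_, hself, hne, hF, ?_⟩⟩
  · simp [π]
  · intro v
    have hv : v ∈ ⨆ x, W x := hs ▸ Submodule.mem_top
    induction hv using Submodule.iSup_induction' with
    | mem x v hv =>
      by_cases hx : W x = ⊥
      · have : v = 0 := by rw [hx] at hv; simpa using hv
        simp [this]
      · rw [Finset.sum_eq_single x]
        · exact hself x v hv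
        · intro y _ hy; exact hne y x v hy hv
        · intro h; exact (h ((hF x).2 hx)).elim
    | zero => simp
    | add u v _ _ hu hv =>
      simp only [map_add, Finset.sum_add_distrib, hu, hv]

variable {W : α → Submodule L M}

lemma Gr.lin_ind (D : Gr W) {ι : Type*} (u : ι → M) (x : ι → α)
    (h0 : ∀ i, D.π (x i) (u i) ≠ 0) (h1 : ∀ i j, i ≠ j → D.π (x i) (u j) = 0) :
    LinearIndependent L u := by
  classical
  rw [linearIndependent_iff']
  intro s c hs i hi
  have := congrArg (D.π (x i)) hs
  rw [map_sum, map_zero, Finset.sum_eq_single i] at this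
  · rw [map_smul] at this
    exact (smul_eq_zero.1 this).resolve_right (h0 i)
  · intro j _ hj
    rw [map_smul, h1 i j (Ne.symm hj), smul_zero]
  · intro h; exact (h hi).elim

lemma exists_reps (τ : Equiv.Perm α) (q : ℕ) (hq : 0 < q) (hτ : τ ^ q = 1) (X : Finset α) :
    ∃ R : Finset α, R ⊆ X ∧ (∀ r ∈ R, ∀ r' ∈ R, ∀ i : ℕ, (τ ^ i) r = r' → r = r') ∧
      (∀ x ∈ X, ∃ r ∈ R, ∃ i < q, (τ ^ i) r = x) := by
  classical
  let P : Finset (Finset α) := X.powerset.filter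
    (fun R => ∀ r ∈ R, ∀ r' ∈ R, ∀ i : ℕ, (τ ^ i) r = r' → r = r')
  obtain ⟨R, hR, hmax⟩ := Finset.exists_max_image P Finset.card ⟨∅, by simp [P]⟩
  simp only [P, Finset.mem_filter, Finset.mem_powerset] at hR hmax
  refine ⟨R, hR.1, hR.2, fun x hx => ?_⟩
  have hmod : ∀ i : ℕ, τ ^ i = τ ^ (i % q) := by
    intro i
    conv_lhs => rw [← Nat.mod_add_div i q, pow_add, pow_mul, hτ, one_pow, mul_one]
  by_contra hcon
  push Not at hcon
  have hcon' : ∀ r ∈ R, ∀ i : ℕ, (τ ^ i) r ≠ x := by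
    intro r hr i
    rw [hmod]
    exact hcon r hr _ (Nat.mod_lt _ hq)
  have hxR : x ∉ R := fun h => hcon' x h 0 (by simp)
  have := hmax (insert x R) ⟨Finset.insert_subset hx hR.1, ?_⟩
  · rw [Finset.card_insert_of_notMem hxR] at this
    omega
  · intro r hr r' hr' i hi
    rcases Finset.mem_insert.1 hr with rfl | hr
    · rcases Finset.mem_insert.1 hr' with rfl | hr'
      · rfl
      · exfalso
        apply hcon' r' hr' (q - i % q)
        rw [← hi, hmod i, ← Equiv.Perm.mul_apply, ← pow_add,
          Nat.sub_add_cancel (Nat.mod_lt _ hq).le, hτ]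
        rfl
    · rcases Finset.mem_insert.1 hr' with rfl | hr'
      · exact (hcon' r (by assumption) i hi).elim
      · exact hR.2 r hr r' hr' i hi

lemma card_le_reps (τ : Equiv.Perm α) (q : ℕ) (X R : Finset α)
    (h : ∀ x ∈ X, ∃ r ∈ R, ∃ i < q, (τ ^ i) r = x) : X.card ≤ q * R.card := by
  classical
  have : X ⊆ (Finset.range q ×ˢ R).image (fun z => (τ ^ z.1) z.2) := by
    intro x hx
    obtain ⟨r, hr, i, hi, rfl⟩ := h x hx
    exact Finset.mem_image.2 ⟨(i, r), by simp [hi, hr], rfl⟩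
  refine (Finset.card_le_card this).trans (Finset.card_image_le.trans ?_)
  simp

lemma period_full (τ : Equiv.Perm α) (p a : ℕ) (hp : p.Prime) (ha : 0 < a) (hτ : τ ^ (p ^ a) = 1)
    (x : α) (hx : (τ ^ (p ^ (a - 1))) x ≠ x) (i : ℕ) (hi0 : 0 < i) (hi : i < p ^ a) :
    (τ ^ i) x ≠ x := by
  intro h
  have h1 : Function.IsPeriodicPt τ (p ^ a) x := by
    rw [Function.IsPeriodicPt, Function.IsFixedPt, Equiv.Perm.iterate_eq_pow, hτ]; rfl
  have h2 : Function.IsPeriodicPt τ i x := by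
    rw [Function.IsPeriodicPt, Function.IsFixedPt, Equiv.Perm.iterate_eq_pow, h]
  have h3 := h1.minimalPeriod_dvd
  obtain ⟨j, hj, hj'⟩ := (Nat.dvd_prime_pow hp).1 h3
  have h4 := Nat.le_of_dvd hi0 h2.minimalPeriod_dvd
  have hja : j < a := by
    by_contra hcon
    have : j = a := by omega
    subst this
    omega
  have h5 : Function.minimalPeriod τ x ∣ p ^ (a - 1) := by
    rw [hj']; exact pow_dvd_pow _ (by omega)
  have h6 := (Function.isPeriodicPt_minimalPeriod τ x).trans_dvd h5
  rw [Function.IsPeriodicPt, Function.IsFixedPt, Equiv.Perm.iterate_eq_pow] at h6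
  exact hx h6

section g
variable (g : Module.End L M) (τ : Equiv.Perm α) (hg : ∀ x, ∀ v ∈ W x, g v ∈ W (τ x))
include hg

lemma pow_mem (i : ℕ) (x : α) (v : M) (hv : v ∈ W x) : (g ^ i) v ∈ W ((τ ^ i) x) := by
  induction i with
  | zero => simpa
  | succ i ih =>
    rw [pow_succ', pow_succ']
    exact hg _ _ ih

lemma orbit_sum_proj (D : Gr W) (t : ℕ) (ht0 : 0 < t) (x : α) (ht : ∀ i, 0 < i → i < t → (τ ^ i) x ≠ x)
    (v : M) (hv : v ∈ W x) : D.π x ((∑ i ∈ Finset.range t, g ^ i) v) = v := by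
  rw [LinearMap.sum_apply, map_sum, Finset.sum_eq_single 0]
  · simpa using D.self x v hv
  · intro i hi hi0
    refine D.ne x _ _ (Ne.symm (ht i (Nat.pos_of_ne_zero hi0) (Finset.mem_range.1 hi)))
      (pow_mem g τ hg i x v hv)
  · intro h; exact (h (Finset.mem_range.2 ht0)).elim

lemma orbit_sum_mem (t : ℕ) (v : M) (hv : (g ^ t) v = v) :
    (∑ i ∈ Finset.range t, g ^ i) v ∈ LinearMap.ker (g - 1) := by
  rw [LinearMap.mem_ker, ← Module.End.mul_apply, mul_geom_sum]
  simp [hv]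

variable [FiniteDimensional L M]

/-- P1 -/
lemma finrank_fix_le (D : Gr W) (t : ℕ) (ht0 : 0 < t) (x : α)
    (ht : ∀ i, 0 < i → i < t → (τ ^ i) x ≠ x) :
    finrank L ↥(LinearMap.ker (g ^ t - 1) ⊓ W x) ≤ finrank L (LinearMap.ker (g - 1)) := by
  let f : ↥(LinearMap.ker (g ^ t - 1) ⊓ W x) →ₗ[L] LinearMap.ker (g - 1) :=
    LinearMap.codRestrict _ ((∑ i ∈ Finset.range t, g ^ i) ∘ₗ Submodule.subtype _) (by
      intro v
      apply orbit_sum_mem g τ hg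
      have : (v : M) ∈ LinearMap.ker (g ^ t - 1) := v.2.1
      rw [LinearMap.mem_ker, LinearMap.sub_apply, sub_eq_zero] at this
      simpa using this)
  refine LinearMap.finrank_le_finrank_of_injective (f := f) ?_
  intro u v huv
  have h := congrArg (fun z : LinearMap.ker (g - 1) => D.π x (z : M)) huv
  simp only [f, LinearMap.codRestrict_apply, LinearMap.comp_apply, Submodule.subtype_apply] at h
  rw [orbit_sum_proj g τ hg D t ht0 x ht _ u.2.2, orbit_sum_proj g τ hg D t ht0 x ht _ v.2.2] at h
  exact Subtype.ext h

lemma finrank_le_of_full (D : Gr W) (t : ℕ) (ht0 : 0 < t) (x : α)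
    (ht : ∀ i, 0 < i → i < t → (τ ^ i) x ≠ x) (hgt : g ^ t = 1) :
    finrank L ↥(W x) ≤ finrank L (LinearMap.ker (g - 1)) := by
  have := finrank_fix_le g τ hg D t ht0 x ht
  rw [hgt] at this
  have h2 : LinearMap.ker (1 - 1 : Module.End L M) ⊓ W x = W x := by simp
  rwa [h2] at this

/-- P2 -/
lemma card_moved_le (D : Gr W) (p a : ℕ) (hp : p.Prime) (ha : 0 < a) (hτ : τ ^ (p ^ a) = 1)
    (hgq : g ^ (p ^ a) = 1) (X : Finset α) (hX : ∀ x ∈ X, W x ≠ ⊥ ∧ (τ ^ (p ^ (a - 1))) x ≠ x) :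
    X.card ≤ p ^ a * finrank L (LinearMap.ker (g - 1)) := by
  have hq : 0 < p ^ a := pow_pos hp.pos _
  obtain ⟨R, hRX, hR, hcov⟩ := exists_reps τ (p ^ a) hq hτ X
  refine (card_le_reps τ _ X R hcov).trans (Nat.mul_le_mul_left _ ?_)
  have hv : ∀ r : R, ∃ v ∈ W r, v ≠ 0 := fun r => (Submodule.ne_bot_iff _).1 (hX r (hRX r.2)).1
  choose v hv hv0 using hv
  have hmem := fun r : R => orbit_sum_mem g τ hg (p ^ a) (v r) (by rw [hgq]; rfl)
  have hfull := fun r : R => period_full τ p a hp ha hτ r (hX r (hRX r.2)).2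
  have hli : LinearIndependent L (fun r : R => (∑ i ∈ Finset.range (p ^ a), g ^ i) (v r)) := by
    refine D.lin_ind _ (fun r => (r : α)) ?_ ?_
    · intro r
      rw [orbit_sum_proj g τ hg D _ hq _ (hfull r) _ (hv r)]
      exact hv0 r
    · intro r r' hne
      rw [LinearMap.sum_apply, map_sum]
      refine Finset.sum_eq_zero fun i _ => D.ne _ _ _ ?_ (pow_mem g τ hg i _ _ (hv r'))
      intro h
      exact hne (Subtype.ext (hR r' r'.2 r r.2 i h.symm).symm)
  have hli2 : LinearIndependent L (fun r : R => (⟨_, hmem r⟩ : LinearMap.ker (g - 1))) :=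
    LinearIndependent.of_comp (Submodule.subtype _) hli
  simpa using hli2.fintype_card_le_finrank

/-- type 2 dimension bound -/
lemma finrank_le_of_moved (D : Gr W) (x : α) (hx : τ x ≠ x) :
    finrank L (W x) ≤ finrank L (LinearMap.range (g - 1)) := by
  let f : W x →ₗ[L] LinearMap.range (g - 1) := (g - 1).rangeRestrict ∘ₗ (W x).subtype
  refine LinearMap.finrank_le_finrank_of_injective (f := f) ?_
  intro u v huv
  have h := congrArg (fun z : LinearMap.range (g - 1) => D.π x (z : M)) huv
  simp only [f, LinearMap.comp_apply, Submodule.subtype_apply, LinearMap.codRestrict_apply,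
    LinearMap.rangeRestrict, LinearMap.sub_apply, map_sub, Module.End.one_apply] at h
  rw [D.ne x (τ x) _ hx.symm (hg x _ u.2), D.ne x (τ x) _ hx.symm (hg x _ v.2),
    D.self x _ u.2, D.self x _ v.2] at h
  exact Subtype.ext (by simpa using h)

/-- type 2 count -/
lemma card_moved_le2 (D : Gr W) (q : ℕ) (hq : 0 < q) (hτ : τ ^ q = 1)
    (X : Finset α) (hX : ∀ x ∈ X, W x ≠ ⊥ ∧ τ x ≠ x) :
    X.card ≤ q * finrank L (LinearMap.range (g - 1)) := by
  obtain ⟨R, hRX, hR, hcov⟩ := exists_reps τ q hq hτ X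
  refine (card_le_reps τ _ X R hcov).trans (Nat.mul_le_mul_left _ ?_)
  have hv : ∀ r : R, ∃ v ∈ W r, v ≠ 0 := fun r => (Submodule.ne_bot_iff _).1 (hX r (hRX r.2)).1
  choose v hv hv0 using hv
  have hli : LinearIndependent L (fun r : R => (g - 1) (v r)) := by
    refine D.lin_ind _ (fun r => (r : α)) ?_ ?_
    · intro r
      rw [LinearMap.sub_apply, map_sub, D.ne _ _ _ (hX r (hRX r.2)).2.symm (hg _ _ (hv r)),
        Module.End.one_apply, D.self _ _ (hv r)]
      simpa using hv0 r
    · intro r r' hne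
      rw [LinearMap.sub_apply, map_sub, Module.End.one_apply,
        D.ne _ _ _ (fun h => hne (Subtype.ext h)) (hv r'), sub_zero]
      refine D.ne _ _ _ (fun h => hne (Subtype.ext ?_)) (hg _ _ (hv r'))
      exact (hR r' r'.2 r r.2 1 (by rw [pow_one, h])).symm
  have hli2 : LinearIndependent L (fun r : R => (g - 1).rangeRestrict (v r)) :=
    LinearIndependent.of_comp (Submodule.subtype _) hli
  simpa using hli2.fintype_card_le_finrank

/-- upper bound for fixed points -/
lemma finrank_ker_le (D : Gr W) (p a : ℕ) (hp : p.Prime) (ha : 0 < a) (hτ : τ ^ (p ^ a) = 1)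
    (δ : ℕ) (hδ : ∀ x, finrank L (W x) ≤ δ) (B : Finset α) (hB : ∀ x ∈ B, τ x ∈ B) (hFB : D.F ⊆ B) 
    (Bs : Finset α) (hBs : ∀ x ∈ B, (τ ^ (p ^ (a - 1))) x = x → x ∈ Bs) :
    p ^ a * finrank L (LinearMap.ker (g - 1)) ≤ (B.card + p ^ a * Bs.card) * δ := by
  classical
  have hq : 0 < p ^ a := pow_pos hp.pos _
  obtain ⟨R, hRX, hR, hcov⟩ := exists_reps τ (p ^ a) hq hτ B
  have hproj : ∀ x v, D.π (τ x) (g v) = g (D.π x v) := by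
    intro x v
    conv_lhs => rw [← D.sum v, map_sum, map_sum]
    by_cases hx : x ∈ D.F
    · rw [Finset.sum_eq_single x]
      · exact D.self _ _ (hg _ _ (D.mem x v))
      · intro y _ hy
        exact D.ne _ (τ y) _ (fun h => hy (τ.injective h).symm) (hg _ _ (D.mem y v))
      · intro h; exact (h hx).elim
    · have h0 : W x = ⊥ := by
        by_contra h; exact hx ((D.memF x).2 h)
      have h1 : D.π x v = 0 := by have := D.mem x v; rw [h0] at this; simpa using this
      rw [h1, map_zero]
      refine Finset.sum_eq_zero fun y hy => D.ne _ (τ y) _ (fun h => ?_) (hg _ _ (D.mem y v))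
      exact hx ((τ.injective h) ▸ hy)
  have hproji : ∀ (i : ℕ) x v, D.π ((τ ^ i) x) ((g ^ i) v) = (g ^ i) (D.π x v) := by
    intro i x v
    induction i with
    | zero => simp
    | succ i ih =>
      rw [pow_succ', pow_succ', Equiv.Perm.mul_apply, Module.End.mul_apply, hproj, ih]
      rfl
  have h1 : finrank L (LinearMap.ker (g - 1)) ≤ R.card * δ := by
    let f : LinearMap.ker (g - 1) →ₗ[L] ((r : R) → W r) :=
      LinearMap.pi (fun r => LinearMap.codRestrict (W r) (D.π r ∘ₗ Submodule.subtype _)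
        (fun v => D.mem _ _))
    have hf : Function.Injective f := by
      rw [injective_iff_map_eq_zero]
      intro v hv
      have hgv : g v = v := by
        have := v.2
        rw [LinearMap.mem_ker, LinearMap.sub_apply, sub_eq_zero] at this
        simpa using this
      have hgvi : ∀ i : ℕ, (g ^ i) (v : M) = v := by
        intro i
        induction i with
        | zero => simp
        | succ i ih => rw [pow_succ, Module.End.mul_apply, hgv, ih]
      apply Subtype.ext
      rw [← D.sum (v : M)]
      refine Finset.sum_eq_zero fun x hx => ?_
      obtain ⟨r, hr, i, _, rfl⟩ := hcov x (hFB hx)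
      have h2 : D.π r (v : M) = 0 := by
        have := congrFun hv ⟨r, hr⟩
        exact congrArg Subtype.val this
      have := hproji i r v
      rw [hgvi i, h2, map_zero] at this
      exact this
    refine (LinearMap.finrank_le_finrank_of_injective hf).trans ?_
    rw [Module.finrank_pi_fintype]
    refine (Finset.sum_le_card_nsmul Finset.univ (fun r : R => finrank L (W (r : α))) δ (fun r _ => hδ (r : α))).trans ?_
    simp
  have h2 : p ^ a * R.card ≤ B.card + p ^ a * Bs.card := by
    let Rm := R.filter (fun x => (τ ^ (p ^ (a - 1))) x ≠ x)
    let Rf := R.filter (fun x => ¬ (τ ^ (p ^ (a - 1))) x ≠ x)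
    have hsum : Rm.card + Rf.card = R.card := Finset.card_filter_add_card_filter_not _
    have hRf : Rf.card ≤ Bs.card := by
      refine Finset.card_le_card fun x hx => ?_
      simp only [Rf, Finset.mem_filter, not_not] at hx
      exact hBs x (hRX hx.1) hx.2
    have hBi : ∀ (i : ℕ), ∀ x ∈ B, (τ ^ i) x ∈ B := by
      intro i x hx
      induction i with
      | zero => simpa
      | succ i ih => rw [pow_succ']; exact hB _ ih
    have hRm : p ^ a * Rm.card ≤ B.card := by
      have : (Finset.range (p ^ a) ×ˢ Rm).card ≤ B.card := by
        refine Finset.card_le_card_of_injOn (fun z => (τ ^ z.1) z.2) ?_ ?_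
        · rintro ⟨i, r⟩ h
          have h : i < p ^ a ∧ r ∈ R ∧ (τ ^ (p ^ (a - 1))) r ≠ r := by simpa [Rm] using h
          exact hBi i r (hRX h.2.1)
        · have key : ∀ i r j r', i ≤ j → i < p ^ a → j < p ^ a → r ∈ Rm → r' ∈ Rm →
              (τ ^ i) r = (τ ^ j) r' → i = j ∧ r = r' := by
            intro i r j r' hij hi hj hr hr' h
            simp only [Rm, Finset.mem_filter] at hr hr'
            have h3 : (τ ^ (j - i)) r' = r := by
              apply (τ ^ i).injective
              rw [h, ← Equiv.Perm.mul_apply, ← pow_add, Nat.add_sub_cancel' hij]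
            have h4 := hR r' hr'.1 r hr.1 _ h3
            subst h4
            refine ⟨?_, rfl⟩
            by_contra hne
            exact period_full τ p a hp ha hτ r' hr.2 (j - i) (by omega) (by omega) h3
          rintro ⟨i, r⟩ h ⟨j, r'⟩ h' heq
          have h : i < p ^ a ∧ r ∈ Rm := by simpa using h
          have h' : j < p ^ a ∧ r' ∈ Rm := by simpa using h'
          have heq : (τ ^ i) r = (τ ^ j) r' := heq
          rcases le_total i j with hij | hij
          · obtain ⟨rfl, rfl⟩ := key i r j r' hij h.1 h'.1 h.2 h'.2 heq
            rfl
          · obtain ⟨rfl, rfl⟩ := key j r' i r hij h'.1 h.1 h'.2 h.2 heq.symm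
            rfl
      simpa using this
    calc p ^ a * R.card = p ^ a * Rm.card + p ^ a * Rf.card := by rw [← hsum, mul_add]
      _ ≤ _ := Nat.add_le_add hRm (Nat.mul_le_mul_left _ hRf)
  calc p ^ a * finrank L (LinearMap.ker (g - 1)) ≤ p ^ a * (R.card * δ) := Nat.mul_le_mul_left _ h1
    _ = (p ^ a * R.card) * δ := by ring
    _ ≤ _ := Nat.mul_le_mul_right _ h2

end g
end grading
end FH

namespace FH
open Module
set_option linter.unusedSectionVars false

section jes
variable {L : Type*} [Field L] {M : Type*} [AddCommGroup M] [Module L M] {ι : Type*}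

/-- joint eigenspace -/
def jes (T : ι → Module.End L M) (χ : ι → L) : Submodule L M := ⨅ i, (T i).eigenspace (χ i)

lemma mem_jes {T : ι → Module.End L M} {χ : ι → L} {v : M} :
    v ∈ jes T χ ↔ ∀ i, T i v = χ i • v := by
  simp [jes, Module.End.mem_eigenspace_iff]

lemma jes_Gr [IsAlgClosed L] [FiniteDimensional L M] (T : ι → Module.End L M)
    (hc : ∀ i j, Commute (T i) (T j)) (hk : ∀ i, ∃ k : ℕ, (k : L) ≠ 0 ∧ T i ^ k = 1) :
    Nonempty (Gr (jes T)) := by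
  have hss : ∀ i, (T i).IsSemisimple := by
    intro i
    obtain ⟨k, hk0, hk⟩ := hk i
    refine Module.End.isSemisimple_of_squarefree_aeval_eq_zero (p := Polynomial.X ^ k - 1) ?_ ?_
    · exact (Polynomial.X_pow_sub_one_separable_iff.2 hk0).squarefree
    · simp [hk]
  have he : ∀ i μ, (T i).maxGenEigenspace μ = (T i).eigenspace μ := fun i μ =>
    (hss i).isFinitelySemisimple.maxGenEigenspace_eq_eigenspace μ
  have h1 := Module.End.independent_iInf_maxGenEigenspace_of_forall_mapsTo T (fun i j φ =>
    Module.End.mapsTo_maxGenEigenspace_of_comm (hc j i) φ)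
  have h2 := Module.End.iSup_iInf_maxGenEigenspace_eq_top_of_iSup_maxGenEigenspace_eq_top_of_commute T
    (fun i j _ => hc i j) (fun i => Module.End.iSup_maxGenEigenspace_eq_top _)
  simp only [he] at h1 h2
  exact exists_Gr (jes T) h1 h2

/-- action of a permutation of the index set on weights -/
def wtPerm (L : Type*) (σ : Equiv.Perm ι) : Equiv.Perm (ι → L) := Equiv.arrowCongr σ (Equiv.refl L)

lemma wtPerm_apply (σ : Equiv.Perm ι) (χ : ι → L) (i : ι) : wtPerm L σ χ i = χ (σ⁻¹ i) := rfl

lemma wtPerm_one : wtPerm L (1 : Equiv.Perm ι) = 1 := rfl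

lemma wtPerm_mul (σ τ : Equiv.Perm ι) : wtPerm L (σ * τ) = wtPerm L σ * wtPerm L τ := by
  ext χ i
  simp only [wtPerm_apply, Equiv.Perm.mul_apply, mul_inv_rev]

lemma wtPerm_pow (σ : Equiv.Perm ι) (n : ℕ) : wtPerm L (σ ^ n) = wtPerm L σ ^ n := by
  induction n with
  | zero => rfl
  | succ n ih => rw [pow_succ, pow_succ, wtPerm_mul, ih]

lemma jes_map {T : ι → Module.End L M} (g : Module.End L M) (σ : Equiv.Perm ι)
    (hg : ∀ i v, g (T i v) = T (σ i) (g v)) (χ : ι → L) (v : M) (hv : v ∈ jes T χ) :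
    g v ∈ jes T (wtPerm L σ χ) := by
  rw [mem_jes] at *
  intro i
  have := hg (σ⁻¹ i) v
  rw [hv, map_smul] at this
  rw [wtPerm_apply, this]
  simp

/-- Lemma R -/
lemma lemmaR [FiniteDimensional L M] {α : Type*} {W : α → Submodule L M} (D : Gr W)
    (g : Module.End L M) (τ : Equiv.Perm α) (hg : ∀ x, ∀ v ∈ W x, g v ∈ W (τ x)) (p a : ℕ)
    (hp : p.Prime) (ha : 0 < a) (hτ : τ ^ (p ^ a) = 1) (hgq : g ^ (p ^ a) = 1) (x : α) :
    ((τ ^ (p ^ (a - 1))) x ≠ x ∧ finrank L (W x) ≤ finrank L (LinearMap.ker (g - 1))) ∨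
    ∃ j < a, (τ ^ (p ^ j)) x = x ∧
      finrank L ↥(LinearMap.ker (g ^ (p ^ j) - 1) ⊓ W x) ≤ finrank L (LinearMap.ker (g - 1)) := by
  by_cases hx : (τ ^ (p ^ (a - 1))) x = x
  · right
    have h1 : Function.IsPeriodicPt τ (p ^ (a - 1)) x := by
      rw [Function.IsPeriodicPt, Function.IsFixedPt, Equiv.Perm.iterate_eq_pow, hx]
    obtain ⟨j, hj, hj'⟩ := (Nat.dvd_prime_pow hp).1 h1.minimalPeriod_dvd
    refine ⟨j, by omega, ?_, ?_⟩
    · have := Function.isPeriodicPt_minimalPeriod τ x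
      rw [Function.IsPeriodicPt, Function.IsFixedPt, Equiv.Perm.iterate_eq_pow, hj'] at this
      exact this
    · refine finrank_fix_le g τ hg D (p ^ j) (pow_pos hp.pos _) x fun i hi0 hi h => ?_
      have h2 : Function.IsPeriodicPt τ i x := by
        rw [Function.IsPeriodicPt, Function.IsFixedPt, Equiv.Perm.iterate_eq_pow, h]
      have := Nat.le_of_dvd hi0 h2.minimalPeriod_dvd
      omega
  · left
    exact ⟨hx, finrank_le_of_full g τ hg D (p ^ a) (pow_pos hp.pos _) x
      (period_full τ p a hp ha hτ x hx) hgq⟩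

end jes

section weights
variable {Γ : Type*} [Group Γ]

/-- weights -/
def Wt (C : Subgroup Γ) (L : Type*) : Type _ := C → L

/-- conjugation as a permutation of a normal subgroup -/
def cperm (C : Subgroup Γ) [C.Normal] (x : Γ) : Equiv.Perm C := (MulAut.conjNormal x : MulAut C).toEquiv

lemma cperm_apply (C : Subgroup Γ) [C.Normal] (x : Γ) (c : C) :
    ((cperm C x c : C) : Γ) = x * c * x⁻¹ := MulAut.conjNormal_apply x c

lemma cperm_mul (C : Subgroup Γ) [C.Normal] (x y : Γ) : cperm C (x * y) = cperm C x * cperm C y := by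
  ext c; simp only [cperm_apply, Equiv.Perm.mul_apply]; group

lemma cperm_one (C : Subgroup Γ) [C.Normal] : cperm C (1 : Γ) = 1 := by
  ext c; simp [cperm_apply]

lemma cperm_inv (C : Subgroup Γ) [C.Normal] (x : Γ) : (cperm C x)⁻¹ = cperm C x⁻¹ := by
  rw [inv_eq_iff_mul_eq_one, ← cperm_mul, mul_inv_cancel, cperm_one]

instance wtAction (C : Subgroup Γ) [C.Normal] (L : Type*) : MulAction Γ (Wt C L) where
  smul x χ := wtPerm L (cperm C x) χ
  one_smul χ := by
    change wtPerm L (cperm C 1) χ = χ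
    rw [cperm_one]; rfl
  mul_smul x y χ := by
    change wtPerm L (cperm C (x * y)) χ = wtPerm L (cperm C x) (wtPerm L (cperm C y) χ)
    rw [cperm_mul]; rfl

lemma wt_smul_def (C : Subgroup Γ) [C.Normal] (L : Type*) (x : Γ) (χ : Wt C L) :
    x • χ = wtPerm L (cperm C x) χ := rfl

lemma wt_smul_apply (C : Subgroup Γ) [C.Normal] (L : Type*) (x : Γ) (χ : Wt C L) (c : C) :
    (x • χ) c = χ ⟨x⁻¹ * c * x, by simpa using Subgroup.Normal.conj_mem ‹C.Normal› c c.2 x⁻¹⟩ := by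
  change χ ((cperm C x)⁻¹ c) = _
  rw [cperm_inv]
  congr 1
  ext
  rw [cperm_apply]; simp

variable {L : Type*} [Field L] {M : Type*} [AddCommGroup M] [Module L M]
variable (ρ : Γ →* Module.End L M)

/-- weight spaces -/
def wsp (C : Subgroup Γ) (χ : Wt C L) : Submodule L M := jes (fun c : C => ρ c) χ

lemma mem_wsp {C : Subgroup Γ} {χ : Wt C L} {v : M} :
    v ∈ wsp ρ C χ ↔ ∀ c : C, ρ c v = χ c • v := mem_jes

lemma wsp_smul (C : Subgroup Γ) [C.Normal] (x : Γ) (χ : Wt C L) (v : M) (hv : v ∈ wsp ρ C χ) :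
    ρ x v ∈ wsp ρ C (x • χ) := by
  refine jes_map (ρ x) (cperm C x) ?_ χ v hv
  intro c v
  rw [cperm_apply, ← Module.End.mul_apply, ← Module.End.mul_apply, ← map_mul, ← map_mul]
  congr 2
  group

lemma wsp_Gr [IsAlgClosed L] [FiniteDimensional L M] (C : Subgroup Γ)
    (hc : ∀ a ∈ C, ∀ b ∈ C, a * b = b * a) (hC : (Nat.card C : L) ≠ 0) :
    Nonempty (Gr (wsp ρ C)) := by
  refine jes_Gr _ ?_ ?_
  · intro a b
    change ρ a * ρ b = ρ b * ρ a
    rw [← map_mul, ← map_mul, hc a a.2 b b.2]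
  · intro a
    refine ⟨Nat.card C, hC, ?_⟩
    have : (a : Γ) ^ Nat.card C = 1 := by
      have := pow_card_eq_one' (x := a)
      rw [← Subgroup.coe_pow, this]; rfl
    rw [← map_pow, this, map_one]

/-- the permutation of weights by one element -/
def wτ (C : Subgroup Γ) [C.Normal] (L : Type*) (g : Γ) : Equiv.Perm (Wt C L) := MulAction.toPerm g

lemma wτ_pow (C : Subgroup Γ) [C.Normal] (g : Γ) (n : ℕ) : wτ C L g ^ n = wτ C L (g ^ n) := by
  unfold wτ
  have := map_pow (MulAction.toPermHom Γ (Wt C L)) g n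
  exact this.symm

lemma wτ_one (C : Subgroup Γ) [C.Normal] : wτ C L (1 : Γ) = 1 := by
  ext χ; simp [wτ]

lemma centralises_of_fix (hρ : Function.Injective ρ) (C : Subgroup Γ) [C.Normal]
    (D : Gr (wsp ρ C)) (x : Γ) (hx : ∀ χ ∈ D.F, x • χ = χ) : ∀ c ∈ C, x * c = c * x := by
  intro c hc
  have h : x * c * x⁻¹ = c := by
    apply hρ
    ext v
    rw [← D.sum v, map_sum, map_sum]
    refine Finset.sum_congr rfl fun χ hχ => ?_
    have h1 := (mem_wsp ρ).1 (D.mem χ v)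
    have h2 := h1 ⟨x * c * x⁻¹, Subgroup.Normal.conj_mem ‹_› c hc x⟩
    have h3 := h1 ⟨c, hc⟩
    have h4 := congrFun (hx χ hχ) ⟨x * c * x⁻¹, Subgroup.Normal.conj_mem ‹_› c hc x⟩
    rw [wt_smul_apply] at h4
    rw [h2, h3, ← h4]
    congr 2
    ext
    simp only
    group
  exact mul_inv_eq_iff_eq_mul.1 h

/-- Step (a) -/
lemma stepA [Finite Γ] [Group.IsSolvable Γ] (hρ : Function.Injective ρ) (C : Subgroup Γ) [C.Normal]
    (D : Gr (wsp ρ C)) (S : Set Γ) (k : ℕ)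
    (hk : ∀ s ∈ S, ∀ X : Finset (Wt C L), (∀ χ ∈ X, wsp ρ C χ ≠ ⊥ ∧ s • χ ≠ χ) → X.card ≤ k) :
    ∀ x ∈ dser (Subgroup.closure S) ((2 * k + 1).factorial), ∀ c ∈ C, x * c = c * x := by
  classical
  intro x hx
  refine centralises_of_fix ρ hρ C D x fun χ hχ => ?_
  refine permFix (Subgroup.closure S) S rfl (D.F : Set (Wt C L)) ?_ (Finset.finite_toSet _) k ?_ χ hχ x hx
  · intro y _ χ hχ
    have hχ : wsp ρ C χ ≠ ⊥ := (D.memF χ).1 hχ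
    obtain ⟨v, hv, hv0⟩ := (Submodule.ne_bot_iff _).1 hχ
    refine (D.memF _).2 ((Submodule.ne_bot_iff _).2 ⟨ρ y v, wsp_smul ρ C y χ v hv, fun h => hv0 ?_⟩)
    have := congrArg (ρ y⁻¹) h
    rw [← Module.End.mul_apply, ← map_mul] at this
    simpa using this
  · intro s hs
    have := hk s hs (D.F.filter (fun χ => s • χ ≠ χ)) (by
      intro χ hχ
      rw [Finset.mem_filter] at hχ
      exact ⟨(D.memF χ).1 hχ.1, hχ.2⟩)
    rw [← Set.ncard_coe_finset] at this
    convert this using 2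
    ext χ
    simp

end weights
end FH

namespace FH
open Module
set_option linter.unusedSectionVars false

section more
variable {L : Type*} [Field L] {M : Type*} [AddCommGroup M] [Module L M] [FiniteDimensional L M]
  {α : Type*} {W : α → Submodule L M}

lemma Gr.sum_finrank_le (D : Gr W) (X : Finset α) : ∑ x ∈ X, finrank L (W x) ≤ finrank L M := by
  classical
  let f : ((x : X) → W x) →ₗ[L] M := ∑ x : X, (W x).subtype ∘ₗ LinearMap.proj x
  have hf : Function.Injective f := by
    rw [injective_iff_map_eq_zero]
    intro v hv
    ext x
    have h := congrArg (D.π x) hv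
    simp only [f, LinearMap.sum_apply, LinearMap.comp_apply, LinearMap.proj_apply,
      Submodule.subtype_apply, map_sum, map_zero] at h
    rw [Finset.sum_eq_single x, D.self _ _ (v x).2] at h
    · simpa using h
    · intro y _ hy
      exact D.ne _ (y : α) _ (fun h => hy (Subtype.ext h.symm)) (v y).2
    · simp
  have := LinearMap.finrank_le_finrank_of_injective hf
  rw [Module.finrank_pi_fintype] at this
  rwa [Finset.sum_coe_sort X (fun x => finrank L (W x))] at this

/-- lower bound for the centraliser of a diagonalisable element -/
lemma sum_sq_le_centralizer [IsAlgClosed L] (g : Module.End L M) (q : ℕ) (hq0 : (q : L) ≠ 0)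
    (hgq : g ^ q = 1) (Z : Submodule L (Module.End L M)) (hZ : ∀ X, g * X = X * g → X ∈ Z) :
    (finrank L M - finrank L (LinearMap.ker (g - 1))) ^ 2 ≤ (q - 1) * finrank L Z := by
  classical
  have hq : q ≠ 0 := by rintro rfl; simp at hq0
  have hss : g.IsSemisimple := by
    refine Module.End.isSemisimple_of_squarefree_aeval_eq_zero (p := Polynomial.X ^ q - 1) ?_ ?_
    · exact (Polynomial.X_pow_sub_one_separable_iff.2 hq0).squarefree
    · simp [hgq]
  obtain ⟨D⟩ := exists_Gr (fun μ : L => g.eigenspace μ) (Module.End.eigenspaces_iSupIndep g)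
    hss.iSup_eigenspace_eq_top
  have hge : ∀ μ v, v ∈ g.eigenspace μ → g v = μ • v := fun μ v hv =>
    Module.End.mem_eigenspace_iff.1 hv
  have hpow : ∀ μ ∈ D.F, μ ^ q = 1 := by
    intro μ hμ
    obtain ⟨v, hv, hv0⟩ := (Submodule.ne_bot_iff _).1 ((D.memF μ).1 hμ)
    have h1 : ∀ i : ℕ, (g ^ i) v = μ ^ i • v := by
      intro i
      induction i with
      | zero => simp
      | succ i ih => rw [pow_succ', Module.End.mul_apply, ih, map_smul, hge μ v hv, smul_smul, pow_succ]
    have h2 := h1 q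
    rw [hgq, Module.End.one_apply] at h2
    have h3 : (μ ^ q - 1) • v = 0 := by rw [sub_smul, one_smul, ← h2, sub_self]
    exact sub_eq_zero.1 ((smul_eq_zero.1 h3).resolve_right hv0)
  let F' := D.F.erase 1
  have hF' : F'.card ≤ q - 1 := by
    have hsub : insert 1 F' ⊆ (Polynomial.nthRootsFinset q (1 : L)) := by
      intro μ hμ
      rw [Polynomial.mem_nthRootsFinset (Nat.pos_of_ne_zero hq)]
      rcases Finset.mem_insert.1 hμ with rfl | hμ
      · simp
      · exact hpow μ (Finset.mem_of_mem_erase hμ)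
    have h1 := Finset.card_le_card hsub
    rw [Finset.card_insert_of_notMem (Finset.notMem_erase _ _)] at h1
    have h2 : (Polynomial.nthRootsFinset q (1 : L)).card ≤ q := by
      rw [Polynomial.nthRootsFinset]
      exact (Multiset.toFinset_card_le _).trans (Polynomial.card_nthRoots q 1)
    change (D.F.erase 1).card ≤ q - 1
    omega
  -- the dimension count
  have hdim : finrank L M ≤ ∑ μ ∈ D.F, finrank L (g.eigenspace μ) := by
    let f : M →ₗ[L] ((μ : D.F) → g.eigenspace (μ : L)) :=
      LinearMap.pi (fun μ => LinearMap.codRestrict _ (D.π μ) (fun v => D.mem _ _))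
    have hf : Function.Injective f := by
      rw [injective_iff_map_eq_zero]
      intro v hv
      rw [← D.sum v]
      refine Finset.sum_eq_zero fun μ hμ => ?_
      exact congrArg Subtype.val (congrFun hv ⟨μ, hμ⟩)
    have := LinearMap.finrank_le_finrank_of_injective hf
    rw [Module.finrank_pi_fintype] at this
    rwa [Finset.sum_coe_sort D.F (fun x => finrank L (g.eigenspace x))] at this
  have h1 : g.eigenspace 1 = LinearMap.ker (g - 1) := by
    rw [Module.End.eigenspace_def, one_smul]
  have hdim2 : finrank L M - finrank L (LinearMap.ker (g - 1)) ≤ ∑ μ ∈ F', finrank L (g.eigenspace μ) := by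
    by_cases h : (1 : L) ∈ D.F
    · rw [← Finset.add_sum_erase _ _ h, h1] at hdim
      change _ ≤ ∑ μ ∈ D.F.erase 1, _
      omega
    · have : F' = D.F := Finset.erase_eq_of_notMem h
      rw [this]; omega
  have hC : ∑ μ ∈ F', finrank L (g.eigenspace μ) ^ 2 ≤ finrank L Z := by
    let P : (μ : L) → M →ₗ[L] g.eigenspace μ := fun μ => LinearMap.codRestrict _ (D.π μ) (D.mem μ)
    let f : ((μ : F') → Module.End L (g.eigenspace (μ : L))) →ₗ[L] Module.End L M :=
      { toFun := fun X => ∑ μ : F', (g.eigenspace (μ : L)).subtype ∘ₗ X μ ∘ₗ P μ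
        map_add' := by
          intro X Y
          rw [← Finset.sum_add_distrib]
          refine Finset.sum_congr rfl fun μ _ => ?_
          ext v; simp
        map_smul' := by
          intro c X
          rw [Finset.smul_sum]
          refine Finset.sum_congr rfl fun μ _ => ?_
          ext v; simp }
    have hfX : ∀ X v, f X v = ∑ μ : F', ((X μ (P μ v) : g.eigenspace (μ : L)) : M) := by
      intro X v; simp [f]
    have hP : ∀ μ v, P μ (g v) = μ • P μ v := by
      intro μ v
      apply Subtype.ext
      change D.π μ (g v) = μ • D.π μ v
      conv_lhs => rw [← D.sum v, map_sum, map_sum]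
      by_cases hμ : μ ∈ D.F
      · rw [Finset.sum_eq_single μ]
        · rw [hge μ _ (D.mem μ v), map_smul, D.self _ _ (D.mem μ v)]
        · intro ν _ hν
          rw [hge ν _ (D.mem ν v), map_smul, D.ne μ ν _ hν.symm (D.mem ν v), smul_zero]
        · intro h; exact (h hμ).elim
      · have h0 : g.eigenspace μ = ⊥ := by
          by_contra h; exact hμ ((D.memF μ).2 h)
        have : ∀ w, D.π μ w = 0 := by
          intro w; have := D.mem μ w; rw [h0] at this; simpa using this
        simp [this]
    have hfZ : ∀ X, f X ∈ Z := by
      intro X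
      apply hZ
      ext v
      rw [Module.End.mul_apply, Module.End.mul_apply, hfX, hfX, map_sum]
      refine Finset.sum_congr rfl fun μ _ => ?_
      rw [hP, map_smul, hge μ _ (X μ (P μ v)).2]
      rfl
    have hf : Function.Injective (LinearMap.codRestrict Z f hfZ) := by
      rw [injective_iff_map_eq_zero]
      intro X hX
      have hX : f X = 0 := congrArg Subtype.val hX
      ext μ v
      have h2 := hfX X (v : M)
      rw [hX, LinearMap.zero_apply, Finset.sum_eq_single μ] at h2
      · have : P μ (v : M) = v := Subtype.ext (D.self _ _ v.2)
        rw [this] at h2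
        simpa using h2.symm
      · intro ν _ hν
        have : P ν (v : M) = 0 := Subtype.ext (D.ne _ (μ : L) _ (fun h => hν (Subtype.ext h)) v.2)
        rw [this, map_zero]; rfl
      · simp
    have := LinearMap.finrank_le_finrank_of_injective hf
    rw [Module.finrank_pi_fintype] at this
    refine le_trans (le_of_eq ?_) this
    rw [← Finset.sum_coe_sort F' (fun μ => finrank L (g.eigenspace μ) ^ 2)]
    refine Finset.sum_congr rfl fun μ _ => ?_
    rw [Module.finrank_linearMap, sq]
  calc (finrank L M - finrank L (LinearMap.ker (g - 1))) ^ 2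
      ≤ (∑ μ ∈ F', finrank L (g.eigenspace μ)) ^ 2 := Nat.pow_le_pow_left hdim2 2
    _ ≤ F'.card * ∑ μ ∈ F', finrank L (g.eigenspace μ) ^ 2 := sq_sum_le_card_mul_sum_sq
    _ ≤ (q - 1) * finrank L Z := Nat.mul_le_mul hF' hC

end more

lemma arithQ (n f D d δ q c : ℕ) (hq : 2 ≤ q) (hf : 1 ≤ f) (h1 : q * c ≤ (n + q * f) * δ)
    (h2 : n * δ ≤ D ^ 2) (h3 : (D - d) ^ 2 ≤ (q - 1) * c) (h4 : n ≤ D ^ 2) :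
    n ≤ 16 * q ^ 2 * (d + 1) ^ 2 * f := by
  by_contra hcon
  push Not at hcon
  have hD : 4 * q * (d + 1) < D := by
    by_contra h
    push Not at h
    have : D ^ 2 ≤ (4 * q * (d + 1)) ^ 2 := Nat.pow_le_pow_left h 2
    have h5 : (4 * q * (d + 1)) ^ 2 * 1 ≤ (4 * q * (d + 1)) ^ 2 * f := Nat.mul_le_mul_left _ hf
    have h6 : (4 * q * (d + 1)) ^ 2 = 16 * q ^ 2 * (d + 1) ^ 2 := by ring
    rw [h6] at this h5
    rw [mul_one] at h5
    omega
  have hdD : d ≤ D := by nlinarith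
  obtain ⟨k, rfl⟩ : ∃ k, q = k + 1 := ⟨q - 1, by omega⟩
  have hk : 1 ≤ k := by omega
  have e1 : ((D - d : ℕ) : ℝ) = (D : ℝ) - d := by push_cast [hdD]; ring
  have h1' : ((k : ℝ) + 1) * c ≤ (n + (k + 1) * f) * δ := by exact_mod_cast h1
  have h2' : (n : ℝ) * δ ≤ (D : ℝ) ^ 2 := by exact_mod_cast h2
  have h3' : ((D : ℝ) - d) ^ 2 ≤ k * c := by
    rw [← e1]; exact_mod_cast h3
  have hcon' : 16 * ((k : ℝ) + 1) ^ 2 * (d + 1) ^ 2 * f < n := by exact_mod_cast hcon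
  have hD' : 4 * ((k : ℝ) + 1) * (d + 1) < D := by exact_mod_cast hD
  have hk' : (1 : ℝ) ≤ k := by exact_mod_cast hk
  have hf' : (1 : ℝ) ≤ f := by exact_mod_cast hf
  have hd' : (0 : ℝ) ≤ d := Nat.cast_nonneg d
  have hn' : (0 : ℝ) < n := lt_of_le_of_lt (by positivity) hcon'
  have hDp : (0 : ℝ) < D := lt_of_le_of_lt (by positivity) hD'
  -- combine
  have a1 : ((k : ℝ) + 1) * n * (D - d) ^ 2 ≤ k * (n + (k + 1) * f) * D ^ 2 := by
    calc ((k : ℝ) + 1) * n * (D - d) ^ 2 ≤ (k + 1) * n * (k * c) := by gcongr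
      _ = n * k * ((k + 1) * c) := by ring
      _ ≤ n * k * ((n + (k + 1) * f) * δ) := by gcongr
      _ = k * (n + (k + 1) * f) * (n * δ) := by ring
      _ ≤ _ := by gcongr
  have a2 : 16 * ((k : ℝ) + 1) * ((k + 1) * f) ≤ n := by
    refine le_trans ?_ hcon'.le
    have : (1 : ℝ) ≤ (d + 1) ^ 2 := by nlinarith
    have h7 : 0 ≤ 16 * ((k : ℝ) + 1) ^ 2 * f := by positivity
    nlinarith
  have a3 : (D : ℝ) ^ 2 * (2 * (k + 1) - 1) ≤ 2 * (k + 1) * (D - d) ^ 2 := by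
    have : 4 * ((k : ℝ) + 1) * d ≤ D := by nlinarith
    have h8 : 0 ≤ (D : ℝ) * (D - 4 * (k + 1) * d) := mul_nonneg hDp.le (by linarith)
    have h9 : 0 ≤ 2 * ((k : ℝ) + 1) * (d : ℝ) ^ 2 := by positivity
    nlinarith
  -- contradiction
  have b1 : (n : ℝ) * (D ^ 2 * (2 * (k + 1) - 1)) ≤ 2 * (k * (n + (k + 1) * f) * D ^ 2) := by
    calc (n : ℝ) * (D ^ 2 * (2 * (k + 1) - 1)) ≤ n * (2 * (k + 1) * (D - d) ^ 2) := by gcongr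
      _ = 2 * (((k : ℝ) + 1) * n * (D - d) ^ 2) := by ring
      _ ≤ _ := by gcongr
  have b2 : (n : ℝ) * (2 * (k + 1) - 1) ≤ 2 * (k * (n + (k + 1) * f)) := by
    have hD2 : (0 : ℝ) < D ^ 2 := by positivity
    refine le_of_mul_le_mul_right ?_ hD2
    nlinarith
  have hz : ((k : ℝ) + 1) * f * 16 * (k + 1) ≤ n := by linarith
  have hz2 : 0 ≤ ((k : ℝ) + 1) * f := by positivity
  nlinarith

end FH

namespace FH
open Module
set_option linter.unusedSectionVars false

lemma jes_unique {L : Type*} [Field L] {M : Type*} [AddCommGroup M] [Module L M] {ι : Type*}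
    {T : ι → Module.End L M} {χ χ' : ι → L} {v : M} (hv0 : v ≠ 0) (h : v ∈ jes T χ)
    (h' : v ∈ jes T χ') : χ = χ' := by
  rw [mem_jes] at h h'
  ext i
  have : (χ i - χ' i) • v = 0 := by rw [sub_smul, ← h, ← h', sub_self]
  exact sub_eq_zero.1 ((smul_eq_zero.1 this).resolve_right hv0)

section Q
variable {E : Type*} [Group E] {L : Type*} [Field L] {U : Type*} [AddCommGroup U]
  [Module L U] [Nontrivial U] (r : E →* Module.End L U)
  (β : E → E → L) (hβ : ∀ e f, r (f⁻¹ * e * f) = β e f • r e)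

lemma r_ne_zero (e : E) : r e ≠ 0 := by
  intro h
  have h1 : r e * r e⁻¹ = 1 := by rw [← map_mul]; simp
  rw [h, zero_mul] at h1
  exact zero_ne_one h1

lemma smul_r_cancel {a b : L} {e : E} (h : a • r e = b • r e) : a = b := by
  have : (a - b) • r e = 0 := by rw [sub_smul, h, sub_self]
  exact sub_eq_zero.1 ((smul_eq_zero.1 this).resolve_right (r_ne_zero r e))

include hβ

lemma β_mul (e e' : E) : β (e * e') = β e * β e' := by
  ext f
  apply smul_r_cancel r (e := e * e')
  rw [← hβ]
  have : f⁻¹ * (e * e') * f = (f⁻¹ * e * f) * (f⁻¹ * e' * f) := by group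
  rw [this, map_mul, hβ, hβ, map_mul, Pi.mul_apply, smul_mul_smul_comm]

lemma β_one : β 1 = 1 := by
  ext f
  apply smul_r_cancel r (e := (1 : E))
  rw [← hβ]; simp

lemma β_mul_right (e f f' : E) : β e (f * f') = β e f * β e f' := by
  apply smul_r_cancel r (e := e)
  rw [← hβ]
  have : (f * f')⁻¹ * e * (f * f') = f'⁻¹ * (f⁻¹ * e * f) * f' := by group
  rw [this, map_mul, map_mul, hβ, mul_smul_comm, smul_mul_assoc, ← map_mul, ← map_mul, hβ, smul_smul]

lemma β_one_right (e : E) : β e 1 = 1 := by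
  apply smul_r_cancel r (e := e)
  rw [← hβ]; simp

/-- β as a hom -/
def bhom : E →* (E → L) where
  toFun := β
  map_one' := β_one r β hβ
  map_mul' := β_mul r β hβ

omit hβ in
/-- conjugation operators -/
def cT (f : E) : Module.End L (Module.End L U) :=
  LinearMap.mulLeft L (r f⁻¹) ∘ₗ LinearMap.mulRight L (r f)

omit hβ in
lemma cT_apply (f : E) (X : Module.End L U) : cT r f X = r f⁻¹ * X * r f := by
  simp [cT, mul_assoc]

omit hβ in
lemma cT_mul (f f' : E) : cT r f * cT r f' = cT r (f' * f) := by
  ext1 X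
  rw [Module.End.mul_apply, cT_apply, cT_apply, cT_apply, map_mul, mul_inv_rev, map_mul]
  simp only [mul_assoc]

omit hβ in
lemma cT_pow (f : E) (k : ℕ) : cT r f ^ k = cT r (f ^ k) := by
  induction k with
  | zero => ext1 X; rw [pow_zero, pow_zero, cT_apply]; simp
  | succ k ih => rw [pow_succ, ih, cT_mul, pow_succ']

lemma cT_comm (f f' : E) : Commute (cT r f) (cT r f') := by
  change cT r f * cT r f' = cT r f' * cT r f
  rw [cT_mul, cT_mul]
  ext1 X
  rw [cT_apply, cT_apply]
  have h1 : r (f * f') = β f f' • r (f' * f) := by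
    have : f * f' = f' * (f'⁻¹ * f * f') := by group
    rw [this, map_mul, hβ, mul_smul_comm, ← map_mul]
  have h2 : r (f' * f)⁻¹ = β f f' • r (f * f')⁻¹ := by
    have h3 : r (f' * f)⁻¹ = r (f' * f)⁻¹ * r (f * f') * r (f * f')⁻¹ := by
      rw [mul_assoc, ← map_mul _ (f * f')]; simp
    rw [h3, h1, mul_smul_comm, smul_mul_assoc, ← map_mul]; simp
  rw [h2, h1, smul_mul_assoc, smul_mul_assoc, mul_smul_comm]

lemma r_mem_jes (e : E) : r e ∈ jes (cT r) (β e) := by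
  rw [mem_jes]
  intro f
  rw [cT_apply, ← map_mul, ← map_mul, hβ]

variable [Finite E] [IsAlgClosed L] [FiniteDimensional L U]

lemma cT_Gr (hE : (Nat.card E : L) ≠ 0) : Nonempty (Gr (jes (cT r))) := by
  refine jes_Gr _ (cT_comm r β hβ) (fun f => ⟨Nat.card E, hE, ?_⟩)
  rw [cT_pow, pow_card_eq_one']
  ext1 X; rw [cT_apply]; simp

/-- b1 -/
lemma card_B_le (hE : (Nat.card E : L) ≠ 0) : Nat.card (Set.range β) ≤ finrank L U ^ 2 := by
  classical
  obtain ⟨D⟩ := cT_Gr r β hβ hE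
  have hch : ∀ b : Set.range β, ∃ e, β e = b := fun b => b.2
  choose e he using hch
  have hfin : Finite (Set.range β) := Set.finite_range β
  have : Fintype (Set.range β) := Fintype.ofFinite _
  have hli : LinearIndependent L (fun b : Set.range β => r (e b)) := by
    refine D.lin_ind _ (fun b => (b : E → L)) ?_ ?_
    · intro b
      rw [D.self _ _ (by rw [← he b]; exact r_mem_jes r β hβ (e b))]
      exact r_ne_zero r _
    · intro b b' hne
      refine D.ne _ (b' : E → L) _ (fun h => hne (Subtype.ext h)) ?_
      rw [← he b']; exact r_mem_jes r β hβ (e b')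
  have := hli.fintype_card_le_finrank
  rwa [Module.finrank_linearMap, ← sq, ← Nat.card_eq_fintype_card] at this

lemma weights_subset (hsc : ∀ e, β e = 1 → ∃ c : L, r e = c • 1) (χ : E → L)
    (hχ : jes (cT r) χ ≠ ⊥) : χ ∈ Set.range β := by
  classical
  obtain ⟨X, hX, hX0⟩ := (Submodule.ne_bot_iff _).1 hχ
  rw [mem_jes] at hX
  have hcancel : ∀ {a b : L}, a • X = b • X → a = b := by
    intro a b h
    have : (a - b) • X = 0 := by rw [sub_smul, h, sub_self]
    exact sub_eq_zero.1 ((smul_eq_zero.1 this).resolve_right hX0)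
  -- scalars
  have hcTs : ∀ f, β f = 1 → cT r f = 1 := by
    intro f hf
    obtain ⟨c, hc⟩ := hsc f hf
    ext1 Y
    rw [cT_apply, hc, mul_smul_comm, mul_one, ← smul_mul_assoc]
    have : c • r f⁻¹ = 1 := by
      have h : r f⁻¹ * r f = 1 := by rw [← map_mul]; simp
      rwa [hc, mul_smul_comm, mul_one] at h
    rw [this, one_mul]; rfl
  have χmul : ∀ f f', χ (f * f') = χ f * χ f' := by
    intro f f'
    apply hcancel
    rw [← hX, ← cT_mul, Module.End.mul_apply, hX, map_smul, hX, smul_smul]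
  have χone : χ 1 = 1 := by
    apply hcancel
    rw [← hX, cT_apply]; simp
  let b := bhom r β hβ
  have hker : ∀ f, f ∈ b.ker ↔ β f = 1 := fun f => MonoidHom.mem_ker
  -- characters of the quotient
  have lift : ∀ ψ : E →* L, (∀ f, β f = 1 → ψ f = 1) → ∃ ψ' : E ⧸ b.ker →* L, ∀ f : E, ψ' f = ψ f := by
    intro ψ h
    let ψu : E →* Lˣ := ψ.toHomUnits
    refine ⟨(Units.coeHom L).comp (QuotientGroup.lift b.ker ψu ?_), fun f => ?_⟩
    · intro f hf
      ext
      exact h f ((hker f).1 hf)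
    · rfl
  have hβ1 : ∀ e f, β f = 1 → β e f = 1 := by
    intro e f hf
    apply smul_r_cancel r (e := e)
    rw [← r_mem_jes r β hβ e |> mem_jes.1 |> (· f), hcTs f hf]
    simp
  let ψ : E → (E →* L) := fun e =>
    { toFun := β e, map_one' := β_one_right r β hβ e, map_mul' := β_mul_right r β hβ e }
  choose Λ hΛ using fun e => lift (ψ e) (fun f hf => hβ1 e f hf)
  obtain ⟨Ξ, hΞ⟩ := lift ⟨⟨χ, χone⟩, χmul⟩ (fun f hf => by
    apply hcancel
    change χ f • X = _
    rw [← hX, hcTs f hf]; simp)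
  have hli := linearIndependent_monoidHom (E ⧸ b.ker) L
  have : Fintype (E ⧸ b.ker) := Fintype.ofFinite _
  have hfin : Finite (E ⧸ b.ker →* L) := hli.finite
  have : Fintype (E ⧸ b.ker →* L) := Fintype.ofFinite _
  have hle : Fintype.card (E ⧸ b.ker →* L) ≤ Fintype.card (E ⧸ b.ker) := by
    have := hli.fintype_card_le_finrank
    rwa [Module.finrank_fintype_fun_eq_card] at this
  have hinj : Function.Injective (fun z : E ⧸ b.ker => Λ z.out) := by
    intro z z' h
    have h1 : β z.out = β z'.out := by
      ext f
      have := DFunLike.congr_fun h (f : E ⧸ b.ker)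
      rwa [hΛ, hΛ] at this
    rw [← z.out_eq', ← z'.out_eq']
    rw [Quotient.eq'', QuotientGroup.leftRel_apply, hker, β_mul r β hβ, ← h1, ← β_mul r β hβ]
    simp [β_one r β hβ]
  have hbij := (Fintype.bijective_iff_injective_and_card _).2
    ⟨hinj, le_antisymm (Fintype.card_le_of_injective _ hinj) hle⟩
  obtain ⟨z, hz⟩ := hbij.2 Ξ
  refine ⟨z.out, ?_⟩
  ext f
  have := DFunLike.congr_fun hz (f : E ⧸ b.ker)
  simp only [hΛ, hΞ] at this
  exact this

/-- Lemma Q -/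
lemma lemmaQ (hE : (Nat.card E : L) ≠ 0) (hsc : ∀ e, β e = 1 → ∃ c : L, r e = c • 1)
    (g gi : Module.End L U) (hgi : g * gi = 1) (hgi' : gi * g = 1) (σ : Equiv.Perm E)
    (hσ : ∀ f, g * r f = r (σ f) * g) (hσinv : ∀ f, σ f⁻¹ = (σ f)⁻¹) (p a : ℕ) (hp : p.Prime) (ha : 0 < a)
    (hσq : σ ^ (p ^ a) = 1) (hgq : g ^ (p ^ a) = 1) (hpL : (p : L) ≠ 0) (d : ℕ)
    (hd : finrank L (LinearMap.ker (g - 1)) ≤ d) :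
    Nat.card E ≤ 16 * (p ^ a) ^ 2 * (d + 1) ^ 2 *
      Nat.card {e : E // β ((σ ^ (p ^ (a - 1))) e) = β e} := by
  classical
  have : Fintype E := Fintype.ofFinite E
  obtain ⟨D⟩ := cT_Gr r β hβ hE
  let Φ : Module.End L (Module.End L U) := LinearMap.mulLeft L g ∘ₗ LinearMap.mulRight L gi
  have hΦ : ∀ X, Φ X = g * X * gi := fun X => by simp [Φ, mul_assoc]
  have hΦT : ∀ f X, Φ (cT r f X) = cT r (σ f) (Φ X) := by
    intro f X
    rw [hΦ, hΦ, cT_apply, cT_apply, ← hσinv]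
    have h1 := hσ f⁻¹
    have h2 : r f * gi = gi * r (σ f) := by
      calc r f * gi = gi * (g * r f) * gi := by rw [← mul_assoc gi, hgi', one_mul]
        _ = gi * r (σ f) * (g * gi) := by rw [hσ]; simp only [mul_assoc]
        _ = _ := by rw [hgi, mul_one]
    calc g * (r f⁻¹ * X * r f) * gi = (g * r f⁻¹) * X * (r f * gi) := by simp only [mul_assoc]
      _ = _ := by rw [h1, h2]; simp only [mul_assoc]
  have hΦr : ∀ e, Φ (r e) = r (σ e) := by
    intro e
    rw [hΦ, hσ, mul_assoc, hgi, mul_one]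
  let τ : Equiv.Perm (E → L) := wtPerm L σ
  have hτβ : ∀ e, τ (β e) = β (σ e) := by
    intro e
    refine jes_unique (r_ne_zero r (σ e)) ?_ (r_mem_jes r β hβ (σ e))
    rw [← hΦr]
    exact jes_map Φ σ hΦT _ _ (r_mem_jes r β hβ e)
  have hτi : ∀ (i : ℕ) e, (τ ^ i) (β e) = β ((σ ^ i) e) := by
    intro i e
    induction i with
    | zero => rfl
    | succ i ih => rw [pow_succ', pow_succ', Equiv.Perm.mul_apply, ih, hτβ]; rfl
  let B : Finset (E → L) := Finset.univ.image β
  let Bs : Finset (E → L) := B.filter (fun b => (τ ^ (p ^ (a - 1))) b = b)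
  have hB : ∀ b, b ∈ B ↔ b ∈ Set.range β := by intro b; simp [B]
  let δ := finrank L (jes (cT r) (1 : E → L))
  have hδe : ∀ e, finrank L (jes (cT r) (β e)) = δ := by
    intro e
    let m : ∀ e e', jes (cT r) (β e') →ₗ[L] jes (cT r) (β (e * e')) := fun e e' =>
      LinearMap.codRestrict _ (LinearMap.mulLeft L (r e) ∘ₗ Submodule.subtype _) (by
        rintro ⟨X, hX⟩
        rw [mem_jes] at *
        intro f
        have h := hX f
        rw [cT_apply] at h
        have h2 := (mem_jes.1 (r_mem_jes r β hβ e)) f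
        rw [cT_apply] at h2
        simp only [LinearMap.comp_apply, Submodule.subtype_apply, LinearMap.mulLeft_apply]
        have h3 : r f * r f⁻¹ = 1 := by rw [← map_mul]; simp
        rw [cT_apply]
        calc r f⁻¹ * (r e * X) * r f = r f⁻¹ * (r e * (r f * r f⁻¹) * X) * r f := by
              rw [h3, mul_one]
          _ = (r f⁻¹ * r e * r f) * (r f⁻¹ * X * r f) := by simp only [mul_assoc]
          _ = _ := by rw [h, h2, β_mul r β hβ, Pi.mul_apply, smul_mul_smul_comm])
    have hm : ∀ e e', Function.Injective (m e e') := by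
      intro e e' X Y h
      have h1 : r e * (X : Module.End L U) = r e * (Y : Module.End L U) := congrArg Subtype.val h
      apply Subtype.ext
      have h2 := congrArg (fun Z => r e⁻¹ * Z) h1
      simp only [← mul_assoc, ← map_mul] at h2
      simpa using h2
    apply le_antisymm
    · have := LinearMap.finrank_le_finrank_of_injective (hm e⁻¹ e)
      rwa [inv_mul_cancel, β_one r β hβ] at this
    · have := LinearMap.finrank_le_finrank_of_injective (hm e 1)
      rwa [β_one r β hβ, mul_one] at this
  have hδ : ∀ x, finrank L (jes (cT r) x) ≤ δ := by
    intro x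
    by_cases hx : jes (cT r) x = ⊥
    · rw [hx, finrank_bot]; exact Nat.zero_le _
    · obtain ⟨e, rfl⟩ := weights_subset r β hβ hsc x hx
      exact (hδe e).le
  have hτq : τ ^ (p ^ a) = 1 := by
    rw [← wtPerm_pow, hσq]; rfl
  have k1 := finrank_ker_le Φ τ (jes_map Φ σ hΦT) D p a hp ha hτq δ hδ B (by
      intro b hb
      obtain ⟨e, rfl⟩ := (hB b).1 hb
      rw [hτβ]
      exact (hB _).2 ⟨_, rfl⟩) (fun x hx => (hB x).2 (weights_subset r β hβ hsc x ((D.memF x).1 hx)))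
    Bs (fun x hx h => Finset.mem_filter.2 ⟨hx, h⟩)
  have k2 : B.card * δ ≤ finrank L U ^ 2 := by
    have := D.sum_finrank_le B
    rw [Module.finrank_linearMap, ← sq] at this
    rw [← smul_eq_mul, ← Finset.sum_const]
    refine le_trans (le_of_eq (Finset.sum_congr rfl fun b hb => ?_)) this
    obtain ⟨e, rfl⟩ := (hB b).1 hb
    exact (hδe e).symm
  have k3 := sum_sq_le_centralizer g (p ^ a) (by push_cast; exact pow_ne_zero _ hpL) hgq
    (LinearMap.ker (Φ - 1)) (by
      intro X hX
      rw [LinearMap.mem_ker, LinearMap.sub_apply, hΦ, hX, mul_assoc, hgi, mul_one]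
      simp)
  have k4 : B.card ≤ finrank L U ^ 2 := by
    have := card_B_le r β hβ hE
    rw [Nat.card_coe_set_eq] at this
    refine le_trans (le_of_eq ?_) this
    rw [← Set.ncard_coe_finset]
    simp [B]
  have hBs1 : 1 ≤ Bs.card := by
    rw [Nat.succ_le_iff, Finset.card_pos]
    refine ⟨β 1, Finset.mem_filter.2 ⟨(hB _).2 ⟨1, rfl⟩, ?_⟩⟩
    rw [β_one r β hβ]
    rw [← wtPerm_pow]
    rfl
  have k5 : (finrank L U - d) ^ 2 ≤ (p ^ a - 1) * finrank L (LinearMap.ker (Φ - 1)) :=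
    le_trans (Nat.pow_le_pow_left (by omega) 2) k3
  have h2 : 2 ≤ p ^ a := hp.two_le.trans (Nat.le_self_pow ha.ne' p)
  have key := arithQ B.card Bs.card (finrank L U) d δ (p ^ a) _ h2 hBs1 k1 k2 k5 k4
  -- fibres
  let κ := (Finset.univ.filter (fun e : E => β e = 1)).card
  have hfib : ∀ b ∈ B, (Finset.univ.filter (fun e : E => β e = b)).card = κ := by
    intro b hb
    obtain ⟨e0, rfl⟩ := (hB b).1 hb
    refine Finset.card_bij (fun e _ => e0⁻¹ * e) ?_ ?_ ?_
    · intro e he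
      simp only [Finset.mem_filter, Finset.mem_univ, true_and] at *
      rw [β_mul r β hβ, he, ← β_mul r β hβ]; simp [β_one r β hβ]
    · intro e _ e' _ h; simpa using h
    · intro e he
      simp only [Finset.mem_filter, Finset.mem_univ, true_and] at *
      exact ⟨e0 * e, by rw [β_mul r β hβ, he, mul_one], by simp⟩
  have hcE : Nat.card E = B.card * κ := by
    rw [Nat.card_eq_fintype_card, ← Finset.card_univ,
      Finset.card_eq_sum_card_fiberwise (f := β) (t := B) (fun e _ => (hB _).2 ⟨e, rfl⟩)]
    rw [Finset.sum_congr rfl hfib]; simp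
  have hcs : Nat.card {e : E // β ((σ ^ (p ^ (a - 1))) e) = β e} = Bs.card * κ := by
    rw [Nat.card_eq_fintype_card, Fintype.card_subtype]
    rw [Finset.card_eq_sum_card_fiberwise (f := β) (t := Bs)]
    · rw [Finset.sum_congr rfl (g := fun _ => κ)]
      · simp
      · intro b hb
        rw [← hfib b (Finset.mem_filter.1 hb).1, Finset.filter_filter]
        congr 1
        ext e
        simp only [Finset.mem_filter, Finset.mem_univ, true_and, and_iff_right_iff_imp]
        rintro rfl
        rw [← hτi]
        exact (Finset.mem_filter.1 hb).2
    · intro e he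
      have he : β ((σ ^ (p ^ (a - 1))) e) = β e := by simpa using he
      refine Finset.mem_filter.2 ⟨(hB _).2 ⟨e, rfl⟩, ?_⟩
      rw [hτi, he]
  rw [hcE, hcs, ← mul_assoc]
  exact Nat.mul_le_mul_right _ key

end Q
end FH

namespace FH
open Subgroup
open scoped commutatorElement
set_option linter.unusedSectionVars false

section chief
variable {Γ : Type*} [Group Γ]

/-- `M0/M1` is a chief factor. -/
def Chief (M1 M0 : Subgroup Γ) : Prop :=
  M1.Normal ∧ M0.Normal ∧ M1 < M0 ∧ ∀ M : Subgroup Γ, M.Normal → M1 ≤ M → M ≤ M0 → M = M1 ∨ M = M0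

lemma exists_chief_below [Finite Γ] (B M0 : Subgroup Γ) [hB : B.Normal] [h0 : M0.Normal] (h : B < M0) :
    ∃ M1, B ≤ M1 ∧ Chief M1 M0 := by
  have hfin : {M : Subgroup Γ | M.Normal ∧ B ≤ M ∧ M < M0}.Finite := Set.toFinite _
  obtain ⟨M1, hM1⟩ := hfin.exists_maximal ⟨B, hB, le_rfl, h⟩
  obtain ⟨hn, hle, hlt⟩ := hM1.1
  refine ⟨M1, hle, hn, h0, hlt, fun M hM h1 h2 => ?_⟩
  rcases h2.eq_or_lt with h3 | h3
  · exact Or.inr h3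
  · exact Or.inl (le_antisymm (hM1.2 ⟨hM, hle.trans h1, h3⟩ h1) h1)

lemma NAct [Finite Γ] (B E Y : Subgroup Γ) [B.Normal] [E.Normal] [Y.Normal] (hBE : B ≤ E)
    (h : ∀ M1 M0, Chief M1 M0 → B ≤ M1 → M0 ≤ E → ⁅M0, Y⁆ ≤ M1) : ∃ i, icomm E Y i ≤ B := by
  obtain ⟨i, hi⟩ := exists_stable (fun i => icomm E Y i ⊔ B)
    (fun i j hij => sup_le_sup_right (icomm_antitone E Y hij) _)
  refine ⟨i, ?_⟩
  by_contra hc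
  have hlt : B < icomm E Y i ⊔ B := lt_of_le_of_ne le_sup_right (fun h => hc (h ▸ le_sup_left))
  obtain ⟨M1, hBM, hch⟩ := exists_chief_below B (icomm E Y i ⊔ B) hlt
  have h1 := h M1 _ hch hBM (sup_le (icomm_antitone E Y (Nat.zero_le i)) hBE)
  have h2 : icomm E Y (i + 1) ⊔ B ≤ M1 := by
    refine sup_le ?_ hBM
    rw [icomm_succ]
    exact (Subgroup.commutator_mono le_sup_left le_rfl).trans h1
  rw [hi (i + 1) (Nat.le_succ i)] at h2
  exact absurd hch.2.2.1 (not_lt_of_ge h2)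

lemma exists_abelian_above [Group.IsSolvable Γ] (A D : Subgroup Γ) [A.Normal] [D.Normal] (h : ¬ D ≤ A) :
    ∃ E : Subgroup Γ, E.Normal ∧ A ≤ E ∧ ¬ E ≤ A ∧ E ≤ A ⊔ D ∧ ⁅E, E⁆ ≤ A := by
  classical
  have hex : ∃ i, dser D i ≤ A := by
    obtain ⟨i, hi⟩ := exists_dser_eq_bot D
    exact ⟨i, by rw [hi]; exact bot_le⟩
  obtain ⟨j, hj⟩ : ∃ j, Nat.find hex = j + 1 := by
    refine Nat.exists_eq_succ_of_ne_zero fun h0 => ?_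
    have := Nat.find_spec hex
    rw [h0] at this
    exact h this
  have h1 : ¬ dser D j ≤ A := Nat.find_min hex (by omega)
  have h2 : dser D (j + 1) ≤ A := hj ▸ Nat.find_spec hex
  refine ⟨A ⊔ dser D j, inferInstance, le_sup_left, fun hle => h1 (le_sup_right.trans hle),
    sup_le_sup_left (dser_le D j) _, ?_⟩
  have key : ∀ X : Subgroup Γ, X ≤ A ↔ X.map (QuotientGroup.mk' A) = ⊥ := by
    intro X
    rw [Subgroup.map_eq_bot_iff, QuotientGroup.ker_mk']
  rw [key, Subgroup.map_commutator, Subgroup.map_sup, (key A).1 le_rfl, bot_sup_eq, ← Subgroup.map_commutator, ← key]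
  exact h2

lemma icomm_top_lower (n : ℕ) : icomm (⊤ : Subgroup Γ) ⊤ n = Subgroup.lowerCentralSeries ⊤ n := by
  induction n with
  | zero => rfl
  | succ n ih => rw [icomm_succ, ih]; rfl

lemma icomm_eq_map (E : Subgroup Γ) (n : ℕ) : icomm E E n = ((⊤ : Subgroup E).lowerCentralSeries n).map E.subtype := by
  rw [← icomm_top_lower, map_icomm]
  simp [← MonoidHom.range_eq_map]

lemma nilp_of_icomm (E : Subgroup Γ) (n : ℕ) (h : icomm E E n = ⊥) : Group.IsNilpotent E := by
  rw [Subgroup.nilpotent_iff_lowerCentralSeries]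
  refine ⟨n, ?_⟩
  rw [icomm_eq_map, Subgroup.map_eq_bot_iff, Subgroup.ker_subtype] at h
  exact le_bot_iff.1 h

/-- no nontrivial normal `l`-subgroups -/
def NoNormal (l : ℕ) (Γ : Type*) [Group Γ] : Prop := ∀ P : Subgroup Γ, P.Normal → IsPGroup l P → P = ⊥

lemma not_dvd_card [Finite Γ] (l : ℕ) (hl : l.Prime) (C : Subgroup Γ) [C.Normal]
    (hO : ∀ P : Subgroup Γ, P.Normal → P ≤ C → IsPGroup l P → P = ⊥)
    (hC : Group.IsNilpotent C) : ¬ l ∣ Nat.card C := by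
  intro hd
  have : Fact l.Prime := ⟨hl⟩
  have P : Sylow l C := default
  have hN : (P : Subgroup C).Normal :=
    ((Group.isNilpotent_of_finite_tfae (G := C)).out 0 3 rfl rfl).1 hC l ⟨hl⟩ P
  have hch : (P : Subgroup C).Characteristic := P.characteristic_of_normal hN
  have h1 : ((P : Subgroup C).map C.subtype).Normal := inferInstance
  have h2 := hO _ h1 (Subgroup.map_subtype_le _) (P.isPGroup'.map C.subtype)
  rw [Subgroup.map_eq_bot_iff, Subgroup.ker_subtype, le_bot_iff] at h2
  exact P.ne_bot_of_dvd_card hd h2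

lemma card_ne_zero [Finite Γ] (l : ℕ) (hl : l.Prime) (L : Type*) [Field L] [CharP L l]
    (hO : NoNormal l Γ) (C : Subgroup Γ) [C.Normal] (n : ℕ) (h : icomm C C n = ⊥) :
    (Nat.card C : L) ≠ 0 := by
  rw [Ne, CharP.cast_eq_zero_iff L l]
  exact not_dvd_card l hl C (fun P hP _ h => hO P hP h) (nilp_of_icomm C n h)
end chief

section chain
variable {G : Type*} [Group G] {G' : Type*} [Group G']

/-- descending chains with nilpotent factors -/
def Ch (B : Subgroup G) : Subgroup G → ℕ → Prop
  | A, 0 => A ≤ B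
  | A, k + 1 => ∃ C : Subgroup G, C.Normal ∧ C ≤ A ∧ (∃ n, icomm A A n ≤ C) ∧ Ch B C k

lemma Ch_mono {B : Subgroup G} (k : ℕ) : ∀ {A A' : Subgroup G}, A'.Normal → A' ≤ A → Ch B A k → Ch B A' k := by
  induction k with
  | zero => intro A A' _ h h1; exact h.trans h1
  | succ k ih =>
    rintro A A' hA' h ⟨C, hC, hCA, ⟨n, hn⟩, h1⟩
    refine ⟨C ⊓ A', inferInstance, inf_le_right, ⟨n, le_inf ((icomm_mono h h n).trans hn) ?_⟩,
      ih inferInstance inf_le_left h1⟩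
    exact icomm_antitone A' A' (Nat.zero_le n)

lemma Ch_trans {B C : Subgroup G} (k l : ℕ) : ∀ {A : Subgroup G}, A.Normal → Ch B A k → Ch C B l → Ch C A (l + k) := by
  induction k with
  | zero => intro A hA h h1; exact Ch_mono l hA h h1
  | succ k ih =>
    rintro A hA ⟨D, hD, hDA, hn, h2⟩ h1
    exact ⟨D, hD, hDA, hn, ih hD h2 h1⟩

lemma Ch_pad {B : Subgroup G} (k l : ℕ) {A : Subgroup G} (hA : A.Normal) (hkl : k ≤ l) (h : Ch B A k) : Ch B A l := by
  induction l, hkl using Nat.le_induction with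
  | base => exact h
  | succ l _ ih => exact ⟨A, hA, le_rfl, ⟨0, le_rfl⟩, ih⟩

lemma Ch_comap (f : G →* G') {B : Subgroup G'} (k : ℕ) :
    ∀ {A : Subgroup G'}, Ch B A k → Ch (B.comap f) (A.comap f) k := by
  induction k with
  | zero => intro A h; exact Subgroup.comap_mono h
  | succ k ih =>
    rintro A ⟨C, hC, hCA, ⟨n, hn⟩, h1⟩
    refine ⟨C.comap f, inferInstance, Subgroup.comap_mono hCA, ⟨n, ?_⟩, ih h1⟩
    rw [← Subgroup.map_le_iff_le_comap, map_icomm]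
    exact (icomm_mono (Subgroup.map_comap_le _ _) (Subgroup.map_comap_le _ _) n).trans hn

lemma Ch_step {A C : Subgroup G} [C.Normal] (hCA : C ≤ A) (n : ℕ) (hn : icomm A A n ≤ C) : Ch C A 1 :=
  ⟨C, ‹_›, hCA, ⟨n, hn⟩, le_rfl⟩

lemma Ch_dser (A : Subgroup G) [A.Normal] (k : ℕ) : Ch (dser A k) A k := by
  induction k with
  | zero => exact le_rfl
  | succ k ih =>
    have := Ch_trans k 1 inferInstance ih (Ch_step (dser_succ_le A k) 1 le_rfl)
    rwa [Nat.add_comm 1 k] at this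

lemma Ch_resid [Finite G] (A : Subgroup G) [A.Normal] : Ch (resid A) A 1 := by
  obtain ⟨i, hi⟩ := exists_resid_eq A
  exact Ch_step (resid_le A) i hi.ge

lemma nilp_quot (A C : Subgroup G) (n : ℕ) (h : icomm A A n ≤ C) (hn : (C.subgroupOf A).Normal) :
    Group.IsNilpotent (A ⧸ C.subgroupOf A) := by
  rw [Subgroup.nilpotent_iff_lowerCentralSeries]
  refine ⟨n, ?_⟩
  have hs : Function.Surjective (QuotientGroup.mk' (C.subgroupOf A)) := QuotientGroup.mk'_surjective _
  rw [← icomm_top_lower, ← Subgroup.map_top_of_surjective _ hs, ← map_icomm, Subgroup.map_eq_bot_iff,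
    QuotientGroup.ker_mk', icomm_top_lower]
  rw [icomm_eq_map, Subgroup.map_le_iff_le_comap] at h
  exact h

lemma Ch_fitting_aux (k : ℕ) : ∀ {A : Subgroup G}, A.Normal → Ch ⊥ A k →
    ∃ H : ℕ → Subgroup G, H 0 = ⊥ ∧ H k = A ∧ (∀ i, (H i).Normal) ∧ (∀ i, H i ≤ H (i + 1)) ∧
    ∀ i < k, ∃ n, icomm (H (i + 1)) (H (i + 1)) n ≤ H i := by
  induction k with
  | zero =>
    intro A hA h
    exact ⟨fun _ => ⊥, rfl, (le_bot_iff.1 h).symm, fun _ => inferInstance, fun _ => le_rfl, by omega⟩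
  | succ k ih =>
    rintro A hA ⟨C, hC, hCA, hn, h1⟩
    obtain ⟨H, h0, hk, hnor, hle, hnil⟩ := ih hC h1
    refine ⟨fun i => if i ≤ k then H i else A, by simp [h0], by simp, ?_, ?_, ?_⟩
    · intro i; dsimp only; split_ifs
      · exact hnor i
      · exact hA
    · intro i; dsimp only; split_ifs with h2 h3 h3
      · exact hle i
      · have : i = k := by omega
        rw [this, hk]; exact hCA
      · omega
      · exact le_rfl
    · intro i hi
      dsimp only
      by_cases h2 : i + 1 ≤ k
      · rw [if_pos h2, if_pos (by omega)]
        exact hnil i (by omega)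
      · have : i = k := by omega
        subst this
        rw [if_neg h2, if_pos le_rfl, hk]
        exact hn

lemma Ch_fitting (k : ℕ) (h : Ch (⊥ : Subgroup G) ⊤ k) : FittingHeightLE G k := by
  obtain ⟨H, h0, hk, hnor, hle, hnil⟩ := Ch_fitting_aux k inferInstance h
  refine ⟨H, h0, hk, hnor, hle, fun i hi hn => ?_⟩
  obtain ⟨n, hn'⟩ := hnil i hi
  exact nilp_quot _ _ n hn' hn
end chain
end FH

namespace FH
open Subgroup Module
open scoped commutatorElement
set_option linter.unusedSectionVars false

instance wtMonoid {Γ : Type*} [Group Γ] (C : Subgroup Γ) (L : Type*) [Field L] : CommMonoid (Wt C L) :=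
  inferInstanceAs (CommMonoid (C → L))

section E0
variable {Γ : Type*} [Group Γ] 

/-- `E` is nilpotent of class two over the central subgroup `A` -/
structure CE (A E : Subgroup Γ) : Prop where
  le : A ≤ E
  cen : ∀ a ∈ A, ∀ e ∈ E, e * a * e⁻¹ = a
  comm : ⁅E, E⁆ ≤ A

variable {A E : Subgroup Γ} (h : CE A E)
include h

lemma CE.br {e f : Γ} (he : e ∈ E) (hf : f ∈ E) : ⁅f, e⁆ ∈ A := h.comm (commutator_mem_commutator hf he)

lemma CE.br_mul {e e' f : Γ} (he : e ∈ E) (he' : e' ∈ E) (hf : f ∈ E) : ⁅f, e * e'⁆ = ⁅f, e⁆ * ⁅f, e'⁆ := by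
  have : ⁅f, e * e'⁆ = ⁅f, e⁆ * (e * ⁅f, e'⁆ * e⁻¹) := by simp only [commutatorElement_def]; group
  rw [this, h.cen _ (h.br he' hf) e he]

lemma CE.br_inv {e f : Γ} (he : e ∈ E) (hf : f ∈ E) : ⁅f, e⁻¹⁆ = ⁅f, e⁆⁻¹ := by
  have := h.br_mul he (E.inv_mem he) hf
  rw [mul_inv_cancel, commutatorElement_one_right] at this
  exact (inv_eq_of_mul_eq_one_right this.symm).symm

lemma CE.icomm_bot : icomm E E 2 = ⊥ := by
  rw [eq_bot_iff, icomm_succ, Subgroup.commutator_le]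
  intro a ha e he
  rw [Subgroup.mem_bot, commutatorElement_eq_one_iff_mul_comm]
  have := h.cen a (h.comm ha) e he
  rw [mul_inv_eq_iff_eq_mul] at this
  exact this.symm

/-- elements of `E` commuting with `E` modulo `R` -/
def e0 (R : Subgroup Γ) : Subgroup Γ where
  carrier := {e | e ∈ E ∧ ∀ f ∈ E, ⁅f, e⁆ ∈ R}
  one_mem' := ⟨E.one_mem, fun f _ => by rw [commutatorElement_one_right]; exact R.one_mem⟩
  mul_mem' := by
    rintro a b ⟨ha, ha'⟩ ⟨hb, hb'⟩
    exact ⟨E.mul_mem ha hb, fun f hf => by rw [h.br_mul ha hb hf]; exact R.mul_mem (ha' f hf) (hb' f hf)⟩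
  inv_mem' := by
    rintro a ⟨ha, ha'⟩
    exact ⟨E.inv_mem ha, fun f hf => by rw [h.br_inv ha hf]; exact R.inv_mem (ha' f hf)⟩

omit h in
lemma mem_e0 (h : CE A E) (R : Subgroup Γ) (e : Γ) : e ∈ e0 h R ↔ e ∈ E ∧ ∀ f ∈ E, ⁅f, e⁆ ∈ R := Iff.rfl

lemma le_e0 (R : Subgroup Γ) : A ≤ e0 h R := by
  intro a ha
  refine ⟨h.le ha, fun f hf => ?_⟩
  have := h.cen a ha f hf
  rw [commutatorElement_def, this, mul_inv_cancel]
  exact R.one_mem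

variable [hA : A.Normal] [hE : E.Normal] {L : Type*} [Field L] {M : Type*} [AddCommGroup M] [Module L M]
variable (ρ : Γ →* Module.End L M)

omit h in
/-- pointwise stabiliser -/
def pst (U : Submodule L M) : Subgroup Γ where
  carrier := {x | ∀ v ∈ U, ρ x v = v}
  one_mem' := by intro v _; simp
  mul_mem' := by
    intro a b ha hb v hv
    rw [map_mul, Module.End.mul_apply, hb v hv, ha v hv]
  inv_mem' := by
    intro a ha v hv
    have : ρ a⁻¹ (ρ a v) = v := by rw [← Module.End.mul_apply, ← map_mul]; simp
    rwa [ha v hv] at this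

omit h hA hE in
lemma mem_pst (U : Submodule L M) (x : Γ) : x ∈ pst ρ U ↔ ∀ v ∈ U, ρ x v = v := Iff.rfl

omit h hA hE in
lemma ρ_inv_apply (x : Γ) (v : M) : ρ x⁻¹ (ρ x v) = v := by
  rw [← Module.End.mul_apply, ← map_mul]; simp

omit h hA hE in
lemma ρ_apply_inv (x : Γ) (v : M) : ρ x (ρ x⁻¹ v) = v := by
  rw [← Module.End.mul_apply, ← map_mul]; simp

omit h in
lemma conj_mem_pst (U : Submodule L M) (x n : Γ) (hn : ∀ v ∈ U, ρ n⁻¹ v ∈ U) (hx : x ∈ pst ρ U) :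
    n * x * n⁻¹ ∈ pst ρ U := by
  intro v hv
  rw [map_mul, map_mul, Module.End.mul_apply, Module.End.mul_apply, hx _ (hn v hv), ρ_apply_inv]

/-- `E0(χ)` -/
def E0 (χ : Wt A L) : Subgroup Γ := e0 h (pst ρ (wsp ρ A χ))

omit h in
lemma smul_inv_eq {x : Γ} {χ : Wt A L} (hx : x • χ = χ) : x⁻¹ • χ = χ := by
  rw [inv_smul_eq_iff, hx]

omit h in
lemma wsp_inv {x : Γ} {χ : Wt A L} (hx : x • χ = χ) (v : M) (hv : v ∈ wsp ρ A χ) : ρ x v ∈ wsp ρ A χ := by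
  have := wsp_smul ρ A x χ v hv
  rwa [hx] at this

lemma conj_mem_E0 (χ : Wt A L) {x e : Γ} (hx : x • χ = χ) (he : e ∈ E0 h ρ χ) : x * e * x⁻¹ ∈ E0 h ρ χ := by
  refine ⟨hE.conj_mem e he.1 x, fun f hf => ?_⟩
  have : ⁅f, x * e * x⁻¹⁆ = x * ⁅x⁻¹ * f * x, e⁆ * x⁻¹ := by simp only [commutatorElement_def]; group
  rw [this]
  refine conj_mem_pst ρ _ _ _ (fun v hv => wsp_inv ρ (smul_inv_eq hx) v hv) (he.2 _ ?_)
  simpa using hE.conj_mem f hf x⁻¹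

omit h in
lemma fix_of_centralises {x : Γ} (hx : ∀ a ∈ A, x * a = a * x) (χ : Wt A L) : x • χ = χ := by
  funext a
  rw [wt_smul_apply]
  congr 1
  ext
  have := hx a a.2
  simp only
  rw [mul_assoc, ← this, inv_mul_cancel_left]

lemma fix_of_E {e : Γ} (he : e ∈ E) (χ : Wt A L) : e • χ = χ := by
  refine fix_of_centralises (fun a ha => ?_) χ
  have := h.cen a ha e he
  rwa [mul_inv_eq_iff_eq_mul] at this

/-- `β` -/
def bt (χ : Wt A L) (e : E) : Wt E L := fun f => χ ⟨⁅(f : Γ)⁻¹, (e : Γ)⁆, h.br e.2 (E.inv_mem f.2)⟩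

lemma smul_bt {x : Γ} {χ : Wt A L} (hx : x • χ = χ) (e : E) : x • bt h χ e = bt h χ (cperm E x e) := by
  funext f
  rw [wt_smul_apply]
  unfold bt
  have := congrFun hx ⟨⁅(f : Γ)⁻¹, ((cperm E x e : E) : Γ)⁆, h.br (cperm E x e).2 (E.inv_mem f.2)⟩
  rw [wt_smul_apply] at this
  rw [← this]
  congr 1
  ext
  simp only [cperm_apply, commutatorElement_def]
  group

lemma mem_E0_iff (χ : Wt A L) (hχ : wsp ρ A χ ≠ ⊥) (e : E) : (e : Γ) ∈ E0 h ρ χ ↔ bt h χ e = 1 := by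
  obtain ⟨v0, hv0, hv00⟩ := (Submodule.ne_bot_iff _).1 hχ
  have key : ∀ a : A, (a : Γ) ∈ pst ρ (wsp ρ A χ) ↔ χ a = 1 := by
    intro a
    constructor
    · intro ha
      have h1 := ha v0 hv0
      rw [(mem_wsp ρ).1 hv0 a] at h1
      have : (χ a - 1) • v0 = 0 := by rw [sub_smul, h1, one_smul, sub_self]
      exact sub_eq_zero.1 ((smul_eq_zero.1 this).resolve_right hv00)
    · intro ha v hv
      rw [(mem_wsp ρ).1 hv a, ha, one_smul]
  constructor
  · intro he
    funext f
    exact (key ⟨_, h.br e.2 (E.inv_mem f.2)⟩).1 (he.2 _ (E.inv_mem f.2))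
  · intro he
    refine ⟨e.2, fun f hf => ?_⟩
    have := congrFun he ⟨f⁻¹, E.inv_mem hf⟩
    have h2 := (key ⟨_, h.br e.2 (E.inv_mem (E.inv_mem hf))⟩).2 this
    simpa using h2

omit h hA in
/-- restricted representation -/
def rr (E : Subgroup Γ) (U : Submodule L M) (hU : ∀ e ∈ E, ∀ v ∈ U, ρ e v ∈ U) : E →* Module.End L U where
  toFun e := (ρ e).restrict (hU e e.2)
  map_one' := by ext v; simp
  map_mul' a b := by ext v; simp

omit h hA hE in
lemma rr_apply (E : Subgroup Γ) (U : Submodule L M) (hU : ∀ e ∈ E, ∀ v ∈ U, ρ e v ∈ U) (e : E) (v : U) :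
    ((rr ρ E U hU e v : U) : M) = ρ e v := rfl

lemma hbt (χ : Wt A L) (U : Submodule L M) (hUχ : U ≤ wsp ρ A χ) (hU : ∀ e ∈ E, ∀ v ∈ U, ρ e v ∈ U) (e f : E) :
    rr ρ E U hU (f⁻¹ * e * f) = bt h χ e f • rr ρ E U hU e := by
  ext v
  rw [LinearMap.smul_apply, Submodule.coe_smul, rr_apply, rr_apply]
  have h1 : ((f⁻¹ * e * f : E) : Γ) = ⁅(f : Γ)⁻¹, (e : Γ)⁆ * e := by
    simp [commutatorElement_def]
  rw [h1, map_mul, Module.End.mul_apply]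
  exact (mem_wsp ρ).1 (hUχ (hU e e.2 v v.2)) ⟨_, h.br e.2 (E.inv_mem f.2)⟩

lemma bt_mul (χ : Wt A L) (hχ : wsp ρ A χ ≠ ⊥) (e e' : E) : bt h χ (e * e') = bt h χ e * bt h χ e' := by
  have : Nontrivial (wsp ρ A χ) := Submodule.nontrivial_iff_ne_bot.2 hχ
  exact β_mul (rr ρ E _ (fun e he v hv => wsp_inv ρ (fix_of_E h he χ) v hv)) (bt h χ)
    (hbt h ρ χ _ le_rfl (fun e he v hv => wsp_inv ρ (fix_of_E h he χ) v hv)) e e'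

lemma bt_eq_iff (χ : Wt A L) (hχ : wsp ρ A χ ≠ ⊥) (e e' : E) :
    bt h χ e = bt h χ e' ↔ (e : Γ) * (e' : Γ)⁻¹ ∈ E0 h ρ χ := by
  have h1 := mem_E0_iff h ρ χ hχ (e * e'⁻¹)
  have h2 := bt_mul h ρ χ hχ (e * e'⁻¹) e'
  rw [inv_mul_cancel_right] at h2
  constructor
  · intro h3
    refine h1.2 ?_
    have h4 := bt_mul h ρ χ hχ e e'⁻¹
    have h5 := bt_mul h ρ χ hχ e' e'⁻¹
    rw [h3, ← h5, mul_inv_cancel] at h4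
    rw [h4]
    exact (mem_E0_iff h ρ χ hχ 1).1 (by simp)
  · intro h3
    rw [h2, h1.1 h3, one_mul]

lemma comm_le_E0 (χ : Wt A L) (hχ : wsp ρ A χ ≠ ⊥) (D : Subgroup Γ) (hD : ∀ x ∈ D, x • χ = χ)
    (hfix : ∀ x ∈ D, ∀ e, x • bt h χ e = bt h χ e) : ⁅E, D⁆ ≤ E0 h ρ χ := by
  rw [Subgroup.commutator_comm, Subgroup.commutator_le]
  intro x hx e he
  have := hfix x hx ⟨e, he⟩
  rw [smul_bt h (hD x hx), bt_eq_iff h ρ χ hχ, cperm_apply] at this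
  exact this

lemma inter_E0 (hρ : Function.Injective ρ) (D : Gr (wsp ρ A)) (e : Γ) (he : ∀ χ ∈ D.F, e ∈ E0 h ρ χ) (heE : e ∈ E) :
    e ∈ E ⊓ centralizer (E : Set Γ) := by
  refine Subgroup.mem_inf.2 ⟨heE, ?_⟩
  rw [mem_centralizer_iff]
  intro f hf
  rw [← commutatorElement_eq_one_iff_mul_comm]
  apply hρ
  ext v
  rw [← D.sum v, map_sum, map_sum]
  refine Finset.sum_congr rfl fun χ hχ => ?_
  rw [map_one, Module.End.one_apply]
  exact (he χ hχ).2 f hf _ (D.mem χ v)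

/-- b2 -/
lemma b2 [Finite Γ] [Group.IsSolvable Γ] [IsAlgClosed L] [FiniteDimensional L M] (χ : Wt A L) (hχ : wsp ρ A χ ≠ ⊥)
    (hEL : (Nat.card E : L) ≠ 0) (d : ℕ) (hd : finrank L (wsp ρ A χ) ≤ d) (K : Subgroup Γ)
    (hK : ∀ x ∈ K, x • χ = χ) : ∀ x ∈ dser K ((d ^ 2).factorial), ∀ e, x • bt h χ e = bt h χ e := by
  intro x hx e
  have : Nontrivial (wsp ρ A χ) := Submodule.nontrivial_iff_ne_bot.2 hχ
  have h1 := card_B_le (rr ρ E _ (fun e he v hv => wsp_inv ρ (fix_of_E h he χ) v hv)) (bt h χ)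
    (hbt h ρ χ _ le_rfl (fun e he v hv => wsp_inv ρ (fix_of_E h he χ) v hv)) hEL
  refine smallOrb K (Set.range (bt h χ)) (Set.finite_range _) (d ^ 2) ?_ ?_ x hx _ ⟨e, rfl⟩
  · rw [← Nat.card_coe_set_eq]
    exact h1.trans (Nat.pow_le_pow_left hd 2)
  · rintro k hk _ ⟨e, rfl⟩
    exact ⟨_, (smul_bt h (hK k hk) e).symm⟩
end E0

section rk
variable {Γ : Type*} [Group Γ] {L : Type*} [Field L] {M : Type*} [AddCommGroup M] [Module L M]
  [FiniteDimensional L M] (ρ : Γ →* Module.End L M)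

/-- rank of `x - 1` -/
noncomputable def rk (x : Γ) : ℕ := finrank L (LinearMap.range (ρ x - 1))

lemma rk_mul (x y : Γ) : rk ρ (x * y) ≤ rk ρ x + rk ρ y := by
  have h1 : LinearMap.range (ρ (x * y) - 1) ≤
      LinearMap.range (ρ x - 1) ⊔ (LinearMap.range (ρ y - 1)).map (ρ x) := by
    rintro _ ⟨v, rfl⟩
    have : (ρ (x * y) - 1) v = (ρ x - 1) v + ρ x ((ρ y - 1) v) := by
      simp
    rw [this]
    exact Submodule.add_mem_sup ⟨v, rfl⟩ ⟨_, ⟨v, rfl⟩, rfl⟩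
  refine (Submodule.finrank_mono h1).trans ((Submodule.finrank_add_le_finrank_add_finrank _ _).trans ?_)
  exact Nat.add_le_add_left (Submodule.finrank_map_le _ _) _

lemma rk_inv (x : Γ) : rk ρ x⁻¹ ≤ rk ρ x := by
  have h1 : LinearMap.range (ρ x⁻¹ - 1) ≤ (LinearMap.range (ρ x - 1)).map (ρ x⁻¹) := by
    rintro _ ⟨v, rfl⟩
    refine ⟨(ρ x - 1) (-v), ⟨_, rfl⟩, ?_⟩
    simp; abel
  exact (Submodule.finrank_mono h1).trans (Submodule.finrank_map_le _ _)

lemma rk_conj (x y : Γ) : rk ρ (y * x * y⁻¹) ≤ rk ρ x := by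
  have h1 : LinearMap.range (ρ (y * x * y⁻¹) - 1) ≤ (LinearMap.range (ρ x - 1)).map (ρ y) := by
    rintro _ ⟨v, rfl⟩
    refine ⟨(ρ x - 1) (ρ y⁻¹ v), ⟨_, rfl⟩, ?_⟩
    simp
  exact (Submodule.finrank_mono h1).trans (Submodule.finrank_map_le _ _)
end rk

section T2L
variable {Γ : Type*} [Group Γ] [Finite Γ] [Group.IsSolvable Γ] {L : Type*} [Field L] [IsAlgClosed L]
  {M : Type*} [AddCommGroup M] [Module L M] [FiniteDimensional L M] (ρ : Γ →* Module.End L M)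

/-- centre of a normal subgroup -/
def zc (D : Subgroup Γ) : Subgroup Γ := D ⊓ centralizer (D : Set Γ)

instance zc_normal (D : Subgroup Γ) [D.Normal] : (zc D).Normal := by
  unfold zc; infer_instance

lemma mem_zc (D : Subgroup Γ) (x : Γ) : x ∈ zc D ↔ x ∈ D ∧ ∀ y ∈ D, y * x = x * y := by
  unfold zc
  rw [Subgroup.mem_inf, mem_centralizer_iff]; rfl

lemma zc_comm (D : Subgroup Γ) : ∀ a ∈ zc D, ∀ b ∈ zc D, a * b = b * a := by
  intro a ha b hb
  rw [mem_zc] at ha hb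
  exact hb.2 a ha.1

lemma icomm_of_comm (C : Subgroup Γ) (hc : ∀ a ∈ C, ∀ b ∈ C, a * b = b * a) : icomm C C 1 = ⊥ := by
  rw [eq_bot_iff, icomm_succ, icomm_zero, Subgroup.commutator_le]
  intro a ha b hb
  rw [Subgroup.mem_bot, commutatorElement_eq_one_iff_mul_comm]
  exact hc a ha b hb

/-- choose `E` above the centre of `D` -/
lemma exists_CE (D : Subgroup Γ) [D.Normal] (h : ¬ D ≤ zc D) :
    ∃ E : Subgroup Γ, E.Normal ∧ E ≤ D ∧ ¬ E ≤ zc D ∧ CE (zc D) E := by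
  obtain ⟨E, hEn, hAE, hEA, hED, hEE⟩ := exists_abelian_above (zc D) D h
  have hED : E ≤ D := hED.trans (sup_le (inf_le_left) le_rfl)
  refine ⟨E, hEn, hED, hEA, hAE, ?_, hEE⟩
  intro a ha e he
  rw [mem_zc] at ha
  rw [ha.2 e (hED he), mul_inv_cancel_right]

/-- bound for type 2 -/
def ka (q c : ℕ) : ℕ := (2 * (q * c) + 1).factorial
def kT2 (q c : ℕ) : ℕ := ka q c + ((4 * c) ^ 2).factorial + 2

lemma T2_stepA (hρ : Function.Injective ρ) (l : ℕ) (hl : l.Prime) [CharP L l] (hO : NoNormal l Γ) (S : Set Γ)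
    (hS : closure S = ⊤) (q c : ℕ) (hq : 0 < q) (hsq : ∀ s ∈ S, s ^ q = 1) (hc : ∀ s ∈ S, rk ρ s ≤ c) 
    (C : Subgroup Γ) [C.Normal] (hC : ∀ a ∈ C, ∀ b ∈ C, a * b = b * a) :
    ∀ x ∈ dser (⊤ : Subgroup Γ) (ka q c), ∀ a ∈ C, x * a = a * x := by
  obtain ⟨D⟩ := wsp_Gr ρ C hC (card_ne_zero l hl L hO C 1 (icomm_of_comm C hC))
  rw [← hS]
  refine stepA ρ hρ C D S (q * c) ?_
  intro s hs X hX
  refine (card_moved_le2 (ρ s) (wτ C L s) (fun χ v hv => wsp_smul ρ C s χ v hv) D q hq ?_ X hX).trans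
    (Nat.mul_le_mul_left _ (hc s hs))
  rw [wτ_pow, hsq s hs, wτ_one]

lemma T2_key (l : ℕ) (hl : l.Prime) [CharP L l] (hO : NoNormal l Γ) (S : Set Γ)
    (hS : closure S = ⊤) (c : ℕ) (hc : ∀ s ∈ S, rk ρ s ≤ c) (K A E : Subgroup Γ) [A.Normal] [E.Normal] (h : CE A E)
    (DA : Gr (wsp ρ A))
    (hK : ∀ x ∈ K, ∀ a ∈ A, x * a = a * x) (χ : Wt A L) (hχ : wsp ρ A χ ≠ ⊥) :
    ∀ x ∈ dser K (((4 * c) ^ 2).factorial), ∀ e, x • bt h χ e = bt h χ e := by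
  by_cases hall : ∀ s ∈ S, s • χ = χ ∧ ∀ e, s • bt h χ e = bt h χ e
  · intro x _ e
    have : closure S ≤ MulAction.stabilizer Γ (bt h χ e) := by
      rw [closure_le]
      intro s hs
      exact (hall s hs).2 e
    exact this (hS ▸ mem_top x)
  · refine b2 h ρ χ hχ (card_ne_zero l hl L hO E 2 h.icomm_bot) (4 * c) ?_ K
      (fun x hx => fix_of_centralises (hK x hx) χ)
    push Not at hall
    obtain ⟨s, hs, hs2⟩ := hall
    by_cases hsχ : s • χ = χ
    · obtain ⟨e, he⟩ := hs2 hsχ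
      rw [smul_bt h hsχ, Ne, bt_eq_iff h ρ χ hχ] at he
      set y : E := cperm E s e * e⁻¹ with hy
      have hyv : (y : Γ) = s * (e * s⁻¹ * (e : Γ)⁻¹) := by
        rw [hy]; push_cast; rw [cperm_apply]; group
      have hy1 : (y : Γ) ∉ E0 h ρ χ := by
        rw [hy]; push_cast; exact he
      rw [mem_E0_iff h ρ χ hχ] at hy1
      obtain ⟨f, hf⟩ := Function.ne_iff.1 hy1
      set a : A := ⟨⁅(f : Γ)⁻¹, (y : Γ)⁆, h.br y.2 (E.inv_mem f.2)⟩ with ha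
      have hf : χ a ≠ 1 := hf
      have hle : wsp ρ A χ ≤ LinearMap.range (ρ (a : Γ) - 1) := by
        intro v hv
        refine ⟨(χ a - 1)⁻¹ • v, ?_⟩
        rw [map_smul, LinearMap.sub_apply, (mem_wsp ρ).1 hv a, Module.End.one_apply]
        nth_rewrite 2 [← one_smul L v]
        rw [← sub_smul, smul_smul, inv_mul_cancel₀ (sub_ne_zero.2 hf), one_smul]
      refine (Submodule.finrank_mono hle).trans ?_
      change rk ρ (a : Γ) ≤ _
      have hs1 := hc s hs
      have h1 : rk ρ (y : Γ) ≤ 2 * c := by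
        rw [hyv]
        have := rk_mul ρ s (e * s⁻¹ * (e : Γ)⁻¹)
        have := rk_conj ρ s⁻¹ (e : Γ)
        have := rk_inv ρ s
        omega
      have h2 : (a : Γ) = (f : Γ)⁻¹ * y * ((f : Γ)⁻¹)⁻¹ * (y : Γ)⁻¹ := by
        rw [ha]; simp [commutatorElement_def]
      rw [h2]
      have := rk_mul ρ ((f : Γ)⁻¹ * y * ((f : Γ)⁻¹)⁻¹) (y : Γ)⁻¹
      have := rk_conj ρ (y : Γ) ((f : Γ)⁻¹)
      have := rk_inv ρ (y : Γ)
      omega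
    · have := finrank_le_of_moved (ρ s) (wτ A L s) (fun χ v hv => wsp_smul ρ A s χ v hv) DA χ hsχ
      have h2 := hc s hs
      unfold rk at h2
      omega

theorem T2L (hρ : Function.Injective ρ) (l : ℕ) (hl : l.Prime) [CharP L l] (hO : NoNormal l Γ) (S : Set Γ)
    (hS : closure S = ⊤) (q c : ℕ) (hq : 0 < q) (hsq : ∀ s ∈ S, s ^ q = 1) (hc : ∀ s ∈ S, rk ρ s ≤ c) :
    dser (⊤ : Subgroup Γ) (kT2 q c) = ⊥ := by
  set K := dser (⊤ : Subgroup Γ) (ka q c) with hK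
  set D2 := dser (⊤ : Subgroup Γ) (ka q c + ((4 * c) ^ 2).factorial) with hD2
  have hD2K : D2 = dser K (((4 * c) ^ 2).factorial) := dser_add _ _ _
  have hstep := fun (C : Subgroup Γ) (hC : C.Normal) => T2_stepA ρ hρ l hl hO S hS q c hq hsq hc C
  set D := ⁅D2, D2⁆ with hD
  by_cases hDz : D ≤ zc D
  · have : dser (⊤ : Subgroup Γ) (kT2 q c) = icomm D D 1 := rfl
    rw [this]
    exact icomm_of_comm D fun a ha b hb => ((mem_zc D b).1 (hDz hb)).2 a ha
  exfalso
  obtain ⟨E, hEn, hED, hEA, h⟩ := exists_CE D hDz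
  have hAc := zc_comm D
  obtain ⟨DA⟩ := wsp_Gr ρ (zc D) hAc (card_ne_zero l hl L hO (zc D) 1 (icomm_of_comm _ hAc))
  have hKA := hstep (zc D) inferInstance hAc
  have h1 : ⁅E, D2⁆ ≤ zc E := by
    intro x hx
    refine inter_E0 h ρ hρ DA x (fun χ hχ => ?_) (commutator_le_left _ _ hx)
    have hχ := (DA.memF χ).1 hχ
    have h3 := T2_key ρ l hl hO S hS c hc K (zc D) E h DA hKA χ hχ
    refine comm_le_E0 h ρ χ hχ D2 (fun y hy => fix_of_centralises (hKA y ?_) χ) (hD2K ▸ h3) hx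
    exact dser_le K _ (hD2K ▸ hy)
  have hKZ := hstep (zc E) inferInstance (zc_comm E)
  have h2 : ⁅⁅E, D2⁆, D2⁆ ≤ ⊥ := by
    rw [Subgroup.commutator_le]
    intro a ha b hb
    rw [Subgroup.mem_bot, commutatorElement_eq_one_iff_mul_comm]
    exact (hKZ b (dser_le K _ (hD2K ▸ hb)) a (h1 ha)).symm
  have h3 : ⁅⁅D2, D2⁆, E⁆ ≤ ⊥ := by
    refine three_subgroups D2 D2 E ⊥ ?_ h2
    rwa [Subgroup.commutator_comm D2 E]
  apply hEA
  intro e he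
  rw [mem_zc]
  refine ⟨hED he, fun y hy => ?_⟩
  rw [← commutatorElement_eq_one_iff_mul_comm]
  exact h3 (commutator_mem_commutator hy he)
end T2L
end FH

namespace FH
open Subgroup Module TensorProduct
open scoped commutatorElement
set_option linter.unusedSectionVars false

section bc
variable {K : Type*} [Field K] {L : Type*} [Field L] [Algebra K L] {V : Type*} [AddCommGroup V] [Module K V]
  [FiniteDimensional K V]

lemma finrank_range_bc (f : V →ₗ[K] V) :
    finrank L (LinearMap.range (f.baseChange L)) = finrank K (LinearMap.range f) := by
  have h1 : f.baseChange L = ((LinearMap.range f).subtype.baseChange L) ∘ₗ (f.rangeRestrict.baseChange L) := by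
    rw [← LinearMap.baseChange_comp]; rfl
  have hs : Function.Surjective (f.rangeRestrict.baseChange L) := by
    rw [LinearMap.baseChange_eq_ltensor]
    exact LinearMap.lTensor_surjective L f.surjective_rangeRestrict
  have hi : Function.Injective ((LinearMap.range f).subtype.baseChange L) := by
    rw [LinearMap.baseChange_eq_ltensor]
    exact Module.Flat.lTensor_preserves_injective_linearMap _ (Submodule.injective_subtype _)
  rw [h1, LinearMap.range_comp, LinearMap.range_eq_top.2 hs, Submodule.map_top,
    LinearMap.finrank_range_of_inj hi, Module.finrank_baseChange]

lemma finrank_ker_bc (f : V →ₗ[K] V) :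
    finrank L (LinearMap.ker (f.baseChange L)) = finrank K (LinearMap.ker f) := by
  have h1 := LinearMap.finrank_range_add_finrank_ker f
  have h2 := LinearMap.finrank_range_add_finrank_ker (f.baseChange L)
  rw [finrank_range_bc, Module.finrank_baseChange] at h2
  omega
end bc

section minnormal
variable {Γ : Type*} [Group Γ] (W : Subgroup Γ) [W.Normal]

/-- a commutative subgroup, additively -/
def Vw : Type _ := Additive W

def toV : W ≃ Vw W := Additive.ofMul

@[reducible] def vAdd (hc : ∀ a ∈ W, ∀ b ∈ W, a * b = b * a) : AddCommGroup (Vw W) :=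
  { (inferInstanceAs (AddGroup (Additive W)) : AddGroup (Vw W)) with
    add_comm := fun a b => by
      apply (toV W).symm.injective
      apply Subtype.ext
      exact hc _ ((toV W).symm a).2 _ ((toV W).symm b).2 }

/-- conjugation action on the additive version of `W` -/
def vConj [AddCommGroup (Vw W)] (hadd : ∀ a b : W, toV W a + toV W b = toV W (a * b))
    (x : Γ) : Vw W →+ Vw W :=
  AddMonoidHom.mk' (fun v => toV W (MulAut.conjNormal x ((toV W).symm v))) (by
    intro a b
    rw [hadd, ← map_mul]
    have := hadd ((toV W).symm a) ((toV W).symm b)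
    rw [Equiv.apply_symm_apply, Equiv.apply_symm_apply] at this
    rw [this, Equiv.symm_apply_apply])

theorem CR_aux.{u} {Γ : Type u} [Group Γ] [Finite Γ] (W : Subgroup Γ) [W.Normal] (l : ℕ) (hl : Fact l.Prime)
    [AddCommGroup (Vw W)] [Module (ZMod l) (Vw W)] (hadd : ∀ a b : W, toV W a + toV W b = toV W (a * b)) :
    ∃ (L : Type) (_ : Field L) (_ : CharP L l) (_ : IsAlgClosed L) (M : Type u) (_ : AddCommGroup M) (_ : Module L M)
      (_ : FiniteDimensional L M) (ρ : Γ →* Module.End L M),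
      (∀ x, ρ x = 1 ↔ ∀ w ∈ W, x * w = w * x) ∧
      (∀ x, l ^ finrank L (LinearMap.ker (ρ x - 1)) = Nat.card ↥(centralizer {x} ⊓ W)) ∧
      (∀ x, l ^ finrank L (LinearMap.range (ρ x - 1)) = (centralizer {x}).relIndex W) := by
  have : Finite (Vw W) := inferInstanceAs (Finite W)
  have hap : ∀ (x : Γ) (v : Vw W), (vConj W hadd x).toZModLinearMap l v = toV W (MulAut.conjNormal x ((toV W).symm v)) := by
    intro x v
    rw [AddMonoidHom.coe_toZModLinearMap]; rfl
  let ρ0 : Γ →* Module.End (ZMod l) (Vw W) :=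
    { toFun := fun x => (vConj W hadd x).toZModLinearMap l
      map_one' := by
        ext v
        rw [hap, map_one]; rfl
      map_mul' := fun x y => by
        ext v
        rw [Module.End.mul_apply, hap, hap, hap, map_mul, Equiv.symm_apply_apply]; rfl }
  have hρ0 : ∀ x (w : W), ρ0 x (toV W w) = (toV W w) ↔ x * w = w * x := by
    intro x w
    have : ρ0 x (toV W w) = toV W (MulAut.conjNormal x w) := by
      refine (hap x (toV W w)).trans ?_
      rw [Equiv.symm_apply_apply]
    rw [this, (toV W).injective.eq_iff, Subtype.ext_iff, MulAut.conjNormal_apply, mul_inv_eq_iff_eq_mul]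
  let L := AlgebraicClosure (ZMod l)
  have hCh : CharP L l := charP_of_injective_algebraMap (algebraMap (ZMod l) L).injective l
  let ρ : Γ →* Module.End L (L ⊗[ZMod l] Vw W) :=
    (Module.End.baseChangeHom (ZMod l) L (Vw W) : _ →* _).comp ρ0
  have hbc : ∀ x, ρ x - 1 = (ρ0 x - 1).baseChange L := by
    intro x
    have : ρ x - 1 = Module.End.baseChangeHom (ZMod l) L (Vw W) (ρ0 x - 1) := by
      rw [map_sub, map_one]; rfl
    exact this
  have hfix : ∀ x, l ^ finrank L (LinearMap.ker (ρ x - 1)) = Nat.card ↥(centralizer {x} ⊓ W) := by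
    intro x
    rw [hbc, finrank_ker_bc]
    have h1 := Module.natCard_eq_pow_finrank (K := ZMod l) (V := LinearMap.ker (ρ0 x - 1))
    rw [Nat.card_zmod] at h1
    rw [← h1]
    refine Nat.card_congr ⟨fun v => ⟨((toV W).symm v.1 : W), ?_⟩, fun w => ⟨toV W (⟨w.1, w.2.2⟩ : W), ?_⟩, ?_, ?_⟩
    · refine Subgroup.mem_inf.2 ⟨?_, ((toV W).symm v.1 : W).2⟩
      rw [mem_centralizer_singleton_iff]
      have := v.2
      rw [LinearMap.mem_ker, LinearMap.sub_apply, sub_eq_zero] at this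
      exact ((hρ0 x ((toV W).symm v.1)).1 this).symm
    · have := (Subgroup.mem_inf.1 w.2).1
      rw [mem_centralizer_singleton_iff] at this
      rw [LinearMap.mem_ker, LinearMap.sub_apply, sub_eq_zero]
      exact (hρ0 x _).2 this.symm
    · intro v; rfl
    · intro w; rfl
  have hWcard : l ^ finrank L (L ⊗[ZMod l] Vw W) = Nat.card W := by
    rw [Module.finrank_baseChange]
    have h1 := Module.natCard_eq_pow_finrank (K := ZMod l) (V := Vw W)
    rw [Nat.card_zmod] at h1
    rw [← h1]
    rfl
  refine ⟨L, inferInstance, hCh, inferInstance, L ⊗[ZMod l] Vw W, inferInstance, inferInstance, inferInstance, ρ, ?_, hfix, ?_⟩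
  · intro x
    rw [← sub_eq_zero, ← LinearMap.range_eq_bot, ← Submodule.finrank_eq_zero (R := L), hbc, finrank_range_bc,
      Submodule.finrank_eq_zero, LinearMap.range_eq_bot, sub_eq_zero]
    constructor
    · intro h w hw
      refine (hρ0 x ⟨w, hw⟩).1 ?_
      rw [h]; rfl
    · intro h
      ext v
      exact (hρ0 x ((toV W).symm v)).2 (h _ ((toV W).symm v).2)
  · intro x
    have h1 := LinearMap.finrank_range_add_finrank_ker (ρ x - 1)
    rw [← h1, pow_add, hfix x] at hWcard
    have h2 : (centralizer {x}).relIndex W * Nat.card ↥(centralizer {x} ⊓ W) = Nat.card W := by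
      rw [← Subgroup.inf_relIndex_right, ← Subgroup.relIndex_bot_left, ← Subgroup.relIndex_bot_left, mul_comm]
      exact Subgroup.relIndex_mul_relIndex _ _ _ bot_le inf_le_right
    rw [← h2] at hWcard
    exact Nat.eq_of_mul_eq_mul_right Nat.card_pos hWcard

theorem CR_min.{u} {Γ : Type u} [Group Γ] [Finite Γ] (W : Subgroup Γ) [W.Normal]
    (hc : ∀ a ∈ W, ∀ b ∈ W, a * b = b * a) (l : ℕ) (hl : l.Prime) (hW : ∀ a ∈ W, a ^ l = 1) :
    ∃ (L : Type) (_ : Field L) (_ : CharP L l) (_ : IsAlgClosed L) (M : Type u) (_ : AddCommGroup M) (_ : Module L M)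
      (_ : FiniteDimensional L M) (ρ : Γ →* Module.End L M),
      (∀ x, ρ x = 1 ↔ ∀ w ∈ W, x * w = w * x) ∧
      (∀ x, l ^ finrank L (LinearMap.ker (ρ x - 1)) = Nat.card ↥(centralizer {x} ⊓ W)) ∧
      (∀ x, l ^ finrank L (LinearMap.range (ρ x - 1)) = (centralizer {x}).relIndex W) := by
  have hfact : Fact l.Prime := ⟨hl⟩
  let iA : AddCommGroup (Vw W) := vAdd W hc
  have hadd : ∀ a b : W, toV W a + toV W b = toV W (a * b) := fun a b => rfl
  have hsm : ∀ (n : ℕ) (a : W), n • (toV W a) = toV W (a ^ n) := by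
    intro n a
    induction n with
    | zero => rw [zero_smul, pow_zero]; rfl
    | succ n ih => rw [succ_nsmul, ih, hadd, pow_succ]
  let iM : Module (ZMod l) (Vw W) := AddCommGroup.zmodModule (fun v => by
    have := hsm l ((toV W).symm v)
    have h2 : ((toV W).symm v : W) ^ l = 1 := Subtype.ext (hW _ ((toV W).symm v).2)
    rw [h2] at this
    rw [Equiv.apply_symm_apply] at this
    exact this)
  exact CR_aux W l hfact hadd
end minnormal
end FH

namespace FH
open Subgroup Module
open scoped commutatorElement
set_option linter.unusedSectionVars false

lemma chief_abelian {X : Type*} [Group X] [Group.IsSolvable X] (M1 M0 : Subgroup X) (h : Chief M1 M0) :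
    ⁅M0, M0⁆ ≤ M1 := by
  have := h.1
  have := h.2.1
  obtain ⟨E, hEn, h1, h2, h3, h4⟩ := exists_abelian_above M1 M0 (not_le_of_gt h.2.2.1)
  rcases h.2.2.2 E hEn h1 (h3.trans (sup_le h.2.2.1.le le_rfl)) with h5 | h5
  · exact (h2 h5.le).elim
  · rwa [← h5]

lemma map_mk_le {X : Type*} [Group X] (M1 Y : Subgroup X) [M1.Normal] :
    Y.map (QuotientGroup.mk' M1) = ⊥ ↔ Y ≤ M1 := by
  rw [Subgroup.map_eq_bot_iff, QuotientGroup.ker_mk']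

/-- in the quotient a chief factor becomes minimal normal -/
lemma chief_min {X : Type*} [Group X] (M1 M0 : Subgroup X) [M1.Normal] (h : Chief M1 M0)
    (F : Subgroup (X ⧸ M1)) (hF : F.Normal) (hle : F ≤ M0.map (QuotientGroup.mk' M1)) (hne : F ≠ ⊥) :
    F = M0.map (QuotientGroup.mk' M1) := by
  have hs := QuotientGroup.mk'_surjective M1
  have hF' : (F.comap (QuotientGroup.mk' M1)).map (QuotientGroup.mk' M1) = F := Subgroup.map_comap_eq_self_of_surjective hs F
  have h1 : M1 ≤ F.comap (QuotientGroup.mk' M1) := by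
    rw [← Subgroup.map_le_iff_le_comap, (map_mk_le M1 M1).2 le_rfl]; exact bot_le
  have h2 : F.comap (QuotientGroup.mk' M1) ≤ M0 := by
    have := Subgroup.comap_mono (f := QuotientGroup.mk' M1) hle
    rw [Subgroup.comap_map_eq, QuotientGroup.ker_mk', sup_eq_left.2 h.2.2.1.le] at this
    exact this
  rcases h.2.2.2 _ inferInstance h1 h2 with h3 | h3
  · exfalso
    apply hne
    rw [← hF', h3, map_mk_le]
  · rw [← hF', h3]

lemma chief_exp {X : Type*} [Group X] [Finite X] [Group.IsSolvable X] (M1 M0 : Subgroup X) [M1.Normal] (h : Chief M1 M0) :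
    ∃ l : ℕ, l.Prime ∧ ∀ w ∈ M0.map (QuotientGroup.mk' M1), w ^ l = 1 := by
  have := h.2.1
  set W := M0.map (QuotientGroup.mk' M1) with hWdef
  have hWn : W.Normal := Subgroup.Normal.map h.2.1 _ (QuotientGroup.mk'_surjective M1)
  have hc : ∀ a ∈ W, ∀ b ∈ W, a * b = b * a := by
    intro a ha b hb
    have h1 : ⁅W, W⁆ = ⊥ := by
      rw [hWdef, ← Subgroup.map_commutator, map_mk_le]; exact chief_abelian M1 M0 h
    rw [← commutatorElement_eq_one_iff_mul_comm]
    have := commutator_mem_commutator ha hb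
    rwa [h1] at this
  have hWne : W ≠ ⊥ := by
    rw [Ne, map_mk_le]; exact not_le_of_gt h.2.2.1
  have hcard : Nat.card W ≠ 1 := fun h1 => hWne (Subgroup.card_eq_one.1 h1)
  obtain ⟨l, hl, hdvd⟩ := Nat.exists_prime_and_dvd hcard
  have : Fact l.Prime := ⟨hl⟩
  obtain ⟨w, hw⟩ := exists_prime_orderOf_dvd_card' l hdvd
  let F : Subgroup (X ⧸ M1) :=
    { carrier := {x | x ∈ W ∧ x ^ l = 1}
      one_mem' := ⟨W.one_mem, one_pow l⟩
      mul_mem' := by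
        rintro a b ⟨ha, ha'⟩ ⟨hb, hb'⟩
        exact ⟨W.mul_mem ha hb, by rw [Commute.mul_pow (hc a ha b hb), ha', hb', one_mul]⟩
      inv_mem' := by
        rintro a ⟨ha, ha'⟩
        exact ⟨W.inv_mem ha, by rw [inv_pow, ha', inv_one]⟩ }
  have hFn : F.Normal := ⟨by
    rintro a ⟨ha, ha'⟩ g
    exact ⟨hWn.conj_mem a ha g, by rw [conj_pow, ha', mul_one, mul_inv_cancel]⟩⟩
  have hFW := chief_min M1 M0 h F hFn (fun x hx => hx.1) (by
    intro hb
    have : (w : X ⧸ M1) ∈ F := ⟨w.2, by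
      have := pow_orderOf_eq_one w
      rw [hw] at this
      exact congrArg Subtype.val this⟩
    rw [hb, Subgroup.mem_bot] at this
    have h2 : w = 1 := Subtype.ext this
    rw [h2, orderOf_one] at hw
    exact hl.one_lt.ne hw)
  refine ⟨l, hl, fun x hx => ?_⟩
  have hx2 : x ∈ F := by rw [hFW]; exact hx
  exact hx2.2

theorem CR.{u} {X : Type u} [Group X] [Finite X] [Group.IsSolvable X] (M1 M0 : Subgroup X) [M1.Normal] (h : Chief M1 M0) :
    ∃ l : ℕ, l.Prime ∧ (∀ m ∈ M0, m ^ l ∈ M1) ∧ ∃ (Q : Type u) (_ : Group Q) (_ : Finite Q) (_ : Group.IsSolvable Q)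
      (π : X →* Q), Function.Surjective π ∧ (∀ x, π x = 1 → ∀ m ∈ M0, ⁅m, x⁆ ∈ M1) ∧ NoNormal l Q ∧ 
      ∃ (L : Type) (_ : Field L) (_ : CharP L l) (_ : IsAlgClosed L) (M : Type u) (_ : AddCommGroup M) (_ : Module L M)
      (_ : FiniteDimensional L M) (ρ : Q →* Module.End L M), Function.Injective ρ ∧
      (∀ x, l ^ finrank L (LinearMap.ker (ρ (π x) - 1)) =
        Nat.card ↥(centralizer {(x : X ⧸ M1)} ⊓ M0.map (QuotientGroup.mk' M1))) ∧
      (∀ x, l ^ rk ρ (π x) = (centralizer {(x : X ⧸ M1)}).relIndex (M0.map (QuotientGroup.mk' M1))) := by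
  obtain ⟨l, hl, hexp⟩ := chief_exp M1 M0 h
  have hfact : Fact l.Prime := ⟨hl⟩
  set W := M0.map (QuotientGroup.mk' M1) with hWdef
  have hWn : W.Normal := Subgroup.Normal.map h.2.1 _ (QuotientGroup.mk'_surjective M1)
  have hc : ∀ a ∈ W, ∀ b ∈ W, a * b = b * a := by
    intro a ha b hb
    have h1 : ⁅W, W⁆ = ⊥ := by
      rw [hWdef, ← Subgroup.map_commutator, map_mk_le]; exact chief_abelian M1 M0 h
    rw [← commutatorElement_eq_one_iff_mul_comm]
    have := commutator_mem_commutator ha hb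
    rwa [h1] at this
  have hWne : W ≠ ⊥ := by
    rw [Ne, map_mk_le]; exact not_le_of_gt h.2.2.1
  obtain ⟨L, iL, iC, iAC, M, iM, iMod, iFD, ρ1, hker, hfix, hrk⟩ := CR_min W hc l hl hexp
  have hsolv : Group.IsSolvable (X ⧸ M1) := Group.isSolvable_of_surjective (QuotientGroup.mk'_surjective M1)
  let π2 := QuotientGroup.mk' ρ1.ker
  have hπ2 : Function.Surjective π2 := QuotientGroup.mk'_surjective _
  let ρ : (X ⧸ M1) ⧸ ρ1.ker →* Module.End L M := QuotientGroup.lift ρ1.ker ρ1 (fun x hx => hx)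
  have hρ : ∀ y, ρ (π2 y) = ρ1 y := fun y => rfl
  refine ⟨l, hl, ?_, (X ⧸ M1) ⧸ ρ1.ker, inferInstance, inferInstance, Group.isSolvable_of_surjective hπ2,
    π2.comp (QuotientGroup.mk' M1), hπ2.comp (QuotientGroup.mk'_surjective M1), ?_, ?_, L, iL, iC, iAC, M, iM, iMod, iFD,
    ρ, ?_, fun x => hfix _, fun x => hrk _⟩
  · intro m hm
    have := hexp _ (Subgroup.mem_map_of_mem (QuotientGroup.mk' M1) hm)
    rw [← map_pow] at this
    exact (QuotientGroup.eq_one_iff _).1 this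
  · intro x hx m hm
    have h1 : ρ1 (x : X ⧸ M1) = 1 := by
      have h2 : ρ (π2 (x : X ⧸ M1)) = 1 := by
        have : π2 (x : X ⧸ M1) = 1 := hx
        rw [this, map_one]
      rwa [hρ] at h2
    have h2 := (hker _).1 h1 _ (Subgroup.mem_map_of_mem (QuotientGroup.mk' M1) hm)
    rw [← QuotientGroup.eq_one_iff]
    have h3 : ((⁅m, x⁆ : X) : X ⧸ M1) = ⁅(m : X ⧸ M1), (x : X ⧸ M1)⁆ := map_commutatorElement (QuotientGroup.mk' M1) m x
    rw [h3, commutatorElement_eq_one_iff_mul_comm]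
    exact h2.symm
  · intro P hPn hP
    let P' := P.comap π2
    let θ : X ⧸ M1 →* MulAut W := MulAut.conjNormal
    have hpg : IsPGroup l (P'.map θ) := by
      rintro ⟨_, g, hg, rfl⟩
      obtain ⟨k, hk⟩ := hP ⟨π2 g, hg⟩
      refine ⟨k, Subtype.ext ?_⟩
      have h1 : π2 (g ^ l ^ k) = 1 := by
        rw [map_pow]; exact congrArg Subtype.val hk
      have h2 : ρ1 (g ^ l ^ k) = 1 := (QuotientGroup.eq_one_iff _).1 h1
      have h3 := (hker _).1 h2
      change (θ g) ^ l ^ k = 1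
      rw [← map_pow]
      ext w
      change ((MulAut.conjNormal (g ^ l ^ k) w : W) : X ⧸ M1) = w
      rw [MulAut.conjNormal_apply, h3 w w.2, mul_inv_cancel_right]
    have hmod := hpg.card_modEq_card_fixedPoints W
    have hlW : l ∣ Nat.card W := by
      obtain ⟨w, hw1⟩ := Subgroup.ne_bot_iff_exists_ne_one.1 hWne
      have : orderOf w = l := orderOf_eq_prime (Subtype.ext (hexp _ w.2)) hw1
      rw [← this]; exact orderOf_dvd_natCard w
    have h0 : l ∣ Nat.card (MulAction.fixedPoints (P'.map θ) W) :=
      (Nat.modEq_zero_iff_dvd.1 (hmod.symm.trans (Nat.modEq_zero_iff_dvd.2 hlW)))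
    have h1 : (1 : W) ∈ MulAction.fixedPoints (P'.map θ) W := fun g => map_one (g : MulAut W)
    have : Nonempty (MulAction.fixedPoints (P'.map θ) W) := ⟨⟨1, h1⟩⟩
    have h2 : 1 < Nat.card (MulAction.fixedPoints (P'.map θ) W) :=
      lt_of_lt_of_le hl.one_lt (Nat.le_of_dvd Nat.card_pos h0)
    rw [Finite.one_lt_card_iff_nontrivial] at h2
    obtain ⟨⟨w, hw⟩, hw1⟩ := exists_ne (⟨1, h1⟩ : MulAction.fixedPoints (P'.map θ) W)
    have hP'n : P'.Normal := inferInstance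
    have hF := chief_min M1 M0 h (W ⊓ centralizer (P' : Set (X ⧸ M1))) inferInstance inf_le_left (by
      intro hb
      have hmem : (w : X ⧸ M1) ∈ W ⊓ centralizer (P' : Set (X ⧸ M1)) := by
        refine Subgroup.mem_inf.2 ⟨w.2, ?_⟩
        rw [mem_centralizer_iff]
        intro g hg
        have := hw ⟨θ g, g, hg, rfl⟩
        have h3 : MulAut.conjNormal g w = w := this
        have h4 := congrArg Subtype.val h3
        rw [MulAut.conjNormal_apply, mul_inv_eq_iff_eq_mul] at h4
        exact h4
      rw [hb, Subgroup.mem_bot] at hmem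
      apply hw1
      exact Subtype.ext (Subtype.ext hmem))
    rw [eq_bot_iff]
    intro z hz
    obtain ⟨g, rfl⟩ := hπ2 z
    rw [Subgroup.mem_bot]
    refine (QuotientGroup.eq_one_iff _).2 ((hker g).2 fun w hw => ?_)
    rw [hWdef, ← hF, Subgroup.mem_inf, mem_centralizer_iff] at hw
    exact hw.2 g hz
  · rw [injective_iff_map_eq_one]
    intro z hz
    obtain ⟨g, rfl⟩ := hπ2 z
    exact (QuotientGroup.eq_one_iff _).2 hz

/-- T2C -/
theorem T2C {X : Type*} [Group X] [Finite X] [Group.IsSolvable X] (M1 M0 : Subgroup X) [M1.Normal] (h : Chief M1 M0)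
    (S : Set X) (hS : closure S = ⊤) (q c : ℕ) (hq : 0 < q) (hsq : ∀ s ∈ S, s ^ q = 1)
    (hc : ∀ s ∈ S, ((centralizer {(s : X ⧸ M1)}).comap (QuotientGroup.mk' M1)).relIndex M0 ≤ c) :
    ⁅M0, dser (⊤ : Subgroup X) (kT2 q c)⁆ ≤ M1 := by
  obtain ⟨l, hl, -, Q, iQ, iQ2, iQ3, π, hπ, hπk, hO, L, iL, iC, iAC, M, iM, iMod, iFD, ρ, hρ, -, hrk⟩ := CR M1 M0 h
  have hcl : closure (Set.image π S) = ⊤ := by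
    rw [← MonoidHom.map_closure, hS, Subgroup.map_top_of_surjective π hπ]
  have hT := T2L ρ hρ l hl hO (Set.image π S) hcl q c hq (by
    rintro _ ⟨s, hs, rfl⟩
    rw [← map_pow, hsq s hs, map_one]) (by
    rintro _ ⟨s, hs, rfl⟩
    have h1 := hc s hs
    rw [Subgroup.relIndex_comap, ← hrk] at h1
    exact (Nat.lt_pow_self hl.one_lt).le.trans h1)
  rw [← Subgroup.map_top_of_surjective π hπ, ← map_dser, Subgroup.map_eq_bot_iff] at hT
  rw [Subgroup.commutator_le]
  intro m hm x hx
  exact hπk x (hT hx) m hm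

/-- NA -/
theorem NA {X : Type*} [Group X] [Finite X] [Group.IsSolvable X] (E0 E : Subgroup X) [E0.Normal] [E.Normal] (hle : E0 ≤ E)
    (S : Set X) (hS : closure S = ⊤) (q c : ℕ) (hq : 0 < q) (hsq : ∀ s ∈ S, s ^ q = 1)
    (hc : ∀ s ∈ S, ((centralizer {(s : X ⧸ E0)}).comap (QuotientGroup.mk' E0)).relIndex E ≤ c) :
    ∃ i, icomm E (dser (⊤ : Subgroup X) (kT2 q c)) i ≤ E0 := by
  refine NAct E0 E _ hle fun M1 M0 h h1 h2 => ?_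
  have := h.1
  refine T2C M1 M0 h S hS q c hq hsq fun s hs => ?_
  have h3 : (centralizer {(s : X ⧸ E0)}).comap (QuotientGroup.mk' E0) ≤
      (centralizer {(s : X ⧸ M1)}).comap (QuotientGroup.mk' M1) := by
    intro x hx
    rw [Subgroup.mem_comap, mem_centralizer_singleton_iff] at hx ⊢
    have h4 : (x * s)⁻¹ * (s * x) ∈ E0 := by
      rw [← QuotientGroup.eq]; exact hx
    exact QuotientGroup.eq.2 (h1 h4)
  refine (Subgroup.relIndex_le_of_le_left h3 ?_).trans ((Subgroup.relIndex_le_of_le_right h2 ?_).trans (hc s hs))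
  · exact Subgroup.index_ne_zero_of_finite
  · exact Subgroup.index_ne_zero_of_finite
end FH

namespace FH
open Subgroup Module
open scoped commutatorElement
set_option linter.unusedSectionVars false

section res
variable {L : Type*} [Field L] {M : Type*} [AddCommGroup M] [Module L M]

lemma res_pow (U : Submodule L M) (f : Module.End L M) (hf : ∀ v ∈ U, f v ∈ U) (k : ℕ) (v : U) :
    (((f.restrict hf) ^ k) v : M) = (f ^ k) v := by
  induction k generalizing v with
  | zero => rfl
  | succ k ih => rw [pow_succ, pow_succ, Module.End.mul_apply, Module.End.mul_apply, ih]; rfl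

lemma res_ker (V : Submodule L M) (U : Submodule L V) (f : Module.End L M) (F : Module.End L V)
    (hF : ∀ v, (F v : M) = f v) :
    finrank L ↥(LinearMap.ker (F - 1) ⊓ U) = finrank L ↥(LinearMap.ker (f - 1) ⊓ U.map V.subtype) := by
  have : (LinearMap.ker (F - 1) ⊓ U).map V.subtype = LinearMap.ker (f - 1) ⊓ U.map V.subtype := by
    ext v
    simp only [Submodule.mem_map, Submodule.mem_inf, LinearMap.mem_ker, LinearMap.sub_apply, Module.End.one_apply,
      sub_eq_zero, Submodule.subtype_apply]
    constructor
    · rintro ⟨w, ⟨h1, h2⟩, rfl⟩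
      exact ⟨by rw [← hF, h1], w, h2, rfl⟩
    · rintro ⟨h1, w, h2, rfl⟩
      exact ⟨w, ⟨Subtype.ext (by rw [hF, h1]), h2⟩, rfl⟩
  rw [← Submodule.finrank_map_subtype_eq, this]

lemma res_ker_top (V : Submodule L M) (f : Module.End L M) (F : Module.End L V)
    (hF : ∀ v, (F v : M) = f v) :
    finrank L (LinearMap.ker (F - 1)) = finrank L ↥(LinearMap.ker (f - 1) ⊓ V) := by
  have := res_ker V ⊤ f F hF
  rw [inf_top_eq, Submodule.map_top, Submodule.range_subtype] at this
  exact this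
end res

lemma cperm_pow {Γ : Type*} [Group Γ] (C : Subgroup Γ) [C.Normal] (x : Γ) (k : ℕ) :
    cperm C x ^ k = cperm C (x ^ k) := by
  induction k with
  | zero => rw [pow_zero, pow_zero, cperm_one]
  | succ k ih => rw [pow_succ, pow_succ, cperm_mul, ih]

section T1
variable {Γ : Type*} [Group Γ] {A E : Subgroup Γ} (h : CE A E) [hA : A.Normal] [hE : E.Normal]
  {L : Type*} [Field L] {M : Type*} [AddCommGroup M] [Module L M] (ρ : Γ →* Module.End L M)

lemma card_via_range [Finite Γ] (χ : Wt A L) (hχ : wsp ρ A χ ≠ ⊥) :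
    Nat.card E ≤ Nat.card (Set.range (bt h χ)) * Nat.card {e : E // bt h χ e = 1} := by
  have hch : ∀ b : Set.range (bt h χ), ∃ e, bt h χ e = b := fun b => b.2
  choose r hr using hch
  have hfin : Finite (Set.range (bt h χ)) := Set.finite_range _
  rw [← Nat.card_prod]
  refine Nat.card_le_card_of_injective
    (fun e : E => (⟨bt h χ e, e, rfl⟩, ⟨e * (r ⟨bt h χ e, e, rfl⟩)⁻¹, ?_⟩)) ?_
  · rw [← mem_E0_iff h ρ χ hχ]
    push_cast
    rw [← bt_eq_iff h ρ χ hχ, hr]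
  · intro e e' hee
    simp only [Prod.mk.injEq, Subtype.mk.injEq] at hee
    obtain ⟨h1, h2⟩ := hee
    simp only [h1] at h2
    exact mul_right_cancel h2

/-- conjugation on `E0` -/
def sg (χ : Wt A L) (x : Γ) (hx : x • χ = χ) : Equiv.Perm (E0 h ρ χ) where
  toFun e := ⟨x * e * x⁻¹, conj_mem_E0 h ρ χ hx e.2⟩
  invFun e := ⟨x⁻¹ * e * x⁻¹⁻¹, conj_mem_E0 h ρ χ (smul_inv_eq hx) e.2⟩
  left_inv e := by ext; simp [mul_assoc]
  right_inv e := by ext; simp [mul_assoc]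

lemma sg_pow (χ : Wt A L) (x : Γ) (hx : x • χ = χ) (k : ℕ) (e : E0 h ρ χ) :
    (((sg h ρ χ x hx) ^ k) e : Γ) = x ^ k * e * (x ^ k)⁻¹ := by
  induction k generalizing e with
  | zero => simp
  | succ k ih =>
    rw [pow_succ, Equiv.Perm.mul_apply, ih]
    change x ^ k * (x * e * x⁻¹) * (x ^ k)⁻¹ = _
    rw [pow_succ]; group

lemma E0_comm (χ : Wt A L) {e f : Γ} (he : e ∈ E) (hf : f ∈ E0 h ρ χ) {v : M} (hv : v ∈ wsp ρ A χ) :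
    ρ f (ρ e v) = ρ e (ρ f v) := by
  have h1 : f * e = e * ⁅e⁻¹, f⁆ * f := by simp only [commutatorElement_def]; group
  rw [← Module.End.mul_apply, ← map_mul, h1, map_mul, map_mul, Module.End.mul_apply, Module.End.mul_apply]
  rw [hf.2 e⁻¹ (E.inv_mem he) _ (wsp_inv ρ (fix_of_E h hf.1 χ) v hv)]

lemma T1_idx [Finite Γ] [IsAlgClosed L] [FiniteDimensional L M] (hEL : (Nat.card E : L) ≠ 0) (DA : Gr (wsp ρ A))
    (χ : Wt A L) (hχ : wsp ρ A χ ≠ ⊥) (p n d : ℕ) (hp : p.Prime) (hn : 0 < n) (hpL : (p : L) ≠ 0) (g : Γ)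
    (hg : g ^ p ^ n = 1) (hd : finrank L (LinearMap.ker (ρ g - 1)) ≤ d) (hs : (g ^ p ^ (n - 1)) • χ = χ) :
    Nat.card E ≤ 16 * (p ^ n) ^ 2 * (d + 1) ^ 2 *
      Nat.card {e : E // bt h χ (cperm E (g ^ p ^ (n - 1)) e) = bt h χ e} := by
  rcases lemmaR DA (ρ g) (wτ A L g) (fun χ v hv => wsp_smul ρ A g χ v hv) p n hp hn
    (by rw [wτ_pow, hg, wτ_one]) (by rw [← map_pow, hg, map_one]) χ with ⟨h1, -⟩ | ⟨j, hjn, hj, hfd⟩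
  · rw [wτ_pow] at h1
    exact (h1 hs).elim
  rw [wτ_pow] at hj
  set g1 := g ^ p ^ j with hg1
  have hj : g1 • χ = χ := hj
  rw [← map_pow, ← hg1] at hfd
  have hfd := hfd.trans hd
  obtain ⟨a, rfl⟩ : ∃ a, n = j + (a + 1) := ⟨n - j - 1, by omega⟩
  have hs1 : g ^ p ^ (j + (a + 1) - 1) = g1 ^ p ^ a := by
    rw [hg1, ← pow_mul, ← pow_add]; rfl
  have hg1q : g1 ^ p ^ (a + 1) = 1 := by rw [hg1, ← pow_mul, ← pow_add, hg]
  rw [hs1] at hs ⊢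
  set V := wsp ρ A χ with hV
  have hE0V : ∀ e ∈ E0 h ρ χ, ∀ v ∈ V, ρ e v ∈ V := fun e he v hv => wsp_inv ρ (fix_of_E h he.1 χ) v hv
  set T : E0 h ρ χ → Module.End L V := fun e => (ρ e).restrict (hE0V e e.2) with hT
  have hT' : ∀ e v, (T e v : M) = ρ e v := fun e v => rfl
  have hgV : ∀ v ∈ V, ρ g1 v ∈ V := fun v hv => wsp_inv ρ hj v hv
  set F := (ρ g1).restrict hgV with hF
  have hFp : ∀ k v, ((F ^ k) v : M) = ρ (g1 ^ k) v := fun k v => by rw [hF, res_pow, ← map_pow]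
  obtain ⟨D'⟩ := jes_Gr T (by
    intro e f
    ext v
    simp only [Module.End.mul_apply]
    rw [hT', hT', hT', hT']
    exact E0_comm h ρ χ f.2.1 e.2 v.2) (by
    intro e
    refine ⟨Nat.card E, hEL, ?_⟩
    ext v
    rw [hT]
    simp only
    rw [res_pow, ← map_pow]
    have : (⟨e, e.2.1⟩ : E) ^ Nat.card E = 1 := pow_card_eq_one'
    have : (e : Γ) ^ Nat.card E = 1 := congrArg Subtype.val this
    rw [this, map_one]; rfl)
  have hVn : Nontrivial V := Submodule.nontrivial_iff_ne_bot.2 hχ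
  obtain ⟨μ, hμ⟩ : ∃ μ, jes T μ ≠ ⊥ := by
    obtain ⟨v, hv⟩ := exists_ne (0 : V)
    by_contra hcon
    push Not at hcon
    apply hv
    rw [← D'.sum v]
    refine Finset.sum_eq_zero fun x hx => ?_
    exact ((D'.memF x).1 hx (hcon x)).elim
  set U : Submodule L M := (jes T μ).map V.subtype with hU
  have hUV : U ≤ V := Submodule.map_subtype_le _ _
  have hmU : ∀ v, v ∈ U ↔ v ∈ V ∧ ∀ e : E0 h ρ χ, ρ e v = μ e • v := by
    intro v
    rw [hU]
    simp only [Submodule.mem_map, mem_jes, Submodule.subtype_apply]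
    constructor
    · rintro ⟨w, hw, rfl⟩
      refine ⟨w.2, fun e => ?_⟩
      have := congrArg Subtype.val (hw e)
      exact this
    · rintro ⟨h1, h2⟩
      exact ⟨⟨v, h1⟩, fun e => Subtype.ext (h2 e), rfl⟩
  have hUE : ∀ e ∈ E, ∀ v ∈ U, ρ e v ∈ U := by
    intro e he v hv
    rw [hmU] at hv ⊢
    refine ⟨wsp_inv ρ (fix_of_E h he χ) v hv.1, fun f => ?_⟩
    rw [E0_comm h ρ χ he f.2 hv.1, hv.2, map_smul]
  have hUn : Nontrivial U := by
    rw [Submodule.nontrivial_iff_ne_bot, hU]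
    intro hb
    apply hμ
    exact Submodule.map_injective_of_injective V.subtype_injective (by rw [hb, Submodule.map_bot])
  have hbU := hbt h ρ χ U hUV hUE
  have hFk : finrank L (LinearMap.ker (F - 1)) ≤ d := by
    rw [res_ker_top V (ρ g1) F (fun v => rfl)]
    exact hfd
  have hp1 : 1 ≤ p := hp.one_lt.le
  rcases lemmaR D' F (wtPerm L (sg h ρ χ g1 hj)) (fun x v hv => jes_map F (sg h ρ χ g1 hj) (by
      intro e v
      apply Subtype.ext
      rw [hT']
      change ρ g1 (ρ e v) = ρ (g1 * e * g1⁻¹) (ρ g1 v)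
      rw [← Module.End.mul_apply, ← Module.End.mul_apply, ← map_mul, ← map_mul, inv_mul_cancel_right]) x v hv)
    p (a + 1) hp (Nat.succ_pos _) (by
      rw [← wtPerm_pow]
      have : sg h ρ χ g1 hj ^ p ^ (a + 1) = 1 := by
        ext e
        rw [sg_pow, hg1q]; simp
      rw [this, wtPerm_one]) (by
      ext v
      rw [hFp, hg1q, map_one]; rfl) μ with ⟨-, h1⟩ | ⟨j2, hj2n, hj2, hfd2⟩
  · have h2 := card_B_le (rr ρ E U hUE) (bt h χ) hbU hEL
    have h3 : finrank L U ≤ d := by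
      rw [hU, Submodule.finrank_map_subtype_eq]; exact h1.trans hFk
    refine (card_via_range h ρ χ hχ).trans (Nat.mul_le_mul ?_ ?_)
    · refine h2.trans ((Nat.pow_le_pow_left h3 2).trans ?_)
      have : 1 ≤ (p ^ (j + (a + 1))) ^ 2 := Nat.one_le_pow _ _ (pow_pos hp.pos _)
      nlinarith
    · refine Nat.card_le_card_of_injective (fun e => ⟨e.1, ?_⟩) ?_
      · rw [← smul_bt h hs, e.2]
        funext f
        rw [wt_smul_apply]; rfl
      · intro e e' hee
        exact Subtype.ext (by simpa using hee)
  · obtain ⟨b, rfl⟩ : ∃ b, a = j2 + b := ⟨a - j2, by omega⟩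
    set g2 := g1 ^ p ^ j2 with hg2
    have hg2χ : g2 • χ = χ := by
      rw [hg2]
      have := wτ_pow (L := L) A g1 (p ^ j2)
      have h3 : (wτ A L g1) χ = χ := hj
      have h4 : (wτ A L g1 ^ p ^ j2) χ = χ := Equiv.Perm.pow_apply_eq_self_of_apply_eq_self h3 _
      rw [this] at h4
      exact h4
    have hg2q : g2 ^ p ^ (b + 1) = 1 := by rw [hg2, ← pow_mul, ← pow_add, ← add_assoc, hg1q]
    have hs2 : g1 ^ p ^ (j2 + b) = g2 ^ p ^ b := by rw [pow_add, pow_mul]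
    have hF2 : ∀ v : V, v ∈ jes T μ → (F ^ p ^ j2) v ∈ jes T μ := by
      intro v hv
      have h5 := jes_map (T := T) (F ^ p ^ j2) (sg h ρ χ g1 hj ^ p ^ j2) (by
        intro e v
        apply Subtype.ext
        rw [hFp, hT', hT', hFp, sg_pow, ← Module.End.mul_apply, ← Module.End.mul_apply, ← map_mul, ← map_mul,
          inv_mul_cancel_right]) μ v hv
      rw [wtPerm_pow, hj2] at h5
      exact h5
    have hgU : ∀ v ∈ U, ρ g2 v ∈ U := by
      rintro _ ⟨v, hv, rfl⟩
      exact ⟨_, hF2 v hv, hFp _ _⟩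
    have hgiU : ∀ v ∈ U, ρ g2⁻¹ v ∈ U := by
      have h6 : g2⁻¹ = g2 ^ (p ^ (b + 1) - 1) := by
        rw [inv_eq_iff_mul_eq_one, ← pow_succ', Nat.sub_add_cancel (Nat.one_le_pow _ _ hp.pos), hg2q]
      intro v hv
      rw [h6, map_pow]
      have := ((((ρ g2).restrict hgU) ^ (p ^ (b + 1) - 1)) ⟨v, hv⟩).2
      rwa [res_pow] at this
    have hQ := lemmaQ (rr ρ E U hUE) (bt h χ) hbU hEL (by
      intro e he
      have he := (mem_E0_iff h ρ χ hχ e).2 he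
      refine ⟨μ ⟨e, he⟩, ?_⟩
      ext v
      exact ((hmU v).1 v.2).2 ⟨e, he⟩) ((ρ g2).restrict hgU) ((ρ g2⁻¹).restrict hgiU)
      (by ext v; exact ρ_apply_inv ρ g2 v) (by ext v; exact ρ_inv_apply ρ g2 v) (cperm E g2) (by
        intro f
        ext v
        change ρ g2 (ρ f v) = ρ (cperm E g2 f : E) (ρ g2 v)
        rw [cperm_apply, ← Module.End.mul_apply, ← Module.End.mul_apply, ← map_mul, ← map_mul,
          inv_mul_cancel_right]) (by
        intro f; ext
        push_cast
        rw [cperm_apply, cperm_apply]; push_cast; group) p (b + 1) hp (Nat.succ_pos _) (by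
        rw [cperm_pow, hg2q, cperm_one]) (by
        ext v
        rw [res_pow, ← map_pow, hg2q, map_one]; rfl) hpL d (by
        rw [res_ker_top U (ρ g2) _ (fun v => rfl), hU, ← res_ker V (jes T μ) (ρ g2) (F ^ p ^ j2) (hFp _)]
        exact hfd2.trans hFk)
    rw [cperm_pow] at hQ
    rw [hs2]
    refine hQ.trans (Nat.mul_le_mul_right _ (Nat.mul_le_mul_right _ (Nat.mul_le_mul_left _
      (Nat.pow_le_pow_left (Nat.pow_le_pow_right hp.pos ?_) 2))))
    omega
end T1
end FH

namespace FH
open Subgroup Module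
open scoped commutatorElement
set_option linter.unusedSectionVars false

def cT1 (p n d : ℕ) : ℕ := 16 * (p ^ n) ^ 2 * (d + 1) ^ 2
def k2 (p n d : ℕ) : ℕ := ka (p ^ n) d + (d ^ 2).factorial + kT2 p (cT1 p n d) + 1

section T1
variable {Γ : Type*} [Group Γ] [Finite Γ] [Group.IsSolvable Γ]
  {L : Type*} [Field L] [IsAlgClosed L] {M : Type*} [AddCommGroup M] [Module L M] [FiniteDimensional L M]
  (ρ : Γ →* Module.End L M)

/-- the elements `s` are `p^(n-1)`-th powers of elements with few fixed points -/
def Good (p n d : ℕ) (S : Set Γ) : Prop := ∀ s ∈ S, ∃ g : Γ, g ^ p ^ n = 1 ∧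
  finrank L (LinearMap.ker (ρ g - 1)) ≤ d ∧ s = g ^ p ^ (n - 1)

lemma T1_stepA (hρ : Function.Injective ρ) (l : ℕ) (hl : l.Prime) [CharP L l] (hO : NoNormal l Γ)
    (p n d : ℕ) (hp : p.Prime) (hn : 0 < n) (S : Set Γ) (hS : Good ρ p n d S)
    (C : Subgroup Γ) [C.Normal] (hC : ∀ a ∈ C, ∀ b ∈ C, a * b = b * a) :
    ∀ x ∈ dser (closure S) (ka (p ^ n) d), ∀ a ∈ C, x * a = a * x := by
  obtain ⟨D⟩ := wsp_Gr ρ C hC (card_ne_zero l hl L hO C 1 (icomm_of_comm C hC))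
  refine stepA ρ hρ C D S (p ^ n * d) ?_
  intro s hs X hX
  obtain ⟨g, hg, hgd, rfl⟩ := hS s hs
  refine (card_moved_le (ρ g) (wτ C L g) (fun χ v hv => wsp_smul ρ C g χ v hv) D p n hp hn
    (by rw [wτ_pow, hg, wτ_one]) (by rw [← map_pow, hg, map_one]) X ?_).trans
    (Nat.mul_le_mul_left _ hgd)
  intro χ hχ
  rw [wτ_pow]
  exact hX χ hχ

lemma T1_case1 (p n d : ℕ) (hp : p.Prime) (hn : 0 < n) (A : Subgroup Γ) [A.Normal] (DA : Gr (wsp ρ A)) (χ : Wt A L)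
    (g : Γ) (hg : g ^ p ^ n = 1) (hd : finrank L (LinearMap.ker (ρ g - 1)) ≤ d) (hs : (g ^ p ^ (n - 1)) • χ ≠ χ) :
    finrank L (wsp ρ A χ) ≤ d := by
  rcases lemmaR DA (ρ g) (wτ A L g) (fun χ v hv => wsp_smul ρ A g χ v hv) p n hp hn
    (by rw [wτ_pow, hg, wτ_one]) (by rw [← map_pow, hg, map_one]) χ with ⟨-, h1⟩ | ⟨j, hjn, hj, hfd⟩
  · exact h1.trans hd
  · exfalso
    apply hs
    obtain ⟨b, hb⟩ : ∃ b, n - 1 = j + b := ⟨n - 1 - j, by omega⟩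
    have h4 : ((wτ A L g ^ p ^ j) ^ p ^ b) χ = χ := Equiv.Perm.pow_apply_eq_self_of_apply_eq_self hj _
    rw [← pow_mul, ← pow_add, ← hb, wτ_pow] at h4
    exact h4

lemma T1_idx2 (p n d : ℕ) (hp : p.Prime) (hn : 0 < n)
    (hpL : (p : L) ≠ 0) (A E N : Subgroup Γ) [A.Normal] [E.Normal]
    (h : CE A E) (hEL : (Nat.card E : L) ≠ 0) (DA : Gr (wsp ρ A)) (hEN : E ≤ N) (χ : Wt A L) (hχ : wsp ρ A χ ≠ ⊥)
    (hNfix : ∀ x ∈ N, x • χ = χ) [hE0n : ((E0 h ρ χ).subgroupOf N).Normal] (s : N)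
    (hS : ∃ g : Γ, g ^ p ^ n = 1 ∧ finrank L (LinearMap.ker (ρ g - 1)) ≤ d ∧ (s : Γ) = g ^ p ^ (n - 1)) :
    ((centralizer {(s : N ⧸ (E0 h ρ χ).subgroupOf N)}).comap
      (QuotientGroup.mk' ((E0 h ρ χ).subgroupOf N))).relIndex (E.subgroupOf N) ≤ cT1 p n d := by
  obtain ⟨g, hg, hgd, hs1⟩ := hS
  have h1 := T1_idx h ρ hEL DA χ hχ p n d hp hn hpL g hg hgd (hs1 ▸ hNfix s s.2)
  rw [← hs1] at h1
  generalize hH : (centralizer {(s : N ⧸ (E0 h ρ χ).subgroupOf N)}).comap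
      (QuotientGroup.mk' ((E0 h ρ χ).subgroupOf N)) = H
  have h2 := Subgroup.index_mul_card (H.subgroupOf (E.subgroupOf N))
  have h3 : Nat.card (E.subgroupOf N) = Nat.card E := Nat.card_congr (Subgroup.subgroupOfEquivOfLe hEN).toEquiv
  rw [h3] at h2
  have h4 : Nat.card {e : E // bt h χ (cperm E (s : Γ) e) = bt h χ e} ≤
      Nat.card (H.subgroupOf (E.subgroupOf N)) := by
    refine Nat.card_le_card_of_injective (fun e => ⟨⟨⟨e.1, hEN e.1.2⟩, e.1.2⟩, ?_⟩) ?_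
    · rw [Subgroup.mem_subgroupOf, ← hH, Subgroup.mem_comap, mem_centralizer_singleton_iff]
      have h5 := (bt_eq_iff h ρ χ hχ _ _).1 e.2
      rw [cperm_apply] at h5
      refine QuotientGroup.eq.2 ?_
      rw [Subgroup.mem_subgroupOf]
      have h6 := conj_mem_E0 h ρ χ (hNfix _ (N.inv_mem (N.mul_mem (hEN e.1.2) s.2))) h5
      have h7 : ((e.1 : Γ) * s)⁻¹ * (s * e.1) = ((e.1 : Γ) * s)⁻¹ * (s * e.1 * (s : Γ)⁻¹ * (e.1 : Γ)⁻¹) *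
        (((e.1 : Γ) * s)⁻¹)⁻¹ := by group
      rw [← h7] at h6
      exact h6
    · intro e e' hee
      exact Subtype.ext (Subtype.ext (congrArg (fun x => (x.1.1.1 : Γ)) hee))
  have h5 : 0 < Nat.card (H.subgroupOf (E.subgroupOf N)) := Nat.card_pos
  have h6 : H.relIndex (E.subgroupOf N) * Nat.card (H.subgroupOf (E.subgroupOf N)) ≤
      cT1 p n d * Nat.card (H.subgroupOf (E.subgroupOf N)) := by
    rw [Subgroup.relIndex, h2]
    exact h1.trans (Nat.mul_le_mul_left _ h4)
  exact Nat.le_of_mul_le_mul_right h6 h5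

lemma T1_case2 (l : ℕ) (hl : l.Prime) [CharP L l] (hO : NoNormal l Γ) (p n d : ℕ) (hp : p.Prime) (hn : 0 < n)
    (hpL : (p : L) ≠ 0) (S : Set Γ) (hS : Good ρ p n d S) (A E : Subgroup Γ) [A.Normal] [E.Normal]
    (h : CE A E) (DA : Gr (wsp ρ A)) (hEN : E ≤ closure S) (χ : Wt A L) (hχ : wsp ρ A χ ≠ ⊥)
    (hfix : ∀ s ∈ S, s • χ = χ) :
    ∃ i, icomm E (dser (closure S) (kT2 p (cT1 p n d))) i ≤ E0 h ρ χ := by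
  have hNfix : ∀ x ∈ closure S, x • χ = χ := by
    have : closure S ≤ MulAction.stabilizer Γ χ := (closure_le _).2 hfix
    exact this
  have hE0E : E0 h ρ χ ≤ E := fun e he => he.1
  have hE0n : ((E0 h ρ χ).subgroupOf (closure S)).Normal := ⟨by
    intro e he x
    exact conj_mem_E0 h ρ χ (hNfix x x.2) he⟩
  have hEL := card_ne_zero l hl L hO E 2 h.icomm_bot
  have hsp : ∀ s ∈ ((↑) ⁻¹' S : Set (closure S)), s ^ p = 1 := by
    intro s hs
    obtain ⟨g, hg, hgd, hs1⟩ := hS s hs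
    apply Subtype.ext
    push_cast
    rw [hs1, ← pow_mul, ← pow_succ, Nat.sub_add_cancel hn, hg]
  have hidx : ∀ s ∈ ((↑) ⁻¹' S : Set (closure S)), _ := fun s hs =>
    T1_idx2 ρ p n d hp hn hpL A E (closure S) h hEL DA hEN χ hχ hNfix s (hS s hs)
  have hcl : closure ((↑) ⁻¹' S : Set (closure S)) = ⊤ := Subgroup.closure_closure_coe_preimage
  have hle : (E0 h ρ χ).subgroupOf (closure S) ≤ E.subgroupOf (closure S) := fun x hx => hE0E hx
  generalize hX1 : (E0 h ρ χ).subgroupOf (closure S) = X1 at *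
  generalize hX2 : E.subgroupOf (closure S) = X2 at *
  have hX2n : X2.Normal := by rw [← hX2]; infer_instance
  have hc : ∀ s ∈ ((↑) ⁻¹' S : Set (closure S)),
    ((centralizer {(s : _ ⧸ X1)}).comap (QuotientGroup.mk' X1)).relIndex X2 ≤ cT1 p n d := hidx
  obtain ⟨i, hi⟩ := NA X1 X2 hle _ hcl p (cT1 p n d) hp.pos hsp hc
  refine ⟨i, ?_⟩
  have h7 := Subgroup.map_mono (f := (closure S).subtype) hi
  rw [map_icomm, map_dser, ← hX1, ← hX2, Subgroup.subgroupOf_map_subtype, Subgroup.subgroupOf_map_subtype,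
    inf_eq_left.2 hEN, ← MonoidHom.range_eq_map, Subgroup.range_subtype] at h7
  exact h7.trans inf_le_left

theorem T1L (hρ : Function.Injective ρ) (l : ℕ) (hl : l.Prime) [CharP L l] (hO : NoNormal l Γ)
    (p n d : ℕ) (hp : p.Prime) (hn : 0 < n) (hpL : (p : L) ≠ 0) (S : Set Γ) (hS : Good ρ p n d S)
    [hNn : (closure S).Normal] :
    ⁅resid (dser (closure S) (k2 p n d)), resid (dser (closure S) (k2 p n d))⁆ = ⊥ := by
  set N := closure S with hN
  set D2 := dser N (k2 p n d) with hD2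
  set D := resid D2 with hD
  by_cases hDz : D ≤ zc D
  · exact icomm_of_comm D fun a ha b hb => ((mem_zc D b).1 (hDz hb)).2 a ha
  exfalso
  obtain ⟨E, hEn, hED, hEA, h⟩ := exists_CE D hDz
  have hAc := zc_comm D
  obtain ⟨DA⟩ := wsp_Gr ρ (zc D) hAc (card_ne_zero l hl L hO (zc D) 1 (icomm_of_comm _ hAc))
  have hEN : E ≤ N := hED.trans ((resid_le _).trans (dser_le _ _))
  have hEL := card_ne_zero l hl L hO E 2 h.icomm_bot
  set K := dser N (ka (p ^ n) d) with hK
  have hstep := fun (C : Subgroup Γ) (hC : C.Normal) => T1_stepA ρ hρ l hl hO p n d hp hn S hS C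
  have hKA := hstep (zc D) inferInstance hAc
  have hD2K : D2 ≤ dser K ((d ^ 2).factorial) := by
    rw [hK, ← dser_add]
    exact dser_antitone N (by unfold k2; omega)
  have hD2N : D2 ≤ dser N (kT2 p (cT1 p n d)) := dser_antitone N (by unfold k2; omega)
  have key : ∀ χ, wsp ρ (zc D) χ ≠ ⊥ → ∃ i, icomm E D2 i ≤ E0 h ρ χ := by
    intro χ hχ
    by_cases hall : ∀ s ∈ S, s • χ = χ
    · obtain ⟨i, hi⟩ := T1_case2 ρ l hl hO p n d hp hn hpL S hS (zc D) E h DA hEN χ hχ hall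
      exact ⟨i, (icomm_mono le_rfl hD2N i).trans hi⟩
    · push Not at hall
      obtain ⟨s, hs, hs2⟩ := hall
      obtain ⟨g, hg, hgd, rfl⟩ := hS s hs
      have h1 := T1_case1 ρ p n d hp hn (zc D) DA χ g hg hgd hs2
      have h2 := b2 h ρ χ hχ hEL d h1 K (fun x hx => fix_of_centralises (hKA x hx) χ)
      refine ⟨1, ?_⟩
      exact comm_le_E0 h ρ χ hχ D2 (fun y hy => fix_of_centralises (hKA y (dser_le K _ (hD2K hy))) χ)
        (fun x hx => h2 x (hD2K hx))
  choose! i hi using key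
  set I := DA.F.sup i with hI
  have h1 : icomm E D2 I ≤ zc E := by
    intro x hx
    refine inter_E0 h ρ hρ DA x (fun χ hχ => ?_) (icomm_antitone E D2 (Nat.zero_le I) hx)
    exact hi χ ((DA.memF χ).1 hχ) (icomm_antitone E D2 (Finset.le_sup hχ) hx)
  have hKZ := hstep (zc E) inferInstance (zc_comm E)
  have h2 : icomm E D2 (I + 1) ≤ ⊥ := by
    rw [icomm_succ, Subgroup.commutator_le]
    intro a ha b hb
    rw [Subgroup.mem_bot, commutatorElement_eq_one_iff_mul_comm]
    exact (hKZ b (dser_le K _ (hD2K hb)) a (h1 ha)).symm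
  have h3 := (comm_resid_le E D2 (I + 1)).trans h2
  apply hEA
  intro e he
  rw [mem_zc]
  refine ⟨hED he, fun y hy => ?_⟩
  symm
  rw [← commutatorElement_eq_one_iff_mul_comm]
  exact h3 (commutator_mem_commutator he hy)
end T1
end FH

namespace FH
open Subgroup Module
open scoped commutatorElement
set_option linter.unusedSectionVars false

section T1C
variable {X : Type*} [Group X] [Finite X] [Group.IsSolvable X]

/-- the subgroup acting trivially -/
def Yp (φ : X) (p n m : ℕ) : Subgroup X :=
  ⁅resid (dser (normalClosure {φ ^ p ^ (n - 1)}) (k2 p n m)), resid (dser (normalClosure {φ ^ p ^ (n - 1)}) (k2 p n m))⁆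

lemma finrank_conj {Γ L M : Type*} [Group Γ] [Field L] [AddCommGroup M] [Module L M] [FiniteDimensional L M]
    (ρ : Γ →* Module.End L M) (y g : Γ) :
    finrank L (LinearMap.ker (ρ (y * g * y⁻¹) - 1)) ≤ finrank L (LinearMap.ker (ρ g - 1)) := by
  have h1 : LinearMap.ker (ρ (y * g * y⁻¹) - 1) ≤ (LinearMap.ker (ρ g - 1)).map (ρ y) := by
    intro v hv
    rw [LinearMap.mem_ker, LinearMap.sub_apply, Module.End.one_apply, sub_eq_zero] at hv
    refine ⟨ρ y⁻¹ v, ?_, ρ_apply_inv ρ y v⟩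
    rw [SetLike.mem_coe, LinearMap.mem_ker, LinearMap.sub_apply, Module.End.one_apply, sub_eq_zero]
    conv_rhs => rw [← hv]
    simp only [map_mul, Module.End.mul_apply]
    rw [ρ_inv_apply]
  exact (Submodule.finrank_mono h1).trans (Submodule.finrank_map_le _ _)

theorem T1C (φ : X) (p n m : ℕ) (hp : p.Prime) (hn : 0 < n) (hφ : φ ^ p ^ n = 1) (M1 M0 : Subgroup X) [M1.Normal]
    (h : Chief M1 M0) (hp' : ∀ l : ℕ, l.Prime → (∀ x ∈ M0, x ^ l ∈ M1) → l ≠ p)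
    (hm : Nat.card ↥(centralizer {(φ : X ⧸ M1)} ⊓ M0.map (QuotientGroup.mk' M1)) ≤ m) :
    ⁅M0, Yp φ p n m⁆ ≤ M1 := by
  obtain ⟨l, hl, hexp, Q, _, _, _, π, hπ, hπk, hO, L, _, _, _, M, _, _, _, ρ, hρ, hker, -⟩ := CR M1 M0 h
  have hlp := hp' l hl hexp
  have hpL : (p : L) ≠ 0 := by
    rw [Ne, CharP.cast_eq_zero_iff L l]
    intro hd
    exact hlp ((Nat.prime_dvd_prime_iff_eq hl hp).1 hd)
  set S : Set Q := Set.image π (Group.conjugatesOfSet {φ ^ p ^ (n - 1)}) with hS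
  have hcl : closure S = (normalClosure {φ ^ p ^ (n - 1)}).map π := by
    rw [normalClosure, MonoidHom.map_closure]
  have hnor : (closure S).Normal := by
    rw [hcl]; exact Subgroup.Normal.map inferInstance π hπ
  have hfd : finrank L (LinearMap.ker (ρ (π φ) - 1)) ≤ m := by
    have h1 := hker φ
    exact (Nat.lt_pow_self hl.one_lt).le.trans (h1.trans_le hm)
  have hgood : Good ρ p n m S := by
    rintro _ ⟨x, hx, rfl⟩
    rw [Group.mem_conjugatesOfSet_iff] at hx
    obtain ⟨a, ha, hax⟩ := hx
    rw [Set.mem_singleton_iff] at ha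
    subst ha
    rw [isConj_iff] at hax
    obtain ⟨y, rfl⟩ := hax
    refine ⟨π y * π φ * (π y)⁻¹, ?_, (finrank_conj ρ _ _).trans hfd, ?_⟩
    · rw [conj_pow, ← map_pow, hφ]; simp
    · rw [conj_pow]; simp
  have hT := T1L ρ hρ l hl hO p n m hp hn hpL S hgood
  have hmap : (Yp φ p n m).map π ≤ ⊥ := by
    rw [← hT, Yp, Subgroup.map_commutator, hcl, ← map_dser]
    exact Subgroup.commutator_mono (map_resid_le _ _) (map_resid_le _ _)
  rw [Subgroup.commutator_le]
  intro a ha x hx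
  exact hπk x (Subgroup.mem_bot.1 (hmap (mem_map_of_mem π hx))) a ha

theorem T0C (m : ℕ) (M1 M0 : Subgroup X) [M1.Normal] [M0.Normal]
    (hm : Nat.card ↥(M0.map (QuotientGroup.mk' M1)) ≤ m) :
    ⁅M0, dser (⊤ : Subgroup X) m.factorial⁆ ≤ M1 := by
  set θ : X →* MulAut (X ⧸ M1) := MulAut.conj.comp (QuotientGroup.mk' M1) with hθ
  have hθ' : ∀ x z, θ x z = (x : X ⧸ M1) * z * (x : X ⧸ M1)⁻¹ := fun x z => rfl
  have hsol : Group.IsSolvable θ.range := Group.isSolvable_of_surjective θ.rangeRestrict_surjective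
  have hn : (M0.map (QuotientGroup.mk' M1)).Normal :=
    Subgroup.Normal.map inferInstance _ (QuotientGroup.mk'_surjective M1)
  have h1 := smallOrb θ.range (M0.map (QuotientGroup.mk' M1) : Set (X ⧸ M1)) (Set.toFinite _) m hm (by
    rintro _ ⟨x, rfl⟩ t ht
    exact hn.conj_mem t ht _)
  rw [MonoidHom.range_eq_map, ← map_dser] at h1
  rw [Subgroup.commutator_le]
  intro a ha x hx
  have h2 := h1 (θ x) (mem_map_of_mem θ hx) (a : X ⧸ M1) (mem_map_of_mem (QuotientGroup.mk' M1) ha)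
  have h2 : (x : X ⧸ M1) * a * (x : X ⧸ M1)⁻¹ = a := h2
  rw [mul_inv_eq_iff_eq_mul] at h2
  rw [← QuotientGroup.eq_one_iff]
  have h3 : ((⁅a, x⁆ : X) : X ⧸ M1) = ⁅(a : X ⧸ M1), (x : X ⧸ M1)⁆ := rfl
  rw [h3, commutatorElement_eq_one_iff_mul_comm, h2]

theorem EndStep (p : ℕ) (hp : p.Prime) (Y : Subgroup X) [Y.Normal]
    (hY : ∀ M1 M0, Chief M1 M0 → M0 ≤ Y → (∀ l : ℕ, l.Prime → (∀ x ∈ M0, x ^ l ∈ M1) → l ≠ p) → ⁅M0, Y⁆ ≤ M1) :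
    Ch ⊥ Y 3 := by
  have : Fact p.Prime := ⟨hp⟩
  set D := resid Y with hD
  obtain ⟨P0, hP0, hmax⟩ : ∃ P0, Maximal (fun P : Subgroup X => P.Normal ∧ P ≤ D ∧ IsPGroup p P) P0 ∧ True := by
    obtain ⟨P, hP⟩ := Set.Finite.exists_maximal (s := {P : Subgroup X | P.Normal ∧ P ≤ D ∧ IsPGroup p P})
      (Set.toFinite _) ⟨⊥, inferInstance, bot_le, IsPGroup.of_bot⟩
    exact ⟨P, hP, trivial⟩
  obtain ⟨⟨hP0n, hP0D, hP0p⟩, hmax⟩ := hP0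
  have hcl : ⁅D, D⁆ ≤ P0 := by
    set D' := D.map (QuotientGroup.mk' P0) with hD'
    have hD'n : D'.Normal := Subgroup.Normal.map inferInstance _ (QuotientGroup.mk'_surjective P0)
    have hcomD : D'.comap (QuotientGroup.mk' P0) = D := by
      rw [hD', Subgroup.comap_map_eq, QuotientGroup.ker_mk']
      exact sup_eq_left.2 hP0D
    by_cases hz : D' ≤ zc D'
    · rw [← map_mk_le, Subgroup.map_commutator]
      exact icomm_of_comm D' fun a ha b hb => ((mem_zc D' b).1 (hz hb)).2 a ha
    exfalso
    obtain ⟨E', hE'n, hED, hEA, h⟩ := exists_CE D' hz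
    have hnd : ¬ p ∣ Nat.card E' := not_dvd_card p hp E' (by
      intro P hPn hPE hPp
      have h1 : IsPGroup p (P.comap (QuotientGroup.mk' P0)) :=
        hPp.comap_of_ker_isPGroup _ (by rw [QuotientGroup.ker_mk']; exact hP0p)
      have h2 : P0 ≤ P.comap (QuotientGroup.mk' P0) := by
        intro x hx
        have : (QuotientGroup.mk' P0) x = 1 := (QuotientGroup.eq_one_iff x).2 hx
        rw [Subgroup.mem_comap, this]; exact P.one_mem
      have h3 := hmax ⟨inferInstance, (Subgroup.comap_mono (hPE.trans hED)).trans hcomD.le, h1⟩ h2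
      rw [eq_bot_iff]
      intro z hz
      obtain ⟨x, rfl⟩ := QuotientGroup.mk'_surjective P0 z
      exact (QuotientGroup.eq_one_iff x).2 (h3 hz)) (nilp_of_icomm E' 2 h.icomm_bot)
    set E := E'.comap (QuotientGroup.mk' P0) with hE
    have hEn : E.Normal := inferInstance
    have hP0E : P0 ≤ E := by
      intro x hx
      have : (QuotientGroup.mk' P0) x = 1 := (QuotientGroup.eq_one_iff x).2 hx
      rw [hE, Subgroup.mem_comap, this]; exact E'.one_mem
    have hEY : E ≤ Y := ((Subgroup.comap_mono hED).trans hcomD.le).trans (resid_le Y)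
    obtain ⟨i, hi⟩ := NAct P0 E Y hP0E (by
      intro M1 M0 hch h1 h2
      refine hY M1 M0 hch (h2.trans hEY) ?_
      rintro l hl hexp rfl
      obtain ⟨x, hx0, hx1⟩ := SetLike.exists_of_lt hch.2.2.1
      have := hch.1
      apply hx1
      rw [← QuotientGroup.eq_one_iff, ← orderOf_eq_one_iff]
      have ha : orderOf (x : X ⧸ M1) ∣ l := orderOf_dvd_of_pow_eq_one (by
        rw [← QuotientGroup.mk_pow, QuotientGroup.eq_one_iff]; exact hexp x hx0)
      have hb : orderOf (x : X ⧸ M1) ∣ Nat.card E' := orderOf_dvd_of_pow_eq_one (by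
        rw [← QuotientGroup.mk_pow, QuotientGroup.eq_one_iff]
        apply h1
        rw [← QuotientGroup.eq_one_iff, QuotientGroup.mk_pow]
        have : (⟨(x : X ⧸ P0), h2 hx0⟩ : E') ^ Nat.card E' = 1 := pow_card_eq_one'
        exact congrArg Subtype.val this)
      exact Nat.dvd_one.1 (((Nat.Prime.coprime_iff_not_dvd hl).2 hnd) ▸ Nat.dvd_gcd ha hb))
    have h3 := (comm_resid_le E Y i).trans hi
    rw [← map_mk_le, Subgroup.map_commutator, hE,
      Subgroup.map_comap_eq_self_of_surjective (QuotientGroup.mk'_surjective P0)] at h3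
    apply hEA
    intro e he
    rw [mem_zc]
    refine ⟨hED he, fun y hy => ?_⟩
    symm
    rw [← commutatorElement_eq_one_iff_mul_comm, ← Subgroup.mem_bot, ← h3]
    exact commutator_mem_commutator he hy
  have hnil : Group.IsNilpotent P0 := hP0p.isNilpotent
  obtain ⟨k, hk⟩ := (Subgroup.nilpotent_iff_lowerCentralSeries).1 hnil
  have c1 : Ch ⊥ P0 1 := Ch_step bot_le k (by rw [icomm_eq_map, hk, Subgroup.map_bot])
  have c2 : Ch P0 D 1 := Ch_step hP0D 1 hcl
  have c3 : Ch D Y 1 := Ch_resid Y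
  exact Ch_trans 1 2 inferInstance c3 (Ch_trans 1 1 inferInstance c2 c1)
end T1C

/-- hypothesis, in a form that passes to quotients -/
def Hyp.{u} (p m : ℕ) {X : Type u} [Group X] (φ : X) : Prop :=
  ∀ (Z : Type u) [Group Z] (f : X →* Z), Function.Surjective f → ∀ V : Subgroup Z, V.Normal →
    V ≤ ⁅(⊤ : Subgroup Z), (⊤ : Subgroup Z)⁆ → (∀ a ∈ V, ∀ b ∈ V, a * b = b * a) → ∀ r : ℕ, r.Prime → r ≠ p →
    (∀ v ∈ V, v ^ r = 1) → Nat.card ↥(centralizer {f φ} ⊓ V) ≤ m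

section main
variable {X : Type*} [Group X] [Finite X] [Group.IsSolvable X]

lemma Hyp_chief (p m : ℕ) (φ : X) (H : Hyp p m φ) (M1 M0 : Subgroup X) [M1.Normal] (h : Chief M1 M0)
    (h' : M0 ≤ ⁅(⊤ : Subgroup X), (⊤ : Subgroup X)⁆) 
    (hp' : ∀ l : ℕ, l.Prime → (∀ x ∈ M0, x ^ l ∈ M1) → l ≠ p) :
    Nat.card ↥(centralizer {(φ : X ⧸ M1)} ⊓ M0.map (QuotientGroup.mk' M1)) ≤ m := by
  obtain ⟨l, hl, hexp, -⟩ := CR M1 M0 h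
  have := h.2.1
  refine H (X ⧸ M1) (QuotientGroup.mk' M1) (QuotientGroup.mk'_surjective M1) _
    (Subgroup.Normal.map inferInstance _ (QuotientGroup.mk'_surjective M1)) ?_ ?_ l hl (hp' l hl hexp) ?_
  · refine (Subgroup.map_mono h').trans ?_
    rw [Subgroup.map_commutator]
    exact Subgroup.commutator_mono le_top le_top
  · rintro _ ⟨a, ha, rfl⟩ _ ⟨b, hb, rfl⟩
    rw [← commutatorElement_eq_one_iff_mul_comm]
    exact (QuotientGroup.eq_one_iff _).2 (chief_abelian M1 M0 h (commutator_mem_commutator ha hb))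
  · rintro _ ⟨a, ha, rfl⟩
    exact (QuotientGroup.eq_one_iff _).2 (hexp a ha)
end main

def bnd (p m : ℕ) : ℕ → ℕ
  | 0 => 3 + (m.factorial + 1)
  | n + 1 => (3 + 1 + 1 + k2 p (n + 1) m) + bnd p m n

theorem main.{u} (p m : ℕ) (hp : p.Prime) (n : ℕ) : ∀ (X : Type u) [Group X] [Finite X] [Group.IsSolvable X] (φ : X),
    φ ^ p ^ n = 1 → Hyp p m φ → Ch (⊥ : Subgroup X) ⊤ (bnd p m n) := by
  induction n with
  | zero =>
    intro X _ _ _ φ hφ H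
    rw [pow_zero, pow_one] at hφ
    refine Ch_trans (m.factorial + 1) 3 inferInstance (Ch_dser ⊤ (m.factorial + 1)) ?_
    refine EndStep p hp _ ?_
    intro M1 M0 h hle hp'
    have := h.1
    have := h.2.1
    refine (Subgroup.commutator_mono le_rfl (dser_succ_le _ _)).trans (T0C m M1 M0 ?_)
    have h1 := Hyp_chief p m φ H M1 M0 h (hle.trans (Subgroup.commutator_mono le_top le_top)) hp'
    have h2 : centralizer {((φ : X) : X ⧸ M1)} = ⊤ := by
      rw [hφ, eq_top_iff]
      intro x _
      rw [mem_centralizer_singleton_iff]; simp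
    rwa [h2, top_inf_eq] at h1
  | succ n ih =>
    intro X _ _ _ φ hφ H
    set N := normalClosure {φ ^ p ^ n} with hN
    have c1 : Ch N ⊤ (bnd p m n) := by
      have h1 := ih (X ⧸ N) (φ : X ⧸ N) (by
        rw [← QuotientGroup.mk_pow, QuotientGroup.eq_one_iff]
        exact subset_normalClosure rfl) (by
        intro Z _ f hf
        exact H Z (f.comp (QuotientGroup.mk' N)) (hf.comp (QuotientGroup.mk'_surjective N)))
      have h2 := Ch_comap (QuotientGroup.mk' N) _ h1
      rwa [Subgroup.comap_top, MonoidHom.comap_bot, QuotientGroup.ker_mk'] at h2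
    have hNn : N.Normal := inferInstance
    have c2 := Ch_dser N (k2 p (n + 1) m)
    have c3 := Ch_resid (dser N (k2 p (n + 1) m))
    have c4 : Ch (Yp φ p (n + 1) m) (resid (dser N (k2 p (n + 1) m))) 1 := by
      have : (Yp φ p (n + 1) m).Normal := by unfold Yp; infer_instance
      exact Ch_step (comm_self_le _) 1 le_rfl
    have hYn : (Yp φ p (n + 1) m).Normal := by unfold Yp; infer_instance
    have c5 : Ch ⊥ (Yp φ p (n + 1) m) 3 := by
      refine EndStep p hp _ ?_
      intro M1 M0 h hle hp'
      have := h.1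
      exact T1C φ p (n + 1) m hp (Nat.succ_pos n) hφ M1 M0 h hp'
        (Hyp_chief p m φ H M1 M0 h (hle.trans (Subgroup.commutator_mono le_top le_top)) hp')
    exact Ch_trans _ _ inferInstance c1 (Ch_trans _ _ inferInstance c2 (Ch_trans _ _ inferInstance c3
      (Ch_trans _ _ inferInstance c4 c5)))
end FH

namespace FH
open Subgroup SemidirectProduct
open scoped commutatorElement

set_option linter.unusedSectionVars false
section fin
variable {G : Type} [Group G] [Finite G] (φ : MulAut G)

/-- the semidirect product of `G` with the group generated by `φ` -/
abbrev SD : Type := SemidirectProduct G (zpowers φ) (zpowers φ).subtype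

/-- the element of the semidirect product corresponding to `φ` -/
def phiEl : SD φ := inr ⟨φ, mem_zpowers φ⟩

lemma phiEl_conj (a : G) : (inl (φ a) : SD φ) = phiEl φ * inl a * (phiEl φ)⁻¹ := by
  have := inl_aut (φ := (zpowers φ).subtype) ⟨φ, mem_zpowers φ⟩ a
  rw [map_inv] at this
  exact this

lemma inv_of_le {A : Subgroup G} (h : ∀ a ∈ A, φ a ∈ A) : PhiInvariant φ A := by
  unfold PhiInvariant
  apply Subgroup.eq_of_le_of_card_ge
  · rintro _ ⟨a, ha, rfl⟩
    exact h a ha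
  · rw [Subgroup.card_map_of_injective φ.injective]

lemma comm_le_range : ⁅(⊤ : Subgroup (SD φ)), ⊤⁆ ≤ (inl : G →* SD φ).range := by
  rw [range_inl_eq_ker_rightHom, Subgroup.commutator_le]
  intro a _ b _
  rw [MonoidHom.mem_ker, map_commutatorElement, commutatorElement_eq_one_iff_mul_comm]
  exact IsMulCommutative.is_comm.comm (rightHom a : zpowers φ) (rightHom b)

lemma hyp_SD (p m : ℕ) (h : ∀ A B : Subgroup G, PhiInvariant φ A → PhiInvariant φ B →
            IsElemAbelianPPrimeSection p A B → sectionFixedCard φ A B ≤ m) :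
    Hyp p m (phiEl φ) := by
  intro Z _ f hf V hV hVc hab r hr hrp hex
  set A : Subgroup G := (V.comap f).comap inl with hA
  set B : Subgroup G := f.ker.comap inl with hB
  have memA : ∀ a : G, a ∈ A ↔ f (inl a) ∈ V := fun a => Iff.rfl
  have memB : ∀ a : G, a ∈ B ↔ f (inl a) = 1 := fun a => Iff.rfl
  have hBA : B ≤ A := by
    intro b hb
    rw [memA, (memB b).1 hb]; exact V.one_mem
  have h1 : PhiInvariant φ A := by
    apply inv_of_le
    intro a ha
    rw [memA, phiEl_conj, map_mul, map_mul, map_inv]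
    exact hV.conj_mem _ ha _
  have h2 : PhiInvariant φ B := by
    apply inv_of_le
    intro a ha
    rw [memB, phiEl_conj, map_mul, map_mul, map_inv, (memB a).1 ha]
    simp
  have h3 : IsElemAbelianPPrimeSection p A B := by
    refine ⟨hBA, ?_, r, hr, hrp, ?_, ?_⟩
    · intro a _ b hb
      rw [memB] at hb ⊢
      simp [hb]
    · intro a ha b hb
      rw [memB]
      simp only [map_mul, map_inv]
      have := hab _ ha _ hb
      have h4 := hab _ (V.inv_mem ha) _ (V.inv_mem hb)
      rw [mul_assoc, this]
      simp [mul_assoc]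
    · intro a ha
      rw [memB, map_pow, map_pow]
      exact hex _ ha
  refine le_trans ?_ (h A B h1 h2 h3)
  unfold sectionFixedCard
  have hlift : ∀ v ∈ V, ∃ a : G, f (inl a) = v := by
    intro v hv
    have h5 : v ∈ Subgroup.map f (⁅(⊤ : Subgroup (SD φ)), ⊤⁆) := by
      rw [Subgroup.map_commutator, Subgroup.map_top_of_surjective f hf]
      exact hVc hv
    obtain ⟨x, hx, rfl⟩ := h5
    obtain ⟨a, rfl⟩ := comm_le_range φ hx
    exact ⟨a, rfl⟩
  choose g hg using hlift
  have hgA : ∀ v hv, g v hv ∈ A := fun v hv => by rw [memA, hg]; exact hv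
  refine Nat.card_le_card_of_injective
    (fun v => ⟨QuotientGroup.mk ⟨g v.1 v.2.2, hgA _ _⟩, ⟨g v.1 v.2.2, hgA _ _⟩, rfl, ?_⟩) ?_
  · rw [memB, map_mul, map_mul, phiEl_conj]
    simp only [map_mul, map_inv]
    have h6 := mem_centralizer_singleton_iff.1 v.2.1
    rw [hg, ← h6]; group
  · intro v w hvw
    have h7 := congrArg Subtype.val hvw
    simp only at h7
    rw [QuotientGroup.eq, mem_subgroupOf] at h7
    have h8 := (memB _).1 h7
    simp only [Subgroup.coe_mul, Subgroup.coe_inv, map_mul, map_inv, hg] at h8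
    exact Subtype.ext (inv_mul_eq_one.1 h8)

/-- the bounding function -/
def bigBound (x : ℕ × ℕ) : ℕ :=
  (3 + (x.2.factorial + 1)) +
    ∑ p ∈ Finset.range (x.1 + 1), ∑ n ∈ Finset.range (x.1 + 1), bnd p x.2 n

lemma bnd_le_bigBound (p n m : ℕ) (hp : p.Prime) : bnd p m n ≤ bigBound (p ^ n, m) := by
  unfold bigBound
  rcases Nat.eq_zero_or_pos n with rfl | hn
  · exact Nat.le_add_right _ _
  · have h1 : p ≤ p ^ n := Nat.le_self_pow hn.ne' p
    have h2 : n ≤ p ^ n := (Nat.lt_pow_self hp.one_lt).le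
    refine le_trans ?_ (Nat.le_add_left _ _)
    refine le_trans ?_ (Finset.single_le_sum (f := fun q => ∑ n ∈ Finset.range (p ^ n + 1), bnd q m n)
      (fun _ _ => Nat.zero_le _) (Finset.mem_range.2 (Nat.lt_succ_of_le h1)))
    exact Finset.single_le_sum (f := fun k => bnd p m k)
      (fun _ _ => Nat.zero_le _) (Finset.mem_range.2 (Nat.lt_succ_of_le h2))

lemma final (p n m : ℕ) (hp : p.Prime) (hs : Group.IsSolvable G) (ho : orderOf φ = p ^ n)
    (h : ∀ A B : Subgroup G, PhiInvariant φ A → PhiInvariant φ B →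
            IsElemAbelianPPrimeSection p A B → sectionFixedCard φ A B ≤ m) :
    FittingHeightLE G (bigBound (p ^ n, m)) := by
  have : Finite (SD φ) := Finite.of_equiv _ (SemidirectProduct.equivProd (φ := (zpowers φ).subtype)).symm
  have : Group.IsSolvable (SD φ) :=
    Group.isSolvable_of_ker_le_range (inl : G →* SD φ) rightHom (range_inl_eq_ker_rightHom).ge
  have hpow : phiEl φ ^ p ^ n = 1 := by
    unfold phiEl
    rw [← map_pow]
    have : (⟨φ, mem_zpowers φ⟩ : zpowers φ) ^ p ^ n = 1 := by
      apply Subtype.ext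
      rw [Subgroup.coe_pow, ← ho]
      exact pow_orderOf_eq_one φ
    rw [this, map_one]
  have hch := main p m hp n (SD φ) (phiEl φ) hpow (hyp_SD φ p m h)
  have hch2 := Ch_comap (inl : G →* SD φ) _ hch
  rw [Subgroup.comap_top, MonoidHom.comap_bot, (MonoidHom.ker_eq_bot_iff _).2 inl_injective] at hch2
  exact Ch_fitting _ (Ch_pad _ _ inferInstance (bnd_le_bigBound p n m hp) hch2)
end fin
end FH

theorem fittingHeight_bounded_of_almost_fixed_point_free_on_pPrime_sections :
    ∃ f : ℕ × ℕ → ℕ, ∀ (p n m : ℕ), p.Prime →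
      ∀ (G : Type) [Group G] [Finite G], IsSolvable G →
        ∀ φ : MulAut G, orderOf φ = p ^ n →
          (∀ A B : Subgroup G, PhiInvariant φ A → PhiInvariant φ B →
            IsElemAbelianPPrimeSection p A B → sectionFixedCard φ A B ≤ m) →
          FittingHeightLE G (f (p ^ n, m)) := by
  refine ⟨FH.bigBound, ?_⟩
  intro p n m hp G _ _ hs φ ho h
  exact FH.final φ p n m hp hs ho h
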